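/- arXiv:math/0211117 — 3 statements merged into one kernel-verified Lean document; each statement's English description precedes it below -/
import Mathlib

section
/- Let 0 < α < 1/2 and let T be the corresponding Liverani–Saussol–Vaienti map with absolutely continuous invariant probability measure m. Let f : [0,1] → ℝ be Hölder continuous with ∫ f dm = 0. Then there exists σ² ≥ 0 such that S_n f/√n converges in distribution under m to the normal law N(0,σ²) (the Dirac mass at 0 when σ² = 0), and σ² = 0 if and only if there exists a measurable function χ : [0,1] → ℝ with f = χ∘T − χ m-almost everywhere. -/
/-!
The proof is Gordin's martingale method, carried out on Lebesgue densities without inducing.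

*Spectral input.* On `(0,1]` with the distance `|log x - log y|`, both inverse branches contract and
the distortion of the neutral branch is dominated by its contraction defect. Hence the transfer
operator `L` preserves the class `Reg` of nonnegative functions whose logarithm is locally Hölder
for this distance, and the uniform contraction of the right branch even leaves room to subtract
`θ φ(1)`: the operator `Q φ = L φ - θ φ(1)` (`Qop`) preserves `Reg` as well. Each application of `Q`
loses the mass `θ φ(1)`, so the values `(Qⁿ φ)(1)` are summable, and the supersolutions `x^{-s}` of
the left branch (`L0_rpow_le`) control `Φ = ∑ Qⁿ φ`, which solves `Φ - L Φ = φ - ∫ φ` (`poisson`).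
With `φ = 1` this produces the invariant density `h ≍ x^{-α}` (`exists_density`); with `φ` equal to
`h` times a Hölder function it gives a solution of size `x^{-2α}`, integrable because `α < 1/2`
(`poisson_holder`). By density of Lipschitz functions every integrable `φ - (∫ φ) h` is a coboundary
of `L` up to a small error in `L¹` (`approx_coboundary`). This yields uniqueness of the
absolutely continuous invariant measure (`rnDeriv_eq`), so that `m` has density `h`.

*Martingale approximation.* Let `Φ - L Φ = f h` and `G = Φ / h`. Then `g = G - f` is the image of
`G` under the normalised transfer operator, and `f = M + g ∘ T - g` where `M = G - g ∘ T` is a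
reverse martingale difference (`decomposition`). On the fibre over `x`, `M` is the deviation of `G`
from its conditional mean. Only the left preimage carries a large value, of order `x^{-α}`, and the
weighted contribution to `∫ M²` is of order `x^{-2α}`, so `M` is square integrable for `α < 1/2`.

*Central limit theorem.* The characteristic functions `ψ(l)` of the Birkhoff sums of `M` at a small
frequency `t` satisfy `ψ(l+1) = (1 - t²σ²/2) ψ(l) + o(t²)` with `σ² = ∫ M²`: the linear term
vanishes by the martingale property, and `M² - σ²` decorrelates from the characters since it is
almost a coboundary while the characters are almost invariant (`decorrelation`, `cf_recursion`). So
`ψ(n)` at `s / √n` tends to `exp (-s²σ²/2)` (`cf_tendsto`), a coboundary does not affect the limit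
(`cf_coboundary`), and Lévy's theorem concludes. If `σ² = 0` then `M = 0` almost everywhere and `f`
is a coboundary; if `f` is a measurable coboundary, the limit is the Dirac mass, so `σ² = 0`.
-/

open MeasureTheory Filter Topology

/-- The Liverani–Saussol–Vaienti map `T(x) = x(1 + 2^α x^α)` on `[0, 1/2]`,
`T(x) = 2x - 1` on `(1/2, 1]`. -/
noncomputable def lsv (α : ℝ) (x : ℝ) : ℝ :=
  if x ≤ 1 / 2 then x * (1 + 2 ^ α * x ^ α) else 2 * x - 1

namespace LSV

open Set

/-! ### The two inverse branches -/

section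

variable {α : ℝ}

/-- The quantity `w = (2y)^α` governing the left branch. -/
noncomputable def lw (α y : ℝ) : ℝ := 2 ^ α * y ^ α

/-- The left branch `y ↦ y(1 + (2y)^α)` of the map, as a function on the whole line. -/
noncomputable def T0 (α y : ℝ) : ℝ := y * (1 + lw α y)

/-- The derivative `1 + (1+α)(2y)^α` of the left branch. -/
noncomputable def D0 (α y : ℝ) : ℝ := 1 + (1 + α) * lw α y

/-- The inverse of the left branch, a map `[0,1] → [0,1/2]`. The supremum makes it monotone,
hence measurable, on the whole line. -/
noncomputable def y0 (α x : ℝ) : ℝ := sSup {y | y ∈ Icc (0 : ℝ) (1 / 2) ∧ T0 α y ≤ x}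

/-- The part of the transfer operator (with respect to Lebesgue measure) carried by the left
branch. -/
noncomputable def L0 (α : ℝ) (φ : ℝ → ℝ) (x : ℝ) : ℝ := φ (y0 α x) / D0 α (y0 α x)

/-- The part of the transfer operator (with respect to Lebesgue measure) carried by the right
branch. -/
noncomputable def L1 (φ : ℝ → ℝ) (x : ℝ) : ℝ := φ ((1 + x) / 2) / 2

lemma lw_nonneg {y : ℝ} (hy : 0 ≤ y) : 0 ≤ lw α y := by unfold lw; positivity

lemma lw_pos {y : ℝ} (hy : 0 < y) : 0 < lw α y := by unfold lw; positivity

lemma lw_mono (hα : 0 < α) {x y : ℝ} (hx : 0 ≤ x) (hxy : x ≤ y) : lw α x ≤ lw α y := by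
  unfold lw
  gcongr

lemma lw_half : lw α (1 / 2) = 1 := by
  unfold lw
  rw [← Real.mul_rpow (by norm_num) (by norm_num)]
  norm_num

lemma lw_le_one (hα : 0 < α) {y : ℝ} (hy : y ∈ Icc (0 : ℝ) (1 / 2)) : lw α y ≤ 1 := by
  rw [← lw_half (α := α)]
  exact lw_mono hα hy.1 hy.2

lemma D0_pos (hα : 0 < α) {y : ℝ} (hy : 0 ≤ y) : 0 < D0 α y := by
  have := lw_nonneg (α := α) hy
  unfold D0; positivity

lemma T0_half : T0 α (1 / 2) = 1 := by
  unfold T0; rw [lw_half]; norm_num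

lemma T0_zero : T0 α 0 = 0 := by simp [T0]

lemma T0_lt (hα : 0 < α) {x y : ℝ} (hx : 0 ≤ x) (hxy : x < y) : T0 α x < T0 α y := by
  have h1 := lw_mono hα hx hxy.le
  have h2 := lw_nonneg (α := α) hx
  unfold T0
  nlinarith

lemma T0_strictMonoOn (hα : 0 < α) : StrictMonoOn (T0 α) (Ici 0) :=
  fun _ hx _ _ hxy => T0_lt hα hx hxy

lemma continuous_T0 (hα : 0 < α) : Continuous (T0 α) := by
  unfold T0 lw
  have : Continuous fun y : ℝ => y ^ α := Real.continuous_rpow_const hα.le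
  fun_prop

lemma hasDerivAt_T0 {y : ℝ} (hy : 0 < y) : HasDerivAt (T0 α) (D0 α y) y := by
  have h1 : HasDerivAt (fun y : ℝ => y ^ α) (α * y ^ (α - 1)) y :=
    Real.hasDerivAt_rpow_const (Or.inl hy.ne')
  have h2 := (hasDerivAt_id y).mul ((h1.const_mul (2 ^ α)).const_add 1)
  have h3 : y * y ^ (α - 1) = y ^ α := by
    rw [Real.rpow_sub_one hy.ne']; field_simp
  refine HasDerivAt.congr_deriv (f := T0 α) h2 ?_
  simp only [D0, lw, id]
  linear_combination (2 ^ α * α) * h3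

lemma y0_T0 (hα : 0 < α) {y : ℝ} (hy : y ∈ Icc (0 : ℝ) (1 / 2)) : y0 α (T0 α y) = y := by
  have : IsGreatest {z | z ∈ Icc (0 : ℝ) (1 / 2) ∧ T0 α z ≤ T0 α y} y :=
    ⟨⟨hy, le_rfl⟩, fun z hz => ((T0_strictMonoOn hα).le_iff_le hz.1.1 hy.1).1 hz.2⟩
  exact this.csSup_eq

lemma exists_T0 (hα : 0 < α) {x : ℝ} (hx : x ∈ Ioc (0 : ℝ) 1) :
    ∃ y ∈ Ioc (0 : ℝ) (1 / 2), T0 α y = x := by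
  have h := intermediate_value_Icc (show (0 : ℝ) ≤ 1 / 2 by norm_num)
    (continuous_T0 hα).continuousOn
  rw [T0_zero, T0_half] at h
  obtain ⟨y, hy, rfl⟩ := h (Ioc_subset_Icc_self hx)
  refine ⟨y, ⟨lt_of_le_of_ne hy.1 ?_, hy.2⟩, rfl⟩
  rintro rfl
  exact absurd hx.1 (by simp [T0_zero])

lemma y0_mem (hα : 0 < α) {x : ℝ} (hx : x ∈ Ioc (0 : ℝ) 1) : y0 α x ∈ Ioc (0 : ℝ) (1 / 2) := by
  obtain ⟨y, hy, rfl⟩ := exists_T0 hα hx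
  rwa [y0_T0 hα (Ioc_subset_Icc_self hy)]

lemma T0_y0 (hα : 0 < α) {x : ℝ} (hx : x ∈ Ioc (0 : ℝ) 1) : T0 α (y0 α x) = x := by
  obtain ⟨y, hy, rfl⟩ := exists_T0 hα hx
  rw [y0_T0 hα (Ioc_subset_Icc_self hy)]

lemma y0_mem_one (hα : 0 < α) {x : ℝ} (hx : x ∈ Ioc (0 : ℝ) 1) : y0 α x ∈ Ioc (0 : ℝ) 1 :=
  ⟨(y0_mem hα hx).1, (y0_mem hα hx).2.trans (by norm_num)⟩

lemma y1_mem {x : ℝ} (hx : x ∈ Ioc (0 : ℝ) 1) : (1 + x) / 2 ∈ Ioc (1 / 2 : ℝ) 1 :=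
  ⟨by linarith [hx.1], by linarith [hx.2]⟩

lemma y1_mem_one {x : ℝ} (hx : x ∈ Ioc (0 : ℝ) 1) : (1 + x) / 2 ∈ Ioc (0 : ℝ) 1 :=
  ⟨by linarith [hx.1], by linarith [hx.2]⟩

lemma y0_monotone : Monotone (y0 α) := by
  intro x x' hxx'
  unfold y0
  have hb : BddAbove {y | y ∈ Icc (0 : ℝ) (1 / 2) ∧ T0 α y ≤ x'} := ⟨1 / 2, fun y hy => hy.1.2⟩
  by_cases hne : {y | y ∈ Icc (0 : ℝ) (1 / 2) ∧ T0 α y ≤ x}.Nonempty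
  · exact csSup_le_csSup hb hne fun y hy => ⟨hy.1, hy.2.trans hxx'⟩
  · rw [not_nonempty_iff_eq_empty.1 hne, Real.sSup_empty]
    exact Real.sSup_nonneg fun y hy => hy.1.1

lemma measurable_y0 : Measurable (y0 α) := y0_monotone.measurable

lemma lsv_left {y : ℝ} (hy : y ≤ 1 / 2) : lsv α y = T0 α y := by rw [lsv, if_pos hy, T0, lw]

lemma lsv_right {y : ℝ} (hy : 1 / 2 < y) : lsv α y = 2 * y - 1 := by
  rw [lsv, if_neg (not_le.2 hy)]

lemma measurable_lsv : Measurable (lsv α) := by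
  unfold lsv
  refine Measurable.ite measurableSet_Iic ?_ ?_ <;> fun_prop

/-- `1 + (1+α)w` varies at most like `(1+w)²`; this is the distortion estimate of the left
branch. -/
lemma D0_ratio (hα : 0 < α) (hα1 : α ≤ 1) {x y : ℝ} (hx : 0 < x) (hxy : x ≤ y) :
    D0 α y * (1 + lw α x) ^ 2 ≤ D0 α x * (1 + lw α y) ^ 2 := by
  have ha := lw_nonneg (α := α) hx.le
  have hab := lw_mono hα hx.le hxy
  unfold D0
  set a := lw α x
  set b := lw α y
  have h1 : 0 ≤ (b - a) * (1 - α) := mul_nonneg (by linarith) (by linarith)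
  have h2 : 0 ≤ (b - a) * (b + a) := mul_nonneg (by linarith) (by linarith)
  have h3 : 0 ≤ (b - a) * ((1 + α) * (a * b)) := by
    have : 0 ≤ b := by linarith
    exact mul_nonneg (by linarith) (by positivity)
  nlinarith

end

/-! ### The class of regular densities -/

section

variable {α : ℝ}

/-- Nonnegative functions on `(0,1]` whose logarithm is locally `r`-Hölder, with constant `K`,
for the distance `|log x - log y|`. In this distance the left inverse branch is a weak
contraction whose defect dominates its distortion, so no inducing is needed. -/
structure Reg (r K : ℝ) (φ : ℝ → ℝ) : Prop where
  nonneg : ∀ x ∈ Ioc (0 : ℝ) 1, 0 ≤ φ x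
  osc : ∀ x ∈ Ioc (0 : ℝ) 1, ∀ y ∈ Ioc (0 : ℝ) 1, x ≤ y → Real.log y - Real.log x ≤ 1 →
    φ x ≤ φ y * Real.exp (K * (Real.log y - Real.log x) ^ r) ∧
    φ y ≤ φ x * Real.exp (K * (Real.log y - Real.log x) ^ r)

lemma rpow_sub_rpow_ge {r d d' : ℝ} (hr0 : 0 < r) (hr1 : r ≤ 1) (h0 : 0 ≤ d') (hd : d' ≤ d)
    (h1 : d ≤ 1) : r * (d - d') ≤ d ^ r - d' ^ r := by
  rcases (h0.trans hd).eq_or_lt with h | h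
  · have : d' = 0 := le_antisymm (h ▸ hd) h0
    simp [← h, this]
  have ht0 : 0 ≤ d' / d := by positivity
  have hb := rpow_one_add_le_one_add_mul_self (s := d' / d - 1) (by linarith) hr0.le hr1
  have e1 : d' ^ r = d ^ r * (1 + (d' / d - 1)) ^ r := by
    rw [← Real.mul_rpow h.le (by linarith)]
    congr 1
    field_simp
    ring
  have hdr : d ≤ d ^ r := by
    simpa using Real.rpow_le_rpow_of_exponent_ge h h1 hr1
  have hpos : 0 ≤ d ^ r := by positivity
  have h2 : d' ^ r ≤ d ^ r * (1 + r * (d' / d - 1)) := by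
    rw [e1]; gcongr
  have h3 : r * (d - d') ≤ d ^ r * (r * (1 - d' / d)) := by
    have : r * (d - d') = d * (r * (1 - d' / d)) := by field_simp
    rw [this]
    have h4 : d' / d ≤ 1 := (div_le_one h).2 hd
    have : 0 ≤ r * (1 - d' / d) := mul_nonneg hr0.le (by linarith)
    gcongr
  linarith

/-- Contraction and distortion of the left inverse branch in the logarithmic distance. -/
lemma branch0 (hα : 0 < α) (hα1 : α ≤ 1) {x y : ℝ} (hx : x ∈ Ioc (0 : ℝ) 1)
    (hy : y ∈ Ioc (0 : ℝ) 1) (hxy : x ≤ y) :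
    y0 α x ≤ y0 α y ∧
    Real.log (y0 α y) - Real.log (y0 α x) ≤ Real.log y - Real.log x ∧
    D0 α (y0 α x) ≤ D0 α (y0 α y) ∧
    D0 α (y0 α y) ≤ D0 α (y0 α x) * Real.exp (2 * ((Real.log y - Real.log x) -
      (Real.log (y0 α y) - Real.log (y0 α x)))) := by
  have hm := y0_monotone (α := α) hxy
  have ha := y0_mem hα hx
  have hb := y0_mem hα hy
  have hxe := T0_y0 hα hx
  have hye := T0_y0 hα hy
  set a := y0 α x
  set b := y0 α y
  have hwa := lw_pos (α := α) ha.1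
  have hwb := lw_pos (α := α) hb.1
  have hw := lw_mono hα ha.1.le hm
  have lx : Real.log x = Real.log a + Real.log (1 + lw α a) := by
    rw [← hxe, T0, Real.log_mul ha.1.ne' (by positivity)]
  have ly : Real.log y = Real.log b + Real.log (1 + lw α b) := by
    rw [← hye, T0, Real.log_mul hb.1.ne' (by positivity)]
  have hl : Real.log (1 + lw α a) ≤ Real.log (1 + lw α b) :=
    Real.log_le_log (by positivity) (by linarith)
  refine ⟨hm, by linarith, ?_, ?_⟩
  · unfold D0; nlinarith
  · have e : (Real.log y - Real.log x) - (Real.log b - Real.log a)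
        = Real.log ((1 + lw α b) / (1 + lw α a)) := by
      rw [Real.log_div (by positivity) (by positivity), lx, ly]; ring
    rw [e, two_mul, Real.exp_add, Real.exp_log (by positivity)]
    have := D0_ratio hα hα1 ha.1 hm
    rw [div_mul_div_comm, ← mul_div_assoc, le_div_iff₀ (by positivity)]
    nlinarith

lemma branch1 {x y : ℝ} (hx : x ∈ Ioc (0 : ℝ) 1) (hy : y ∈ Ioc (0 : ℝ) 1) (hxy : x ≤ y) :
    0 ≤ Real.log ((1 + y) / 2) - Real.log ((1 + x) / 2) ∧
    Real.log ((1 + y) / 2) - Real.log ((1 + x) / 2) ≤ (Real.log y - Real.log x) / 2 := by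
  have hx0 := hx.1
  have hy0 := hy.1
  constructor
  · have := Real.log_le_log (x := (1 + x) / 2) (y := (1 + y) / 2) (by linarith) (by linarith)
    linarith
  · have h1 : Real.log (((1 + y) / 2) ^ 2 * x) ≤ Real.log (((1 + x) / 2) ^ 2 * y) := by
      refine Real.log_le_log (by positivity) ?_
      have : 0 ≤ (y - x) * (1 - x * y) := by
        refine mul_nonneg (by linarith) ?_
        nlinarith [hx.2, hy.2]
      nlinarith
    rw [Real.log_mul (by positivity) hx0.ne', Real.log_mul (by positivity) hy0.ne',
      Real.log_pow, Real.log_pow] at h1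
    push_cast at h1
    linarith

namespace Reg

variable {r K : ℝ} {φ ψ : ℝ → ℝ}

lemma add (h1 : Reg r K φ) (h2 : Reg r K ψ) : Reg r K (fun x => φ x + ψ x) where
  nonneg x hx := add_nonneg (h1.nonneg x hx) (h2.nonneg x hx)
  osc x hx y hy hxy hd := by
    have a := h1.osc x hx y hy hxy hd
    have b := h2.osc x hx y hy hxy hd
    constructor <;> linarith [a.1, a.2, b.1, b.2]

lemma const_mul {c : ℝ} (hc : 0 ≤ c) (h1 : Reg r K φ) : Reg r K (fun x => c * φ x) where
  nonneg x hx := mul_nonneg hc (h1.nonneg x hx)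
  osc x hx y hy hxy hd := by
    have a := h1.osc x hx y hy hxy hd
    constructor
    · nlinarith [a.1]
    · nlinarith [a.2]

lemma const {c : ℝ} (hc : 0 ≤ c) (hK : 0 ≤ K) : Reg r K (fun _ => c) where
  nonneg _ _ := hc
  osc x hx y hy hxy hd := by
    have hd0 : 0 ≤ Real.log y - Real.log x := sub_nonneg.2 (Real.log_le_log hx.1 hxy)
    have : 1 ≤ Real.exp (K * (Real.log y - Real.log x) ^ r) :=
      Real.one_le_exp (by positivity)
    constructor <;> nlinarith

lemma mono {K' : ℝ} (hK : K ≤ K') (h1 : Reg r K φ) : Reg r K' φ where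
  nonneg := h1.nonneg
  osc x hx y hy hxy hd := by
    have hd0 : 0 ≤ Real.log y - Real.log x := sub_nonneg.2 (Real.log_le_log hx.1 hxy)
    have : Real.exp (K * (Real.log y - Real.log x) ^ r)
      ≤ Real.exp (K' * (Real.log y - Real.log x) ^ r) := by gcongr
    have a := h1.osc x hx y hy hxy hd
    exact ⟨a.1.trans (mul_le_mul_of_nonneg_left this (h1.nonneg y hy)),
      a.2.trans (mul_le_mul_of_nonneg_left this (h1.nonneg x hx))⟩

lemma mul {K' : ℝ} (h1 : Reg r K φ) (h2 : Reg r K' ψ) : Reg r (K + K') (fun x => φ x * ψ x) where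
  nonneg x hx := mul_nonneg (h1.nonneg x hx) (h2.nonneg x hx)
  osc x hx y hy hxy hd := by
    have a := h1.osc x hx y hy hxy hd
    have b := h2.osc x hx y hy hxy hd
    rw [add_mul, Real.exp_add, mul_mul_mul_comm, mul_mul_mul_comm (φ x)]
    have p1 := h1.nonneg x hx
    have p2 := h2.nonneg x hx
    have p3 := h1.nonneg y hy
    have p4 := h2.nonneg y hy
    exact ⟨mul_le_mul a.1 b.1 p2 (by positivity), mul_le_mul a.2 b.2 p4 (by positivity)⟩

lemma of_tendsto {Φ : ℕ → ℝ → ℝ} (h : ∀ n, Reg r K (Φ n))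
    (hlim : ∀ x ∈ Ioc (0 : ℝ) 1, Tendsto (fun n => Φ n x) atTop (𝓝 (φ x))) : Reg r K φ where
  nonneg x hx := ge_of_tendsto' (hlim x hx) fun n => (h n).nonneg x hx
  osc x hx y hy hxy hd :=
    ⟨le_of_tendsto_of_tendsto' (hlim x hx) ((hlim y hy).mul_const _)
      fun n => ((h n).osc x hx y hy hxy hd).1,
    le_of_tendsto_of_tendsto' (hlim y hy) ((hlim x hx).mul_const _)
      fun n => ((h n).osc x hx y hy hxy hd).2⟩

/-- Bounded oscillation on intervals of logarithmic length at most one. -/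
lemma osc_le (hr : 0 < r) (hK : 0 ≤ K) (h1 : Reg r K φ) {x y : ℝ} (hx : x ∈ Ioc (0 : ℝ) 1)
    (hy : y ∈ Ioc (0 : ℝ) 1) (hxy : x ≤ y) (hd : Real.log y - Real.log x ≤ 1) :
    φ x ≤ φ y * Real.exp K ∧ φ y ≤ φ x * Real.exp K := by
  have hd0 : 0 ≤ Real.log y - Real.log x := sub_nonneg.2 (Real.log_le_log hx.1 hxy)
  have h2 : (Real.log y - Real.log x) ^ r ≤ 1 := Real.rpow_le_one hd0 hd hr.le
  have : Real.exp (K * (Real.log y - Real.log x) ^ r) ≤ Real.exp K := by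
    apply Real.exp_le_exp.2; nlinarith
  have a := h1.osc x hx y hy hxy hd
  exact ⟨a.1.trans (mul_le_mul_of_nonneg_left this (h1.nonneg y hy)),
    a.2.trans (mul_le_mul_of_nonneg_left this (h1.nonneg x hx))⟩

lemma log_ratio_le_one {x y : ℝ} (hx : 0 < x) (hy : 0 < y) (h : y ≤ 2 * x) :
    Real.log y - Real.log x ≤ 1 := by
  have h1 : Real.log y ≤ Real.log (2 * x) := Real.log_le_log hy h
  rw [Real.log_mul (by norm_num) hx.ne'] at h1
  linarith [Real.log_two_lt_d9]

lemma osc_one (hr : 0 < r) (hK : 0 ≤ K) (h1 : Reg r K φ) {x : ℝ} (hx : x ∈ Ioc (1 / 2 : ℝ) 1) :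
    φ x ≤ φ 1 * Real.exp K ∧ φ 1 ≤ φ x * Real.exp K := by
  have hx0 : 0 < x := lt_trans (by norm_num) hx.1
  exact h1.osc_le hr hK ⟨hx0, hx.2⟩ (by norm_num) hx.2
    (log_ratio_le_one hx0 one_pos (by linarith [hx.1]))

lemma L0 (hα : 0 < α) (hα1 : α ≤ 1) (hr0 : 0 < r) (hr1 : r ≤ 1) (hK : 2 ≤ K * r)
    (h : Reg r K φ) : Reg r K (LSV.L0 α φ) where
  nonneg x hx := div_nonneg (h.nonneg _ (y0_mem_one hα hx)) (D0_pos hα (y0_mem hα hx).1.le).le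
  osc x hx y hy hxy hd := by
    obtain ⟨hab, hlog, hD1, hD2⟩ := branch0 hα hα1 hx hy hxy
    have ha := y0_mem_one hα hx
    have hb := y0_mem_one hα hy
    have a := h.osc _ ha _ hb hab (hlog.trans hd)
    have hpow := rpow_sub_rpow_ge hr0 hr1 (sub_nonneg.2 (Real.log_le_log ha.1 hab)) hlog hd
    have pa := h.nonneg _ ha
    have pb := h.nonneg _ hb
    have Da := D0_pos hα ha.1.le
    have Db := D0_pos hα hb.1.le
    have d0 : 0 ≤ (Real.log y - Real.log x) - (Real.log (y0 α y) - Real.log (y0 α x)) := by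
      linarith
    have hK0 : 0 ≤ K := by
      by_contra hneg
      push Not at hneg
      nlinarith
    have key : K * (Real.log (y0 α y) - Real.log (y0 α x)) ^ r +
        2 * ((Real.log y - Real.log x) - (Real.log (y0 α y) - Real.log (y0 α x)))
        ≤ K * (Real.log y - Real.log x) ^ r := by
      nlinarith [mul_le_mul_of_nonneg_left hpow hK0, mul_le_mul_of_nonneg_right hK d0]
    have key' := Real.exp_le_exp.2 key
    rw [Real.exp_add] at key'
    unfold LSV.L0
    set E1 := Real.exp (K * (Real.log (y0 α y) - Real.log (y0 α x)) ^ r)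
    set E2 := Real.exp (2 * ((Real.log y - Real.log x) -
      (Real.log (y0 α y) - Real.log (y0 α x)))) with hE2
    set E := Real.exp (K * (Real.log y - Real.log x) ^ r)
    have hE2' : 1 ≤ E2 := Real.one_le_exp (by positivity)
    have hE1' : 0 < E1 := Real.exp_pos _
    constructor
    · rw [div_mul_eq_mul_div, div_le_div_iff₀ Da Db]
      calc φ (y0 α x) * D0 α (y0 α y)
          ≤ (φ (y0 α y) * E1) * (D0 α (y0 α x) * E2) :=
            mul_le_mul a.1 hD2 Db.le (by positivity)
        _ = φ (y0 α y) * (E1 * E2) * D0 α (y0 α x) := by ring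
        _ ≤ φ (y0 α y) * E * D0 α (y0 α x) := by gcongr
    · rw [div_mul_eq_mul_div, div_le_div_iff₀ Db Da]
      have : E1 ≤ E := le_trans (by nlinarith) key'
      calc φ (y0 α y) * D0 α (y0 α x)
          ≤ (φ (y0 α x) * E1) * D0 α (y0 α y) := mul_le_mul a.2 hD1 Da.le (by positivity)
        _ ≤ φ (y0 α x) * E * D0 α (y0 α y) := by gcongr

/-- The right branch is uniformly contracting, which leaves room for splitting off a multiple of
the constant density while staying in the class. -/
lemma L1_sub {θ : ℝ} (hr0 : 0 < r) (hK : 0 < K)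
    (hθ0 : 0 ≤ θ) (hθ : 2 * θ ≤ Real.exp (-2 * K) * (1 - (1 / 2) ^ r))
    (h : Reg r K φ) : Reg r K (fun x => LSV.L1 φ x - θ * φ 1) := by
  have p1 := h.nonneg 1 (by norm_num)
  have hhalf : (0 : ℝ) < (1 / 2) ^ r := by positivity
  have hhalf1 : ((1 : ℝ) / 2) ^ r < 1 := Real.rpow_lt_one (by norm_num) (by norm_num) hr0
  have e2 : Real.exp (-2 * K) * Real.exp K = Real.exp (-K) := by
    rw [← Real.exp_add]; congr 1; ring
  have low : ∀ y ∈ Ioc (0 : ℝ) 1, φ 1 * Real.exp (-K) ≤ φ ((1 + y) / 2) := fun y hy => by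
    have := (h.osc_one hr0 hK.le (y1_mem hy)).2
    rw [Real.exp_neg, ← div_eq_mul_inv, div_le_iff₀ (Real.exp_pos _)]
    exact this
  -- `θ φ(1)` is a small proportion of the right branch part
  have small : ∀ y ∈ Ioc (0 : ℝ) 1,
      θ * φ 1 * Real.exp K ≤ LSV.L1 φ y * (1 - (1 / 2) ^ r) := fun y hy => by
    have h1 := low y hy
    have h2 : 2 * θ * (φ 1 * Real.exp K)
        ≤ Real.exp (-2 * K) * (1 - (1 / 2) ^ r) * (φ 1 * Real.exp K) :=
      mul_le_mul_of_nonneg_right hθ (by positivity)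
    have h3 : Real.exp (-2 * K) * (1 - (1 / 2) ^ r) * (φ 1 * Real.exp K)
        = φ 1 * Real.exp (-K) * (1 - (1 / 2) ^ r) := by rw [← e2]; ring
    have h4 := mul_le_mul_of_nonneg_right h1 (show 0 ≤ 1 - (1 / 2 : ℝ) ^ r by linarith)
    unfold LSV.L1
    linarith
  have main : ∀ A B δ : ℝ, 0 ≤ δ → δ ≤ 1 → 0 ≤ B →
      θ * φ 1 * Real.exp K ≤ B * (1 - (1 / 2) ^ r) →
      A ≤ B * Real.exp (K * ((1 / 2) ^ r * δ)) →
      A - θ * φ 1 ≤ (B - θ * φ 1) * Real.exp (K * δ) := by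
    intro A B δ hδ0 hδ1 hB hs hAB
    -- `exp (Kδ) - exp (K 2^{-r} δ) ≥ K (1 - 2^{-r}) δ` and `exp (Kδ) - 1 ≤ K δ exp K`
    have u1 : Real.exp (K * ((1 / 2) ^ r * δ)) + K * (1 - (1 / 2) ^ r) * δ
        ≤ Real.exp (K * δ) := by
      have : Real.exp (K * δ) = Real.exp (K * ((1 / 2) ^ r * δ))
          * Real.exp (K * (1 - (1 / 2) ^ r) * δ) := by
        rw [← Real.exp_add]; congr 1; ring
      rw [this]
      have v1 := Real.add_one_le_exp (K * (1 - (1 / 2) ^ r) * δ)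
      have v2 : 1 ≤ Real.exp (K * ((1 / 2) ^ r * δ)) := Real.one_le_exp (by positivity)
      have v3 : 0 ≤ K * (1 - (1 / 2) ^ r) * δ :=
        mul_nonneg (mul_nonneg hK.le (by linarith)) hδ0
      nlinarith
    have u2 : Real.exp (K * δ) - 1 ≤ K * δ * Real.exp K := by
      have v1 := Real.add_one_le_exp (-(K * δ))
      have v2 : Real.exp (K * δ) * Real.exp (-(K * δ)) = 1 := by
        rw [← Real.exp_add]; simp
      have v3 : Real.exp (K * δ) ≤ Real.exp K := Real.exp_le_exp.2 (by nlinarith)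
      have v4 : 0 < Real.exp (K * δ) := Real.exp_pos _
      have v5 : 0 ≤ K * δ := by positivity
      nlinarith
    have t0 : 0 ≤ θ * φ 1 := by positivity
    have w1 := mul_le_mul_of_nonneg_left u1 hB
    have w2 := mul_le_mul_of_nonneg_left u2 t0
    have w3 := mul_le_mul_of_nonneg_left hs (show 0 ≤ K * δ by positivity)
    nlinarith
  refine ⟨fun x hx => ?_, fun x hx y hy hxy hd => ?_⟩
  · have h1 := small x hx
    have h2 : (1 : ℝ) ≤ Real.exp K := Real.one_le_exp hK.le
    have h3 : 0 ≤ LSV.L1 φ x := div_nonneg (h.nonneg _ (y1_mem_one hx)) (by norm_num)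
    have t0 : 0 ≤ θ * φ 1 := by positivity
    nlinarith
  · obtain ⟨b0, b1⟩ := branch1 hx hy hxy
    have hd0 : 0 ≤ Real.log y - Real.log x := sub_nonneg.2 (Real.log_le_log hx.1 hxy)
    have a := h.osc _ (y1_mem_one hx) _ (y1_mem_one hy) (by linarith) (by linarith)
    have hpow : (Real.log ((1 + y) / 2) - Real.log ((1 + x) / 2)) ^ r
        ≤ (1 / 2) ^ r * (Real.log y - Real.log x) ^ r := by
      rw [← Real.mul_rpow (by norm_num) hd0]
      exact Real.rpow_le_rpow b0 (by linarith) hr0.le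
    have hexp : Real.exp (K * (Real.log ((1 + y) / 2) - Real.log ((1 + x) / 2)) ^ r)
        ≤ Real.exp (K * ((1 / 2) ^ r * (Real.log y - Real.log x) ^ r)) := by gcongr
    have q1 : 0 ≤ LSV.L1 φ x := div_nonneg (h.nonneg _ (y1_mem_one hx)) (by norm_num)
    have q2 : 0 ≤ LSV.L1 φ y := div_nonneg (h.nonneg _ (y1_mem_one hy)) (by norm_num)
    have hδ0 : 0 ≤ (Real.log y - Real.log x) ^ r := by positivity
    have hδ1 : (Real.log y - Real.log x) ^ r ≤ 1 := Real.rpow_le_one hd0 hd hr0.le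
    refine ⟨main _ _ _ hδ0 hδ1 q2 (small y hy) ?_, main _ _ _ hδ0 hδ1 q1 (small x hx) ?_⟩
    · refine le_trans ?_ (mul_le_mul_of_nonneg_left hexp q2)
      unfold LSV.L1
      linarith [a.1]
    · refine le_trans ?_ (mul_le_mul_of_nonneg_left hexp q1)
      unfold LSV.L1
      linarith [a.2]

lemma continuousOn (hr0 : 0 < r) (h : Reg r K φ) : ContinuousOn φ (Ioc 0 1) := by
  intro x hx
  have hcont : Tendsto (fun y => |Real.log y - Real.log x| ^ r) (𝓝[Ioc 0 1] x) (𝓝 0) := by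
    have h1 : ContinuousAt (fun y => |Real.log y - Real.log x| ^ r) x := by
      refine ContinuousAt.rpow_const ?_ (Or.inr hr0.le)
      exact ((Real.continuousAt_log hx.1.ne').sub continuousAt_const).abs
    have h2 := h1.tendsto.mono_left (nhdsWithin_le_nhds (s := Ioc 0 1))
    simpa [Real.zero_rpow hr0.ne'] using h2
  have hnear : ∀ᶠ y in 𝓝[Ioc 0 1] x, |Real.log y - Real.log x| ≤ 1 := by
    have h1 : ContinuousAt (fun y => |Real.log y - Real.log x|) x :=
      ((Real.continuousAt_log hx.1.ne').sub continuousAt_const).abs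
    have h2 := h1.tendsto.mono_left (nhdsWithin_le_nhds (s := Ioc 0 1))
    rw [sub_self, abs_zero] at h2
    exact (h2.eventually_lt_const one_pos).mono fun _ h => h.le
  have two : ∀ᶠ y in 𝓝[Ioc 0 1] x,
      φ x * Real.exp (-(K * |Real.log y - Real.log x| ^ r)) ≤ φ y ∧
      φ y ≤ φ x * Real.exp (K * |Real.log y - Real.log x| ^ r) := by
    filter_upwards [hnear, self_mem_nhdsWithin] with y hy1 hy
    have : φ x ≤ φ y * Real.exp (K * |Real.log y - Real.log x| ^ r) ∧
        φ y ≤ φ x * Real.exp (K * |Real.log y - Real.log x| ^ r) := by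
      rcases le_total x y with hxy | hxy
      · rw [abs_of_nonneg (sub_nonneg.2 (Real.log_le_log hx.1 hxy))] at hy1 ⊢
        exact h.osc x hx y hy hxy hy1
      · rw [abs_sub_comm, abs_of_nonneg (sub_nonneg.2 (Real.log_le_log hy.1 hxy))] at hy1 ⊢
        exact (h.osc y hy x hx hxy hy1).symm
    refine ⟨?_, this.2⟩
    rw [Real.exp_neg, ← div_eq_mul_inv, div_le_iff₀ (Real.exp_pos _)]
    exact this.1
  have l1 : Tendsto (fun y => φ x * Real.exp (-(K * |Real.log y - Real.log x| ^ r)))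
      (𝓝[Ioc 0 1] x) (𝓝 (φ x)) := by
    have := ((hcont.const_mul K).neg.rexp).const_mul (φ x)
    simpa using this
  have l2 : Tendsto (fun y => φ x * Real.exp (K * |Real.log y - Real.log x| ^ r))
      (𝓝[Ioc 0 1] x) (𝓝 (φ x)) := by
    have := ((hcont.const_mul K).rexp).const_mul (φ x)
    simpa using this
  exact tendsto_of_tendsto_of_tendsto_of_le_of_le' l1 l2 (two.mono fun _ h => h.1)
    (two.mono fun _ h => h.2)

end Reg

end

/-! ### Duality between the transfer operator and composition with the map -/

section

variable {α : ℝ}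

/-- Lebesgue measure on `(0,1]`. -/
noncomputable abbrev leb : Measure ℝ := volume.restrict (Ioc (0 : ℝ) 1)

instance : IsProbabilityMeasure leb := ⟨by simp [leb]⟩

/-- The transfer operator of the map with respect to Lebesgue measure. -/
noncomputable def Lop (α : ℝ) (φ : ℝ → ℝ) (x : ℝ) : ℝ := L0 α φ x + L1 φ x

variable {E : Type*} [NormedAddCommGroup E] [NormedSpace ℝ E]

lemma image_T0 (hα : 0 < α) : T0 α '' Ioc 0 (1 / 2) = Ioc 0 1 := by
  ext x
  constructor
  · rintro ⟨y, hy, rfl⟩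
    have h1 := T0_lt hα le_rfl hy.1
    rw [T0_zero] at h1
    refine ⟨h1, ?_⟩
    rw [← T0_half (α := α)]
    exact (T0_strictMonoOn hα).monotoneOn hy.1.le (by norm_num [mem_Ici]) hy.2
  · intro hx
    exact exists_T0 hα hx

lemma image_T1 : (fun y : ℝ => 2 * y - 1) '' Ioc (1 / 2) 1 = Ioc 0 1 := by
  ext x
  constructor
  · rintro ⟨y, hy, rfl⟩
    exact ⟨by linarith [hy.1], by linarith [hy.2]⟩
  · intro hx
    exact ⟨(1 + x) / 2, y1_mem hx, by ring⟩

lemma L0_congr (hα : 0 < α) (φ : ℝ → ℝ) (u : ℝ → E) {y : ℝ} (hy : y ∈ Ioc (0 : ℝ) (1 / 2)) :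
    |D0 α y| • (L0 α φ (T0 α y) • u (T0 α y)) = φ y • u (lsv α y) := by
  have hD := D0_pos hα hy.1.le
  rw [L0, y0_T0 hα (Ioc_subset_Icc_self hy), lsv_left hy.2, smul_smul, abs_of_pos hD]
  congr 1
  field_simp

lemma L1_congr (φ : ℝ → ℝ) (u : ℝ → E) {y : ℝ} (hy : y ∈ Ioc (1 / 2 : ℝ) 1) :
    |(2 : ℝ)| • (L1 φ (2 * y - 1) • u (2 * y - 1)) = φ y • u (lsv α y) := by
  rw [L1, lsv_right hy.1, smul_smul, abs_of_pos two_pos, show (1 + (2 * y - 1)) / 2 = y by ring]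
  congr 1
  field_simp

lemma integrableOn_left_iff (hα : 0 < α) (φ : ℝ → ℝ) (u : ℝ → E) :
    Integrable (fun x => L0 α φ x • u x) leb ↔
      IntegrableOn (fun y => φ y • u (lsv α y)) (Ioc 0 (1 / 2)) := by
  have h := integrableOn_image_iff_integrableOn_abs_deriv_smul (s := Ioc (0 : ℝ) (1 / 2))
    measurableSet_Ioc (fun y hy => (hasDerivAt_T0 (α := α) hy.1).hasDerivWithinAt)
    ((T0_strictMonoOn hα).injOn.mono fun y hy => hy.1.le) (fun x => L0 α φ x • u x)
  rw [image_T0 hα] at h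
  exact h.trans (integrableOn_congr_fun (fun y hy => L0_congr hα φ u hy) measurableSet_Ioc)

lemma integral_left (hα : 0 < α) (φ : ℝ → ℝ) (u : ℝ → E) :
    ∫ x, L0 α φ x • u x ∂leb = ∫ y in Ioc 0 (1 / 2), φ y • u (lsv α y) := by
  have h := integral_image_eq_integral_abs_deriv_smul (s := Ioc (0 : ℝ) (1 / 2))
    measurableSet_Ioc (fun y hy => (hasDerivAt_T0 (α := α) hy.1).hasDerivWithinAt)
    ((T0_strictMonoOn hα).injOn.mono fun y hy => hy.1.le) (fun x => L0 α φ x • u x)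
  rw [image_T0 hα] at h
  exact h.trans (setIntegral_congr_fun measurableSet_Ioc fun y hy => L0_congr hα φ u hy)

lemma hasDerivAt_T1 (y : ℝ) : HasDerivAt (fun y : ℝ => 2 * y - 1) 2 y := by
  simpa using ((hasDerivAt_id y).const_mul 2).sub_const 1

lemma injOn_T1 (s : Set ℝ) : InjOn (fun y : ℝ => 2 * y - 1) s := fun x _ y _ h => by
  simp only at h; linarith

lemma integrableOn_right_iff (φ : ℝ → ℝ) (u : ℝ → E) :
    Integrable (fun x => L1 φ x • u x) leb ↔
      IntegrableOn (fun y => φ y • u (lsv α y)) (Ioc (1 / 2) 1) := by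
  have h := integrableOn_image_iff_integrableOn_abs_deriv_smul (s := Ioc (1 / 2 : ℝ) 1)
    measurableSet_Ioc (fun y _ => (hasDerivAt_T1 y).hasDerivWithinAt)
    (injOn_T1 _) (fun x => L1 φ x • u x)
  rw [image_T1] at h
  exact h.trans (integrableOn_congr_fun (fun y hy => L1_congr φ u hy) measurableSet_Ioc)

lemma integral_right (φ : ℝ → ℝ) (u : ℝ → E) :
    ∫ x, L1 φ x • u x ∂leb = ∫ y in Ioc (1 / 2) 1, φ y • u (lsv α y) := by
  have h := integral_image_eq_integral_abs_deriv_smul (s := Ioc (1 / 2 : ℝ) 1)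
    measurableSet_Ioc (fun y _ => (hasDerivAt_T1 y).hasDerivWithinAt)
    (injOn_T1 _) (fun x => L1 φ x • u x)
  rw [image_T1] at h
  exact h.trans (setIntegral_congr_fun measurableSet_Ioc fun y hy => L1_congr φ u hy)

lemma Ioc_split : Ioc (0 : ℝ) (1 / 2) ∪ Ioc (1 / 2) 1 = Ioc 0 1 :=
  Ioc_union_Ioc_eq_Ioc (by norm_num) (by norm_num)

lemma integrable_comp_iff (hα : 0 < α) (φ : ℝ → ℝ) (u : ℝ → E) :
    Integrable (fun y => φ y • u (lsv α y)) leb ↔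
      Integrable (fun x => L0 α φ x • u x) leb ∧ Integrable (fun x => L1 φ x • u x) leb := by
  rw [integrableOn_left_iff hα, integrableOn_right_iff (α := α), ← integrableOn_union, Ioc_split]
  rfl

/-- The defining duality of the transfer operator. -/
lemma integral_comp (hα : 0 < α) (φ : ℝ → ℝ) (u : ℝ → E)
    (h : Integrable (fun y => φ y • u (lsv α y)) leb) :
    ∫ y, φ y • u (lsv α y) ∂leb = ∫ x, Lop α φ x • u x ∂leb := by
  have h2 := (integrable_comp_iff hα φ u).1 h
  simp only [Lop, add_smul]
  rw [integral_add h2.1 h2.2, integral_left hα, integral_right (α := α)]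
  rw [leb, ← Ioc_split] at h ⊢
  rw [setIntegral_union (Ioc_disjoint_Ioc_of_le le_rfl) measurableSet_Ioc
    (IntegrableOn.left_of_union h) (IntegrableOn.right_of_union h)]

lemma integrable_L0 (hα : 0 < α) {φ : ℝ → ℝ} (h : Integrable φ leb) :
    Integrable (L0 α φ) leb := by
  have := ((integrable_comp_iff hα φ (fun _ => (1 : ℝ))).1 (by simpa using h)).1
  simpa using this

lemma integrable_L1 (hα : 0 < α) {φ : ℝ → ℝ} (h : Integrable φ leb) :
    Integrable (L1 φ) leb := by
  have := ((integrable_comp_iff hα φ (fun _ => (1 : ℝ))).1 (by simpa using h)).2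
  simpa using this

lemma integrable_of_L0_L1 (hα : 0 < α) {φ : ℝ → ℝ} (h0 : Integrable (L0 α φ) leb)
    (h1 : Integrable (L1 φ) leb) : Integrable φ leb := by
  have := (integrable_comp_iff hα φ (fun _ => (1 : ℝ))).2 ⟨by simpa using h0, by simpa using h1⟩
  simpa using this

lemma integral_Lop (hα : 0 < α) {φ : ℝ → ℝ} (h : Integrable φ leb) :
    ∫ x, Lop α φ x ∂leb = ∫ x, φ x ∂leb := by
  have := integral_comp hα φ (fun _ => (1 : ℝ)) (by simpa using h)
  simpa using this.symm

lemma ae_leb_mem : ∀ᵐ x ∂leb, x ∈ Ioc (0 : ℝ) 1 := ae_restrict_mem measurableSet_Ioc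

lemma integrable_rpow {s : ℝ} (hs : -1 < s) : Integrable (fun x : ℝ => x ^ s) leb := by
  have := (intervalIntegral.intervalIntegrable_rpow' (a := 0) (b := 1) hs)
  rwa [intervalIntegrable_iff_integrableOn_Ioc_of_le zero_le_one] at this

lemma integrable_of_abs_le {φ : ℝ → ℝ} {B s : ℝ} (hs : -1 < s)
    (hφ : AEStronglyMeasurable φ leb) (h : ∀ x ∈ Ioc (0 : ℝ) 1, |φ x| ≤ B * x ^ s) :
    Integrable φ leb := by
  refine Integrable.mono' ((integrable_rpow hs).const_mul B) hφ ?_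
  filter_upwards [ae_leb_mem] with x hx
  exact h x hx

lemma aestronglyMeasurable_of_reg {r K : ℝ} {φ : ℝ → ℝ} (hr0 : 0 < r) (h : Reg r K φ) :
    AEStronglyMeasurable φ leb :=
  (h.continuousOn hr0).aestronglyMeasurable measurableSet_Ioc

end

/-! ### Solving the Poisson equation by splitting off Lebesgue measure -/

section

variable {α : ℝ}

/-- Power functions are strict supersolutions for the left branch. -/
lemma L0_rpow_le (hα : 0 < α) (hα1 : α ≤ 1) {s : ℝ} (hs0 : α ≤ s) (hs1 : s ≤ 1) {x : ℝ}
    (hx : x ∈ Ioc (0 : ℝ) 1) :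
    L0 α (fun y => y ^ (-s)) x + α / 6 * x ^ (α - s) ≤ x ^ (-s) := by
  have ha := y0_mem hα hx
  have hxe := T0_y0 hα hx
  unfold L0
  set a := y0 α x
  have hw0 := lw_pos (α := α) ha.1
  have hw1 := lw_le_one hα (Ioc_subset_Icc_self ha)
  have hax : a ≤ x := by rw [← hxe, T0]; nlinarith [ha.1]
  have hb := rpow_one_add_le_one_add_mul_self (s := lw α a) (by linarith) (hα.le.trans hs0) hs1
  have e1 : x ^ (-s) = a ^ (-s) * ((1 + lw α a) ^ s)⁻¹ := by
    rw [← hxe, T0, Real.mul_rpow ha.1.le (by positivity), Real.rpow_neg (by positivity : 0 ≤ 1 + lw α a)]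
  have e2 : x ^ (α - s) ≤ a ^ (-s) * lw α a := by
    have h1 : x ^ (α - s) ≤ a ^ (α - s) :=
      Real.rpow_le_rpow_of_nonpos ha.1 hax (by linarith)
    have h2 : a ^ (α - s) = a ^ (-s) * a ^ α := by
      rw [← Real.rpow_add ha.1]; congr 1; ring
    have h3 : a ^ α ≤ lw α a := by
      unfold lw
      have : (1 : ℝ) ≤ 2 ^ α := Real.one_le_rpow (by norm_num) hα.le
      have : 0 ≤ a ^ α := by have := ha.1; positivity
      nlinarith
    rw [h2] at h1
    refine h1.trans ?_
    have : 0 ≤ a ^ (-s) := Real.rpow_nonneg ha.1.le _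
    gcongr
  have hs : 0 < s := hα.trans_le hs0
  have key : 1 / D0 α a + α / 6 * lw α a ≤ ((1 + lw α a) ^ s)⁻¹ := by
    have h1 : (1 + s * lw α a)⁻¹ ≤ ((1 + lw α a) ^ s)⁻¹ := by
      apply inv_anti₀ _ hb
      positivity
    refine le_trans ?_ h1
    unfold D0
    set w := lw α a
    rw [← sub_nonneg]
    have e : (1 + s * w)⁻¹ - (1 / (1 + (1 + α) * w) + α / 6 * w)
        = w * ((1 + α - s) - α / 6 * ((1 + s * w) * (1 + (1 + α) * w))) /
          ((1 + s * w) * (1 + (1 + α) * w)) := by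
      field_simp
      ring
    rw [e]
    refine div_nonneg (mul_nonneg hw0.le ?_) (by positivity)
    have h2 : (1 + s * w) * (1 + (1 + α) * w) ≤ 2 * 3 := by
      refine mul_le_mul ?_ ?_ (by positivity) (by norm_num)
      · nlinarith
      · nlinarith
    nlinarith
  have hp : 0 ≤ a ^ (-s) := Real.rpow_nonneg ha.1.le _
  rw [e1]
  calc a ^ (-s) / D0 α a + α / 6 * x ^ (α - s)
      ≤ a ^ (-s) / D0 α a + α / 6 * (a ^ (-s) * lw α a) := by gcongr
    _ = a ^ (-s) * (1 / D0 α a + α / 6 * lw α a) := by ring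
    _ ≤ _ := by gcongr

/-- The transfer operator with the multiple `θ φ(1)` of the constant density split off. -/
noncomputable def Qop (α θ : ℝ) (φ : ℝ → ℝ) (x : ℝ) : ℝ := L0 α φ x + (L1 φ x - θ * φ 1)

lemma Reg.Qop {r K θ : ℝ} {φ : ℝ → ℝ} (hα : 0 < α) (hα1 : α ≤ 1) (hr0 : 0 < r) (hr1 : r ≤ 1)
    (hK : 2 ≤ K * r) (hθ0 : 0 ≤ θ) (hθ : 2 * θ ≤ Real.exp (-2 * K) * (1 - (1 / 2) ^ r))
    (h : Reg r K φ) : Reg r K (Qop α θ φ) := by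
  have hK0 : 0 < K := by
    by_contra hneg
    push Not at hneg
    nlinarith
  exact (h.L0 hα hα1 hr0 hr1 hK).add (h.L1_sub hr0 hK0 hθ0 hθ)

lemma integrable_Qop (hα : 0 < α) {θ : ℝ} {φ : ℝ → ℝ} (h : Integrable φ leb) :
    Integrable (Qop α θ φ) leb :=
  (integrable_L0 hα h).add ((integrable_L1 hα h).sub (integrable_const _))

lemma integrable_Lop (hα : 0 < α) {φ : ℝ → ℝ} (h : Integrable φ leb) :
    Integrable (Lop α φ) leb := (integrable_L0 hα h).add (integrable_L1 hα h)

lemma integral_Qop (hα : 0 < α) {θ : ℝ} {φ : ℝ → ℝ} (h : Integrable φ leb) :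
    ∫ x, Qop α θ φ x ∂leb = ∫ x, φ x ∂leb - θ * φ 1 := by
  rw [← integral_Lop hα h]
  have e : ∀ x, Qop α θ φ x = Lop α φ x - θ * φ 1 := fun x => by simp only [Qop, Lop]; ring
  simp only [e]
  rw [integral_sub (integrable_Lop hα h) (integrable_const _)]
  simp

/-- For a regular density `φ`, the series `Φ = ∑ Qⁿ φ` converges and solves the Poisson equation
`Φ - L Φ = φ - ∫ φ`. Each application of `Q` loses the mass `θ φ(1)`, so the boundary values
`(Qⁿ φ)(1)` are summable; the power supersolution then bounds the partial sums. -/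
theorem poisson {r K s C : ℝ} {φ : ℝ → ℝ} (hα : 0 < α) (hα1 : α ≤ 1) (hr0 : 0 < r) (hr1 : r ≤ 1)
    (hK : 2 ≤ K * r) (hs0 : α ≤ s) (hs1 : s < 1) (hφ : Reg r K φ)
    (hC : ∀ x ∈ Ioc (0 : ℝ) 1, φ x ≤ C * x ^ (α - s)) :
    ∃ Φ : ℝ → ℝ, Reg r K Φ ∧ (∃ B, ∀ x ∈ Ioc (0 : ℝ) 1, Φ x ≤ B * x ^ (-s)) ∧
      (∀ x ∈ Ioc (0 : ℝ) 1, φ x ≤ Φ x) ∧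
      ∀ x ∈ Ioc (0 : ℝ) 1, Φ x - Lop α Φ x = φ x - ∫ z, φ z ∂leb := by
  have hK0 : 0 < K := by
    by_contra hneg
    push Not at hneg
    nlinarith
  set θ : ℝ := Real.exp (-2 * K) * (1 - (1 / 2) ^ r) / 2 with hθdef
  have hhalf1 : ((1 : ℝ) / 2) ^ r < 1 := Real.rpow_lt_one (by norm_num) (by norm_num) hr0
  have hθ0 : 0 < θ := by
    have : 0 < 1 - ((1 : ℝ) / 2) ^ r := by linarith
    positivity
  have hθ : 2 * θ ≤ Real.exp (-2 * K) * (1 - (1 / 2) ^ r) := by rw [hθdef]; linarith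
  let ψ : ℕ → ℝ → ℝ := fun n => (Qop α θ)^[n] φ
  have ψ0 : ψ 0 = φ := rfl
  have ψs : ∀ n, ψ (n + 1) = Qop α θ (ψ n) := fun n => Function.iterate_succ_apply' _ _ _
  have ψreg : ∀ n, Reg r K (ψ n) := by
    intro n
    induction n with
    | zero => exact hφ
    | succ n ih => rw [ψs]; exact ih.Qop hα hα1 hr0 hr1 hK hθ0.le hθ
  have hφint : Integrable φ leb := by
    refine integrable_of_abs_le (s := α - s) (B := C) (by linarith)
      (aestronglyMeasurable_of_reg hr0 hφ) fun x hx => ?_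
    rw [abs_of_nonneg (hφ.nonneg x hx)]
    exact hC x hx
  have ψint : ∀ n, Integrable (ψ n) leb := by
    intro n
    induction n with
    | zero => exact hφint
    | succ n ih => rw [ψs]; exact integrable_Qop hα ih
  let Ψ : ℕ → ℝ → ℝ := fun N x => ∑ n ∈ Finset.range N, ψ n x
  have Ψreg : ∀ N, Reg r K (Ψ N) := by
    intro N
    induction N with
    | zero => simpa [Ψ] using Reg.const (r := r) le_rfl hK0.le
    | succ N ih =>
      have := ih.add (ψreg N)
      simpa [Ψ, Finset.sum_range_succ] using this
  have one_mem : (1 : ℝ) ∈ Ioc (0 : ℝ) 1 := by norm_num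
  have mass : ∀ N, θ * Ψ N 1 + ∫ x, ψ N x ∂leb = ∫ x, φ x ∂leb := by
    intro N
    induction N with
    | zero => simp [Ψ, ψ0]
    | succ N ih =>
      rw [ψs, integral_Qop hα (ψint N), ← ih]
      simp only [Ψ, Finset.sum_range_succ]
      ring
  have Ψ1 : ∀ N, Ψ N 1 ≤ (∫ x, φ x ∂leb) / θ := by
    intro N
    rw [le_div_iff₀ hθ0]
    have : 0 ≤ ∫ x, ψ N x ∂leb :=
      integral_nonneg_of_ae (by filter_upwards [ae_leb_mem] with x hx using (ψreg N).nonneg x hx)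
    linarith [mass N]
  have Ψrec : ∀ N x, Ψ (N + 1) x = φ x + Qop α θ (Ψ N) x := by
    intro N
    induction N with
    | zero => intro x; simp [Ψ, ψ0, Qop, L0, L1]
    | succ N ih =>
      intro x
      have e1 : Ψ (N + 1 + 1) x = Ψ (N + 1) x + Qop α θ (ψ N) x := by
        simp only [Ψ]
        rw [Finset.sum_range_succ, ψs]
      have e2 : ∀ z, Ψ (N + 1) z = Ψ N z + ψ N z := fun z => by
        simp only [Ψ]; rw [Finset.sum_range_succ]
      rw [e1, ih]
      simp only [Qop, L0, L1, e2]
      ring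
  have hI0 : 0 ≤ ∫ x, φ x ∂leb :=
    integral_nonneg_of_ae (by filter_upwards [ae_leb_mem] with x hx using hφ.nonneg x hx)
  set C1 := Real.exp K * ((∫ x, φ x ∂leb) / θ) with hC1
  have hC10 : 0 ≤ C1 := by positivity
  have hCnn : 0 ≤ C := by
    have h1 := hC 1 one_mem
    have h2 := hφ.nonneg 1 one_mem
    rw [Real.one_rpow] at h1
    linarith
  set B := (C + C1) * (6 / α) with hB
  have hB0 : 0 ≤ B := by positivity
  have hBα : B * (α / 6) = C + C1 := by rw [hB]; field_simp
  have Ψle : ∀ N, ∀ x ∈ Ioc (0 : ℝ) 1, Ψ N x ≤ B * x ^ (-s) := by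
    intro N
    induction N with
    | zero =>
      intro x hx
      have : 0 ≤ x ^ (-s) := Real.rpow_nonneg hx.1.le _
      simpa [Ψ] using mul_nonneg hB0 this
    | succ N ih =>
      intro x hx
      rw [Ψrec]
      have a1 : L0 α (Ψ N) x ≤ B * L0 α (fun y => y ^ (-s)) x := by
        unfold L0
        rw [← mul_div_assoc]
        exact div_le_div_of_nonneg_right (ih _ (y0_mem_one hα hx))
          (D0_pos hα (y0_mem hα hx).1.le).le
      have a2 : L1 (Ψ N) x - θ * Ψ N 1 ≤ C1 := by
        have h1 := ((Ψreg N).osc_one hr0 hK0.le (y1_mem hx)).1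
        have h2 := (Ψreg N).nonneg 1 one_mem
        have h3 : Ψ N 1 * Real.exp K ≤ C1 := by
          rw [hC1, mul_comm]
          exact mul_le_mul_of_nonneg_left (Ψ1 N) (Real.exp_pos _).le
        unfold L1
        nlinarith
      have a3 := mul_le_mul_of_nonneg_left (L0_rpow_le hα hα1 hs0 hs1.le hx) hB0
      have a4 : (1 : ℝ) ≤ x ^ (α - s) := Real.one_le_rpow_of_pos_of_le_one_of_nonpos hx.1 hx.2 (by linarith)
      have a5 : B * (α / 6 * x ^ (α - s)) = (C + C1) * x ^ (α - s) := by
        rw [← mul_assoc, hBα]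
      unfold Qop
      nlinarith [hC x hx]
  have Ψmono : ∀ x ∈ Ioc (0 : ℝ) 1, Monotone fun N => Ψ N x := by
    intro x hx
    refine monotone_nat_of_le_succ fun N => ?_
    simp only [Ψ, Finset.sum_range_succ]
    linarith [(ψreg N).nonneg x hx]
  let Φ : ℝ → ℝ := fun x => ⨆ N, Ψ N x
  have lim : ∀ x ∈ Ioc (0 : ℝ) 1, Tendsto (fun N => Ψ N x) atTop (𝓝 (Φ x)) := fun x hx =>
    tendsto_atTop_ciSup (Ψmono x hx) ⟨B * x ^ (-s), by rintro _ ⟨N, rfl⟩; exact Ψle N x hx⟩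
  have Φreg : Reg r K Φ := Reg.of_tendsto Ψreg lim
  have Φle : ∀ x ∈ Ioc (0 : ℝ) 1, Φ x ≤ B * x ^ (-s) := fun x hx =>
    le_of_tendsto' (lim x hx) fun N => Ψle N x hx
  have Φeq : ∀ x ∈ Ioc (0 : ℝ) 1, Φ x = φ x + Qop α θ Φ x := by
    intro x hx
    have h1 := (lim x hx).comp (tendsto_add_atTop_nat 1)
    have h2 : Tendsto (fun N => φ x + Qop α θ (Ψ N) x) atTop (𝓝 (φ x + Qop α θ Φ x)) := by
      refine Tendsto.const_add _ (Tendsto.add ?_ (Tendsto.sub ?_ ?_))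
      · exact (lim _ (y0_mem_one hα hx)).div_const _
      · exact (lim _ (y1_mem_one hx)).div_const _
      · exact (lim _ one_mem).const_mul _
    refine tendsto_nhds_unique h1 (h2.congr fun N => ?_)
    exact (Ψrec N x).symm
  have Φint : Integrable Φ leb := by
    refine integrable_of_abs_le (s := -s) (B := B) (by linarith)
      (aestronglyMeasurable_of_reg hr0 Φreg) fun x hx => ?_
    rw [abs_of_nonneg (Φreg.nonneg x hx)]
    exact Φle x hx
  have total : θ * Φ 1 = ∫ x, φ x ∂leb := by
    have h1 : ∫ x, Φ x ∂leb = ∫ x, (φ x + Qop α θ Φ x) ∂leb :=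
      integral_congr_ae (by filter_upwards [ae_leb_mem] with x hx using Φeq x hx)
    rw [integral_add hφint (integrable_Qop hα Φint), integral_Qop hα Φint] at h1
    linarith
  refine ⟨Φ, Φreg, ⟨B, Φle⟩, fun x hx => ?_, fun x hx => ?_⟩
  · have := (Ψmono x hx).ge_of_tendsto (lim x hx) 1
    simpa [Ψ, ψ0] using this
  · have := Φeq x hx
    rw [← total]
    unfold Qop at this
    unfold Lop
    linarith

end

/-! ### The invariant density -/

section

variable {α : ℝ}

lemma lsv_mem (hα : 0 < α) {x : ℝ} (hx : x ∈ Ioc (0 : ℝ) 1) : lsv α x ∈ Ioc (0 : ℝ) 1 := by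
  by_cases h : x ≤ 1 / 2
  · rw [lsv_left h, ← image_T0 hα]
    exact mem_image_of_mem _ ⟨hx.1, h⟩
  · push Not at h
    rw [lsv_right h]
    exact ⟨by linarith, by linarith [hx.2]⟩

/-- A function bounded by `C` and `r`-Hölder with constant `C` becomes regular once the constant
`2 C` is added: Hölder continuity in `x` implies Hölder continuity in `log x`. -/
lemma Reg.of_holder {r C : ℝ} {f : ℝ → ℝ} (hr0 : 0 < r)
    (hb : ∀ x ∈ Ioc (0 : ℝ) 1, |f x| ≤ C)
    (hh : ∀ x ∈ Ioc (0 : ℝ) 1, ∀ y ∈ Ioc (0 : ℝ) 1, |f x - f y| ≤ C * |x - y| ^ r) :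
    Reg r 1 (fun x => f x + 2 * C) where
  nonneg x hx := by
    have h1 := abs_le.1 (hb x hx)
    linarith [(abs_nonneg (f x)).trans (hb x hx)]
  osc x hx y hy hxy hd := by
    have h1 := abs_le.1 (hb x hx)
    have h2 := abs_le.1 (hb y hy)
    have hC : 0 ≤ C := (abs_nonneg (f x)).trans (hb x hx)
    have h3 := hh x hx y hy
    have hlog : y - x ≤ Real.log y - Real.log x := by
      have hx0 := hx.1
      have hy0 := hy.1
      have := Real.log_le_sub_one_of_pos (x := x / y) (by positivity)
      rw [Real.log_div hx0.ne' hy0.ne'] at this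
      have h5 : y - x ≤ 1 - x / y := by
        rw [show (1 : ℝ) - x / y = (y - x) / y by field_simp]
        rw [le_div_iff₀ hy0]
        nlinarith [hy.2]
      linarith
    have h6 : |x - y| ^ r ≤ (Real.log y - Real.log x) ^ r := by
      rw [abs_sub_comm, abs_of_nonneg (by linarith : 0 ≤ y - x)]
      exact Real.rpow_le_rpow (by linarith) hlog hr0.le
    set d := (Real.log y - Real.log x) ^ r
    have hd0 : 0 ≤ d := (Real.rpow_nonneg (abs_nonneg _) _).trans h6
    have h7 : |f x - f y| ≤ C * d := h3.trans (by gcongr)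
    have h8 := abs_le.1 h7
    have he : 1 + d ≤ Real.exp (1 * d) := by rw [one_mul]; linarith [Real.add_one_le_exp d]
    constructor
    · calc f x + 2 * C ≤ (f y + 2 * C) * (1 + d) := by nlinarith
        _ ≤ _ := by apply mul_le_mul_of_nonneg_left he; linarith
    · calc f y + 2 * C ≤ (f x + 2 * C) * (1 + d) := by nlinarith
        _ ≤ _ := by apply mul_le_mul_of_nonneg_left he; linarith

lemma Lop_const_mul (c : ℝ) (φ : ℝ → ℝ) (x : ℝ) :
    Lop α (fun y => c * φ y) x = c * Lop α φ x := by
  simp only [Lop, L0, L1]; ring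

lemma Lop_sub (φ ψ : ℝ → ℝ) (x : ℝ) :
    Lop α (fun y => φ y - ψ y) x = Lop α φ x - Lop α ψ x := by
  simp only [Lop, L0, L1]; ring

/-- `h` is the invariant density with the regularity and the two-sided bounds `h(x) ≍ x^{-α}`. -/
structure Density (α r K : ℝ) (h : ℝ → ℝ) : Prop where
  reg : Reg r K h
  le : ∃ B, ∀ x ∈ Ioc (0 : ℝ) 1, h x ≤ B * x ^ (-α)
  ge : ∃ c, 0 < c ∧ ∀ x ∈ Ioc (0 : ℝ) 1, c * x ^ (-α) ≤ h x
  fixed : ∀ x ∈ Ioc (0 : ℝ) 1, Lop α h x = h x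
  integrable : Integrable h leb
  integral : ∫ x, h x ∂leb = 1

/-- A fixed density bounded below is at least a multiple of `x^{-α}`: the mass of `(y, Ty]` equals
the mass of the part of `(1/2,1]` that is mapped to `(0, Ty]`. -/
lemma lower_bound {r K c : ℝ} {h : ℝ → ℝ} (hα : 0 < α) (hr0 : 0 < r) (hK : 0 ≤ K)
    (hreg : Reg r K h) (hInt : Integrable h leb) (hc0 : 0 < c)
    (hc : ∀ x ∈ Ioc (0 : ℝ) 1, c ≤ h x)
    (hfix : ∀ x ∈ Ioc (0 : ℝ) 1, Lop α h x = h x) {y : ℝ} (hy : y ∈ Ioc (0 : ℝ) (1 / 2)) :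
    c / (2 * 2 ^ α * Real.exp K) * y ^ (-α) ≤ h y := by
  set x := T0 α y with hx
  have hxm : x ∈ Ioc (0 : ℝ) 1 := by rw [← image_T0 hα]; exact mem_image_of_mem _ hy
  have hw0 := lw_pos (α := α) hy.1
  have hw1 := lw_le_one hα (Ioc_subset_Icc_self hy)
  have hxe : x = y * (1 + lw α y) := rfl
  have hyx : y ≤ x := by nlinarith [hy.1]
  have hx2 : x ≤ 2 * y := by nlinarith [hy.1]
  have hIoc : IntegrableOn h (Ioc 0 1) := hInt
  let u : ℝ → ℝ := indicator (Ioc 0 x) 1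
  have hu : Measurable u := measurable_one.indicator measurableSet_Ioc
  have hub : ∀ z, ‖u z‖ ≤ 1 := fun z => by
    simp only [u, indicator]; split_ifs <;> simp
  have hi1 : Integrable (fun z => h z • u (lsv α z)) leb :=
    hInt.mul_bdd (hu.comp measurable_lsv).aestronglyMeasurable (ae_of_all _ fun z => hub _)
  have e1 : ∫ z, h z • u (lsv α z) ∂leb = ∫ z in Ioc 0 x, h z := by
    rw [integral_comp hα h u hi1]
    have : ∫ z, Lop α h z • u z ∂leb = ∫ z, (Ioc 0 x).indicator h z ∂leb := by
      refine integral_congr_ae ?_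
      filter_upwards [ae_leb_mem] with z hz
      rw [hfix z hz]
      simp only [u, indicator]; split_ifs <;> simp
    rw [this, integral_indicator measurableSet_Ioc, leb, Measure.restrict_restrict measurableSet_Ioc,
      inter_eq_self_of_subset_left (Ioc_subset_Ioc_right hxm.2)]
  have e2 : ∫ z in Ioc 0 x, h z = (∫ z in Ioc 0 y, h z) + ∫ z in Ioc y x, h z := by
    rw [← setIntegral_union (Ioc_disjoint_Ioc_of_le le_rfl) measurableSet_Ioc
      (hIoc.mono_set (Ioc_subset_Ioc_right (hyx.trans hxm.2)))
      (hIoc.mono_set (Ioc_subset_Ioc hy.1.le hxm.2)), Ioc_union_Ioc_eq_Ioc hy.1.le hyx]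
  have hs2 : Ioc (1 / 2) ((1 + x) / 2) ⊆ Ioc (0 : ℝ) 1 :=
    Ioc_subset_Ioc (by norm_num) (by linarith [hxm.2])
  have e3 : (∫ z in Ioc 0 y, h z) + ∫ z in Ioc (1 / 2) ((1 + x) / 2), h z ≤
      ∫ z, h z • u (lsv α z) ∂leb := by
    have hd : Disjoint (Ioc 0 y) (Ioc (1 / 2) ((1 + x) / 2)) := Ioc_disjoint_Ioc_of_le hy.2
    rw [← setIntegral_union hd measurableSet_Ioc
      (hIoc.mono_set (Ioc_subset_Ioc_right (hyx.trans hxm.2))) (hIoc.mono_set hs2)]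
    have hsub : Ioc 0 y ∪ Ioc (1 / 2) ((1 + x) / 2) ⊆ Ioc (0 : ℝ) 1 :=
      union_subset (Ioc_subset_Ioc_right (hyx.trans hxm.2)) hs2
    have hms : MeasurableSet (Ioc 0 y ∪ Ioc (1 / 2) ((1 + x) / 2)) :=
      measurableSet_Ioc.union measurableSet_Ioc
    have : ∫ z in Ioc 0 y ∪ Ioc (1 / 2) ((1 + x) / 2), h z =
        ∫ z in Ioc 0 y ∪ Ioc (1 / 2) ((1 + x) / 2), h z • u (lsv α z) := by
      refine setIntegral_congr_fun hms fun z hz => ?_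
      have hl := lsv_mem hα (hsub hz)
      have : lsv α z ∈ Ioc 0 x := by
        refine ⟨hl.1, ?_⟩
        rcases hz with hz | hz
        · rw [lsv_left (hz.2.trans hy.2), hx]
          exact (T0_strictMonoOn hα).monotoneOn hz.1.le hy.1.le hz.2
        · rw [lsv_right hz.1]; linarith [hz.2]
      simp [u, indicator_of_mem this]
    rw [this]
    refine setIntegral_mono_set hi1 ?_ (Eventually.of_forall hsub)
    filter_upwards [ae_leb_mem] with z hz
    have := hreg.nonneg z hz
    have h2 : 0 ≤ u (lsv α z) := indicator_nonneg (fun _ _ => zero_le_one) _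
    exact mul_nonneg this h2
  have e4 : c * (x / 2) ≤ ∫ z in Ioc (1 / 2) ((1 + x) / 2), h z := by
    have : ∫ z in Ioc (1 / 2) ((1 + x) / 2), c ≤ ∫ z in Ioc (1 / 2) ((1 + x) / 2), h z :=
      setIntegral_mono_on (by simp) (hIoc.mono_set hs2) measurableSet_Ioc fun z hz => hc z (hs2 hz)
    rw [setIntegral_const, Measure.real, Real.volume_Ioc, ENNReal.toReal_ofReal (by linarith [hxm.1])]
      at this
    simp only [smul_eq_mul] at this
    linarith
  have e5 : ∫ z in Ioc y x, h z ≤ (x - y) * (h y * Real.exp K) := by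
    have hs : Ioc y x ⊆ Ioc (0 : ℝ) 1 := Ioc_subset_Ioc hy.1.le hxm.2
    have : ∫ z in Ioc y x, h z ≤ ∫ z in Ioc y x, h y * Real.exp K :=
      setIntegral_mono_on (hIoc.mono_set hs) (integrable_const _) measurableSet_Ioc fun z hz =>
        (hreg.osc_le hr0 hK ⟨hy.1, hy.2.trans (by norm_num)⟩ (hs hz) hz.1.le
          (Reg.log_ratio_le_one hy.1 (hs hz).1 (hz.2.trans hx2))).2
    rwa [setIntegral_const, Measure.real, Real.volume_Ioc, ENNReal.toReal_ofReal (by linarith)]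
      at this
  have e6 : c * (x / 2) ≤ (x - y) * (h y * Real.exp K) := by linarith
  have hP : 0 < Real.exp K := Real.exp_pos K
  have hxy : x - y = y * (2 ^ α * y ^ α) := by rw [hxe, lw]; ring
  have hyα : 0 < y ^ α := Real.rpow_pos_of_pos hy.1 _
  have h2α : (0 : ℝ) < 2 ^ α := by positivity
  have e7 : c / 2 ≤ 2 ^ α * y ^ α * (h y * Real.exp K) := by
    have : y * (c / 2) ≤ y * (2 ^ α * y ^ α * (h y * Real.exp K)) := by
      rw [hxy] at e6
      nlinarith
    exact le_of_mul_le_mul_left this hy.1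
  rw [Real.rpow_neg hy.1.le, ← div_eq_mul_inv, div_div, div_le_iff₀ (by positivity)]
  nlinarith

theorem exists_density {r K : ℝ} (hα : 0 < α) (hα1 : α < 1) (hr0 : 0 < r) (hr1 : r ≤ 1)
    (hK : 2 ≤ K * r) : ∃ h, Density α r K h := by
  have hK0 : 0 < K := by
    by_contra hneg
    push Not at hneg
    nlinarith
  obtain ⟨Φ, hreg, ⟨B, hB⟩, h1, hfix⟩ := poisson (s := α) (C := 1) (φ := fun _ => (1 : ℝ)) hα hα1.le
    hr0 hr1 hK le_rfl hα1 (Reg.const zero_le_one hK0.le) (fun x hx => by simp)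
  have hfix' : ∀ x ∈ Ioc (0 : ℝ) 1, Lop α Φ x = Φ x := fun x hx => by
    have := hfix x hx
    simp at this
    linarith
  have hInt : Integrable Φ leb := by
    refine integrable_of_abs_le (s := -α) (B := B) (by linarith)
      (aestronglyMeasurable_of_reg hr0 hreg) fun x hx => ?_
    rw [abs_of_nonneg (hreg.nonneg x hx)]
    exact hB x hx
  set I := ∫ x, Φ x ∂leb with hI
  have hI1 : 1 ≤ I := by
    have : ∫ x, (1 : ℝ) ∂leb ≤ I := integral_mono_ae (integrable_const _) hInt
      (by filter_upwards [ae_leb_mem] with x hx using h1 x hx)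
    simpa using this
  have hI0 : 0 < I := by linarith
  have hreg' : Reg r K fun x => I⁻¹ * Φ x := hreg.const_mul (by positivity)
  have hlow : ∀ x ∈ Ioc (0 : ℝ) 1, I⁻¹ ≤ I⁻¹ * Φ x := fun x hx => by
    have := h1 x hx
    have : 0 < I⁻¹ := by positivity
    nlinarith
  have hfix2 : ∀ x ∈ Ioc (0 : ℝ) 1, Lop α (fun x => I⁻¹ * Φ x) x = I⁻¹ * Φ x := fun x hx => by
    rw [Lop_const_mul, hfix' x hx]
  refine ⟨fun x => I⁻¹ * Φ x, hreg', ⟨I⁻¹ * B, fun x hx => ?_⟩, ?_, hfix2, hInt.const_mul _, ?_⟩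
  · rw [mul_assoc]
    exact mul_le_mul_of_nonneg_left (hB x hx) (by positivity)
  · set c := I⁻¹ / (2 * 2 ^ α * Real.exp K) with hcdef
    have hc : 0 < c := by positivity
    refine ⟨c, hc, fun x hx => ?_⟩
    by_cases hx2 : x ≤ 1 / 2
    · exact lower_bound hα hr0 hK0.le hreg' (hInt.const_mul _) (inv_pos.2 hI0) hlow hfix2 ⟨hx.1, hx2⟩
    · push Not at hx2
      refine le_trans ?_ (hlow x hx)
      have h3 : x ^ (-α) ≤ 2 ^ α := by
        rw [Real.rpow_neg hx.1.le, ← Real.inv_rpow hx.1.le]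
        apply Real.rpow_le_rpow (inv_nonneg.2 hx.1.le) _ hα.le
        rw [inv_le_comm₀ hx.1 two_pos]
        linarith
      have h4 : 1 ≤ Real.exp K := Real.one_le_exp hK0.le
      calc c * x ^ (-α) ≤ c * 2 ^ α := by gcongr
        _ = I⁻¹ / (2 * Real.exp K) := by rw [hcdef]; field_simp
        _ ≤ I⁻¹ := div_le_self (by positivity) (by linarith)
  · rw [integral_const_mul, ← hI, inv_mul_cancel₀ hI0.ne']

end

/-! ### Approximate coboundaries and uniqueness of the invariant density -/

section

variable {α : ℝ}

lemma integrable_smul_of_bdd {μ : Measure ℝ} {φ : ℝ → ℝ} (hφ : Integrable φ μ) {u : ℝ → ℂ}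
    (hu : Measurable u) {C : ℝ} (hub : ∀ x, ‖u x‖ ≤ C) : Integrable (fun x => φ x • u x) μ :=
  hφ.smul_bdd C hu.aestronglyMeasurable (ae_of_all _ hub)

lemma norm_integral_smul_le {μ : Measure ℝ} {φ : ℝ → ℝ} (hφ : Integrable φ μ) {u : ℝ → ℂ}
    {C : ℝ} (hub : ∀ x, ‖u x‖ ≤ C) :
    ‖∫ x, φ x • u x ∂μ‖ ≤ C * ∫ x, |φ x| ∂μ := by
  rw [← integral_const_mul]
  refine norm_integral_le_of_norm_le (hφ.abs.const_mul C) (ae_of_all _ fun x => ?_)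
  rw [norm_smul, Real.norm_eq_abs, mul_comm]
  gcongr
  exact hub x

/-- Duality for a coboundary of the transfer operator. -/
lemma integral_sub_Lop (hα : 0 < α) {Ψ : ℝ → ℝ} (hΨ : Integrable Ψ leb) {u : ℝ → ℂ}
    (hu : Measurable u) (hub : ∀ x, ‖u x‖ ≤ 1) :
    ∫ x, (Ψ x - Lop α Ψ x) • u x ∂leb = ∫ x, Ψ x • (u x - u (lsv α x)) ∂leb := by
  have i1 := integrable_smul_of_bdd hΨ hu hub
  have i2 : Integrable (fun x => Ψ x • u (lsv α x)) leb :=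
    integrable_smul_of_bdd hΨ (hu.comp measurable_lsv) (C := 1) fun x => hub _
  have i3 := integrable_smul_of_bdd (integrable_Lop hα hΨ) hu hub
  simp only [sub_smul, smul_sub]
  rw [integral_sub i1 i3, integral_sub i1 i2]
  congr 1
  exact (integral_comp hα Ψ u i2).symm

lemma exists_lipschitz_approx {φ : ℝ → ℝ} (hφ : Integrable φ leb) {ε : ℝ} (hε : 0 < ε) :
    ∃ (ζ : ℝ → ℝ) (C : ℝ), Continuous ζ ∧ (∀ x, |ζ x| ≤ C) ∧
      (∀ x y, |ζ x - ζ y| ≤ C * |x - y|) ∧ ∫ x, |φ x - ζ x| ∂leb ≤ ε := by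
  obtain ⟨g, hg1, hg2, hg3⟩ := MemLp.exist_eLpNorm_sub_le (p := 1) (by simp) le_rfl
    (memLp_one_iff_integrable.2 hφ) hε
  obtain ⟨C1, hC1⟩ := ContDiff.lipschitzWith_of_hasCompactSupport hg1 hg2 (by simp)
  obtain ⟨C2, hC2⟩ := hg1.exists_bound_of_continuous hg2.continuous
  refine ⟨g, max C1 C2, hg2.continuous, fun x => (hC2 x).trans (le_max_right _ _), fun x y => ?_, ?_⟩
  · have := hC1.dist_le_mul x y
    rw [Real.dist_eq, Real.dist_eq] at this
    exact this.trans (by gcongr; exact le_max_left _ _)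
  · have hgi : Integrable g leb := hg2.continuous.integrable_of_hasCompactSupport hg1
    rw [eLpNorm_one_eq_lintegral_enorm] at hg3
    have h2 := integral_norm_eq_lintegral_enorm (hφ.sub hgi).aestronglyMeasurable
    simp only [Pi.sub_apply, Real.norm_eq_abs] at h2 hg3
    rw [h2]
    exact ENNReal.toReal_le_of_le_ofReal hε.le hg3

/-- Modulo an error that is small in `L¹`, every `φ - (∫ φ) h` is a coboundary of the transfer
operator; tested against bounded functions this reads as follows. -/
theorem approx_coboundary {r K : ℝ} {h : ℝ → ℝ} (hα : 0 < α) (hα2 : α < 1 / 2) (hr0 : 0 < r)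
    (hr1 : r ≤ 1) (hK : 2 ≤ K * r) (hd : Density α r K h) {φ : ℝ → ℝ} (hφ : Integrable φ leb)
    {ε : ℝ} (hε : 0 < ε) :
    ∃ Φ : ℝ → ℝ, Integrable Φ leb ∧ ∀ u : ℝ → ℂ, Measurable u → (∀ x, ‖u x‖ ≤ 1) →
      ‖∫ x, (φ x - (∫ z, φ z ∂leb) * h x) • u x ∂leb -
        ∫ x, Φ x • (u x - u (lsv α x)) ∂leb‖ ≤ ε := by
  have hα1 : α < 1 := by linarith
  obtain ⟨ζ, C, hζc, hζb, hζl, hζε⟩ := exists_lipschitz_approx hφ (half_pos hε)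
  have hC : 0 ≤ C := (abs_nonneg _).trans (hζb 0)
  have hreg : Reg 1 2 fun x => ζ x + 2 * C :=
    (Reg.of_holder one_pos (fun x _ => hζb x) fun x _ y _ => by
      rw [Real.rpow_one]; exact hζl x y).mono one_le_two
  have hζi : Integrable ζ leb :=
    Integrable.of_bound hζc.aestronglyMeasurable C (ae_of_all _ fun x => hζb x)
  obtain ⟨Φ1, hr1', ⟨B1, hB1⟩, -, hP1⟩ := poisson (α := α) (s := α) (C := 3 * C) hα hα1.le one_pos
    le_rfl (by norm_num) le_rfl hα1 hreg (fun x hx => by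
      have := (abs_le.1 (hζb x)).2
      simp only [sub_self, Real.rpow_zero, mul_one]; linarith)
  obtain ⟨Bh, hBh⟩ := hd.le
  obtain ⟨Φ2, hr2', ⟨B2, hB2⟩, -, hP2⟩ := poisson (α := α) (s := 2 * α) (C := Bh) hα hα1.le hr0
    hr1 hK (by linarith) (by linarith) hd.reg (fun x hx => by
      rw [show α - 2 * α = -α by ring]; exact hBh x hx)
  have i1 : Integrable Φ1 leb := by
    refine integrable_of_abs_le (s := -α) (B := B1) (by linarith)
      (aestronglyMeasurable_of_reg one_pos hr1') fun x hx => ?_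
    rw [abs_of_nonneg (hr1'.nonneg x hx)]
    exact hB1 x hx
  have i2 : Integrable Φ2 leb := by
    refine integrable_of_abs_le (s := -(2 * α)) (B := B2) (by linarith)
      (aestronglyMeasurable_of_reg hr0 hr2') fun x hx => ?_
    rw [abs_of_nonneg (hr2'.nonneg x hx)]
    exact hB2 x hx
  set I := ∫ z, φ z ∂leb with hI
  set J := ∫ z, ζ z ∂leb with hJ
  have hIJ : |I - J| ≤ ε / 2 := by
    rw [hI, hJ, ← integral_sub hφ hζi]
    exact (abs_integral_le_integral_abs).trans hζε
  let Ψ : ℝ → ℝ := fun x => Φ1 x - J * Φ2 x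
  have iΨ : Integrable Ψ leb := i1.sub (i2.const_mul J)
  have hPΨ : ∀ x ∈ Ioc (0 : ℝ) 1, Ψ x - Lop α Ψ x = ζ x - J * h x := by
    intro x hx
    have e1 := hP1 x hx
    have e2 := hP2 x hx
    rw [hd.integral] at e2
    rw [integral_add hζi (integrable_const _)] at e1
    simp only [integral_const, probReal_univ, smul_eq_mul, one_mul] at e1
    simp only [Ψ]
    rw [Lop_sub, Lop_const_mul]
    rw [← hJ] at e1
    linear_combination e1 - J * e2
  refine ⟨Ψ, iΨ, fun u hu hub => ?_⟩
  rw [← integral_sub_Lop hα iΨ hu hub]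
  have e3 : ∫ x, (Ψ x - Lop α Ψ x) • u x ∂leb = ∫ x, (ζ x - J * h x) • u x ∂leb :=
    integral_congr_ae (by filter_upwards [ae_leb_mem] with x hx; rw [hPΨ x hx])
  have ia : Integrable (fun x => φ x - I * h x) leb := hφ.sub (hd.integrable.const_mul _)
  have ib : Integrable (fun x => ζ x - J * h x) leb := hζi.sub (hd.integrable.const_mul _)
  rw [e3, ← integral_sub (integrable_smul_of_bdd ia hu hub) (integrable_smul_of_bdd ib hu hub)]
  simp only [← sub_smul]
  refine (norm_integral_smul_le (ia.sub ib) hub).trans ?_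
  rw [one_mul]
  calc ∫ x, |φ x - I * h x - (ζ x - J * h x)| ∂leb
      ≤ ∫ x, (|φ x - ζ x| + |I - J| * h x) ∂leb := by
        refine integral_mono_ae (ia.sub ib).abs
          ((hφ.sub hζi).abs.add (hd.integrable.const_mul _)) ?_
        filter_upwards [ae_leb_mem] with x hx
        have h0 := hd.reg.nonneg x hx
        calc |φ x - I * h x - (ζ x - J * h x)| = |(φ x - ζ x) + -((I - J) * h x)| := by
              congr 1; ring
          _ ≤ |φ x - ζ x| + |-((I - J) * h x)| := abs_add_le _ _
          _ = _ := by rw [abs_neg, abs_mul, abs_of_nonneg h0]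
    _ = ∫ x, |φ x - ζ x| ∂leb + |I - J| := by
        have i3 : Integrable (fun x => |φ x - ζ x|) leb := (hφ.sub hζi).abs
        rw [integral_add i3 (hd.integrable.const_mul _), integral_const_mul,
          hd.integral, mul_one]
    _ ≤ ε := by linarith

/-- The average of `u` over the first `k` iterates of the map. -/
noncomputable def avg (α : ℝ) (k : ℕ) (u : ℝ → ℂ) (x : ℝ) : ℂ :=
  (k : ℂ)⁻¹ * ∑ i ∈ Finset.range k, u ((lsv α)^[i] x)

lemma measurable_avg {k : ℕ} {u : ℝ → ℂ} (hu : Measurable u) : Measurable (avg α k u) := by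
  unfold avg
  refine (Finset.measurable_sum _ fun i _ => ?_).const_mul _
  exact hu.comp (measurable_lsv.iterate i)

lemma norm_avg_le {k : ℕ} {u : ℝ → ℂ} (hub : ∀ x, ‖u x‖ ≤ 1) (x : ℝ) : ‖avg α k u x‖ ≤ 1 := by
  unfold avg
  rw [norm_mul, norm_inv, Complex.norm_natCast]
  have : ‖∑ i ∈ Finset.range k, u ((lsv α)^[i] x)‖ ≤ k := by
    refine (norm_sum_le _ _).trans ?_
    refine (Finset.sum_le_sum fun i _ => hub _).trans ?_
    simp
  exact inv_mul_le_one_of_le₀ this (Nat.cast_nonneg k)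

lemma norm_avg_sub_le {k : ℕ} {u : ℝ → ℂ} (hub : ∀ x, ‖u x‖ ≤ 1) (x : ℝ) :
    ‖avg α k u x - avg α k u (lsv α x)‖ ≤ (k : ℝ)⁻¹ * 2 := by
  unfold avg
  rw [← mul_sub, norm_mul, norm_inv, Complex.norm_natCast]
  have : ∑ i ∈ Finset.range k, u ((lsv α)^[i] x) - ∑ i ∈ Finset.range k, u ((lsv α)^[i] (lsv α x))
      = u x - u ((lsv α)^[k] x) := by
    rw [← Finset.sum_sub_distrib]
    have := Finset.sum_range_sub' (fun i => u ((lsv α)^[i] x)) k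
    simpa [Function.iterate_succ_apply] using this
  rw [this]
  gcongr
  exact (norm_sub_le _ _).trans (by linarith [hub x, hub ((lsv α)^[k] x)])

/-- If integration against `ρ` is invariant under the map, so is the integral of averages. -/
lemma integral_avg {ρ : ℝ → ℝ} (hρ : Integrable ρ leb)
    (hinv : ∀ v : ℝ → ℂ, Measurable v → (∀ x, ‖v x‖ ≤ 1) →
      ∫ x, ρ x • v (lsv α x) ∂leb = ∫ x, ρ x • v x ∂leb)
    {k : ℕ} (hk : k ≠ 0) {u : ℝ → ℂ} (hu : Measurable u) (hub : ∀ x, ‖u x‖ ≤ 1) :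
    ∫ x, ρ x • avg α k u x ∂leb = ∫ x, ρ x • u x ∂leb := by
  have hi : ∀ i, ∫ x, ρ x • u ((lsv α)^[i] x) ∂leb = ∫ x, ρ x • u x ∂leb := by
    intro i
    induction i with
    | zero => rfl
    | succ i ih =>
      rw [← ih, ← hinv (fun x => u ((lsv α)^[i] x)) (hu.comp (measurable_lsv.iterate i))
        fun x => hub _]
      simp only [Function.iterate_succ_apply]
  have hInt : ∀ i, Integrable (fun x => ρ x • u ((lsv α)^[i] x)) leb := fun i =>
    integrable_smul_of_bdd hρ (hu.comp (measurable_lsv.iterate i)) (C := 1) fun x => hub _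
  have e : ∀ x, ρ x • avg α k u x = (k : ℂ)⁻¹ * ∑ i ∈ Finset.range k, ρ x • u ((lsv α)^[i] x) := by
    intro x
    rw [avg, ← Finset.smul_sum, mul_smul_comm]
  simp only [e]
  rw [integral_const_mul, integral_finsetSum _ fun i _ => hInt i]
  simp only [hi]
  rw [Finset.sum_const, Finset.card_range, nsmul_eq_mul, ← mul_assoc,
    inv_mul_cancel₀ (by exact_mod_cast hk), one_mul]

lemma density_invariant {r K : ℝ} {h : ℝ → ℝ} (hα : 0 < α) (hd : Density α r K h) (v : ℝ → ℂ)
    (hv : Measurable v) (hvb : ∀ x, ‖v x‖ ≤ 1) :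
    ∫ x, h x • v (lsv α x) ∂leb = ∫ x, h x • v x ∂leb := by
  rw [integral_comp hα h v (integrable_smul_of_bdd hd.integrable (hv.comp measurable_lsv) (C := 1)
    fun x => hvb _)]
  exact integral_congr_ae (by filter_upwards [ae_leb_mem] with x hx; rw [hd.fixed x hx])

/-- Uniqueness of the absolutely continuous invariant probability measure. -/
theorem rnDeriv_eq {r K : ℝ} {h : ℝ → ℝ} (hα : 0 < α) (hα2 : α < 1 / 2) (hr0 : 0 < r)
    (hr1 : r ≤ 1) (hK : 2 ≤ K * r) (hd : Density α r K h) {m : Measure ℝ} [IsProbabilityMeasure m]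
    (hac : m ≪ leb) (hT : MeasurePreserving (lsv α) m m) :
    (fun x => (m.rnDeriv leb x).toReal) =ᵐ[leb] h := by
  set ρ : ℝ → ℝ := fun x => (m.rnDeriv leb x).toReal with hρdef
  have hρ : Integrable ρ leb := Measure.integrable_toReal_rnDeriv
  have hρm : ∀ v : ℝ → ℂ, ∫ x, ρ x • v x ∂leb = ∫ x, v x ∂m := fun v => integral_rnDeriv_smul hac
  have hρ1 : ∫ x, ρ x ∂leb = 1 := by
    have := integral_rnDeriv_smul (μ := m) (ν := leb) (f := fun _ => (1 : ℝ)) hac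
    simpa using this
  have hinv : ∀ v : ℝ → ℂ, Measurable v → (∀ x, ‖v x‖ ≤ 1) →
      ∫ x, ρ x • v (lsv α x) ∂leb = ∫ x, ρ x • v x ∂leb := fun v hv _ => by
    rw [hρm (fun x => v (lsv α x)), hρm v]
    have := integral_map (μ := m) hT.measurable.aemeasurable
      (f := v) hv.aestronglyMeasurable
    rw [hT.map_eq] at this
    exact this.symm
  have key : ∀ u : ℝ → ℂ, Measurable u → (∀ x, ‖u x‖ ≤ 1) →
      ∫ x, ρ x • u x ∂leb = ∫ x, h x • u x ∂leb := by
    intro u hu hub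
    rw [← sub_eq_zero, ← norm_le_zero_iff]
    refine le_of_forall_pos_le_add fun ε hε => ?_
    rw [zero_add]
    obtain ⟨Φ, hΦ, hΦu⟩ := approx_coboundary hα hα2 hr0 hr1 hK hd hρ hε
    have hk : ∀ k : ℕ, k ≠ 0 → ‖∫ x, ρ x • u x ∂leb - ∫ x, h x • u x ∂leb‖ ≤
        ε + (k : ℝ)⁻¹ * (2 * ∫ x, |Φ x| ∂leb) := by
      intro k hk
      have h1 := hΦu (avg α k u) (measurable_avg hu) (norm_avg_le hub)
      rw [hρ1] at h1
      simp only [one_mul, sub_smul] at h1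
      rw [integral_sub (integrable_smul_of_bdd hρ (measurable_avg hu) (norm_avg_le hub))
        (integrable_smul_of_bdd hd.integrable (measurable_avg hu) (norm_avg_le hub)),
        integral_avg hρ hinv hk hu hub,
        integral_avg hd.integrable (density_invariant hα hd) hk hu hub] at h1
      have h2 := norm_integral_smul_le hΦ (norm_avg_sub_le (α := α) (k := k) hub)
      have h3 := norm_le_norm_add_norm_sub' (∫ x, ρ x • u x ∂leb - ∫ x, h x • u x ∂leb)
        (∫ x, Φ x • (avg α k u x - avg α k u (lsv α x)) ∂leb)
      linarith
    have hlim : Tendsto (fun k : ℕ => ε + (k : ℝ)⁻¹ * (2 * ∫ x, |Φ x| ∂leb)) atTop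
        (𝓝 (ε + 0 * (2 * ∫ x, |Φ x| ∂leb))) :=
      ((tendsto_inv_atTop_nhds_zero_nat (𝕜 := ℝ)).mul_const _).const_add _
    rw [zero_mul, add_zero] at hlim
    exact ge_of_tendsto hlim (by filter_upwards [eventually_ne_atTop 0] with k hk' using hk k hk')
  refine hρ.ae_eq_of_forall_setIntegral_eq _ _ hd.integrable fun s hs _ => ?_
  have h1 := key (s.indicator 1) (measurable_one.indicator hs) fun x => by
    simp only [indicator]; split_ifs <;> simp
  have e : ∀ φ : ℝ → ℝ, ∫ x, φ x • (s.indicator 1 x : ℂ) ∂leb = ((∫ x in s, φ x ∂leb : ℝ) : ℂ) := by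
    intro φ
    rw [← integral_indicator hs, ← integral_complex_ofReal]
    congr 1
    ext x
    simp only [indicator]; split_ifs <;> simp
  rw [e, e] at h1
  exact_mod_cast h1

end

/-! ### The martingale–coboundary decomposition -/

section

variable {α : ℝ}

lemma measurable_indicator_of_continuousOn {φ : ℝ → ℝ} (h : ContinuousOn φ (Ioc 0 1)) :
    Measurable ((Ioc (0 : ℝ) 1).indicator φ) := by
  classical
  have := ContinuousOn.measurable_piecewise h (continuousOn_const (c := (0 : ℝ)) (s := (Ioc 0 1)ᶜ))
    measurableSet_Ioc
  convert this using 1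
  ext x
  simp [indicator, piecewise]

lemma Lop_indicator (hα : 0 < α) (φ : ℝ → ℝ) {x : ℝ} (hx : x ∈ Ioc (0 : ℝ) 1) :
    Lop α ((Ioc (0 : ℝ) 1).indicator φ) x = Lop α φ x := by
  simp only [Lop, L0, L1]
  rw [indicator_of_mem (y0_mem_one hα hx), indicator_of_mem (y1_mem_one hx)]

lemma indicator_ae_eq (φ : ℝ → ℝ) : (Ioc (0 : ℝ) 1).indicator φ =ᵐ[leb] φ := by
  filter_upwards [ae_leb_mem] with x hx
  rw [indicator_of_mem hx]

lemma Reg.indicator {r K : ℝ} {φ : ℝ → ℝ} (h : Reg r K φ) :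
    Reg r K ((Ioc (0 : ℝ) 1).indicator φ) where
  nonneg x hx := by rw [indicator_of_mem hx]; exact h.nonneg x hx
  osc x hx y hy := by rw [indicator_of_mem hx, indicator_of_mem hy]; exact h.osc x hx y hy

lemma exists_measurable_density {r K : ℝ} (hα : 0 < α) (hα1 : α < 1) (hr0 : 0 < r) (hr1 : r ≤ 1)
    (hK : 2 ≤ K * r) : ∃ h, Density α r K h ∧ Measurable h := by
  obtain ⟨h, hd⟩ := exists_density (α := α) hα hα1 hr0 hr1 hK
  obtain ⟨B, hB⟩ := hd.le
  obtain ⟨c, hc, hcb⟩ := hd.ge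
  refine ⟨(Ioc (0 : ℝ) 1).indicator h, ⟨hd.reg.indicator, ⟨B, fun x hx => ?_⟩, ⟨c, hc, fun x hx => ?_⟩,
    fun x hx => ?_, hd.integrable.congr (indicator_ae_eq h).symm, ?_⟩,
    measurable_indicator_of_continuousOn (hd.reg.continuousOn hr0)⟩
  · rw [indicator_of_mem hx]; exact hB x hx
  · rw [indicator_of_mem hx]; exact hcb x hx
  · rw [Lop_indicator hα _ hx, indicator_of_mem hx, hd.fixed x hx]
  · rw [integral_congr_ae (indicator_ae_eq h), hd.integral]

section

variable {E : Type*} [NormedAddCommGroup E] [NormedSpace ℝ E] {h : ℝ → ℝ} {m : Measure ℝ}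
  [IsProbabilityMeasure m]

lemma integral_m (hac : m ≪ leb) (hρ : (fun x => (m.rnDeriv leb x).toReal) =ᵐ[leb] h) (F : ℝ → E) :
    ∫ x, F x ∂m = ∫ x, h x • F x ∂leb := by
  rw [← integral_rnDeriv_smul hac]
  exact integral_congr_ae (by filter_upwards [hρ] with x hx; rw [← hx])

lemma integrable_m (hac : m ≪ leb) (hρ : (fun x => (m.rnDeriv leb x).toReal) =ᵐ[leb] h)
    (F : ℝ → E) : Integrable F m ↔ Integrable (fun x => h x • F x) leb := by
  rw [← integrable_rnDeriv_smul_iff hac]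
  exact integrable_congr (by filter_upwards [hρ] with x hx; rw [← hx])

end

/-- The Poisson equation with right-hand side `f h` for Hölder `f` of zero average. -/
lemma poisson_holder {r K C : ℝ} {h f : ℝ → ℝ} (hα : 0 < α) (hα2 : α < 1 / 2) (hr0 : 0 < r)
    (hr1 : r ≤ 1) (hK : 2 ≤ K * r) (hd : Density α r K h) (hf : Measurable f)
    (hfb : ∀ x ∈ Ioc (0 : ℝ) 1, |f x| ≤ C)
    (hfh : ∀ x ∈ Ioc (0 : ℝ) 1, ∀ y ∈ Ioc (0 : ℝ) 1, |f x - f y| ≤ C * |x - y| ^ r)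
    (hf0 : ∫ x, h x * f x ∂leb = 0) :
    ∃ (Φ : ℝ → ℝ) (B : ℝ), Measurable Φ ∧ (∀ x ∈ Ioc (0 : ℝ) 1, |Φ x| ≤ B * x ^ (-(2 * α))) ∧
      ∀ x ∈ Ioc (0 : ℝ) 1, Φ x - Lop α Φ x = h x * f x := by
  have hα1 : α ≤ 1 := by linarith
  have one_mem : (1 : ℝ) ∈ Ioc (0 : ℝ) 1 := by norm_num
  have hC : 0 ≤ C := (abs_nonneg _).trans (hfb 1 one_mem)
  obtain ⟨Bh, hBh⟩ := hd.le
  obtain ⟨Φ1, hr1', ⟨B1, hB1⟩, -, hP1⟩ := poisson (α := α) (s := 2 * α) (C := Bh * (3 * C)) hα hα1 hr0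
    hr1 (by linarith : 2 ≤ (K + 1) * r) (by linarith) (by linarith)
    (hd.reg.mul (Reg.of_holder hr0 hfb hfh)) (fun x hx => by
      rw [show α - 2 * α = -α by ring]
      have h1 := hBh x hx
      have h2 := hd.reg.nonneg x hx
      have h3 := abs_le.1 (hfb x hx)
      calc h x * (f x + 2 * C) ≤ (Bh * x ^ (-α)) * (3 * C) :=
            mul_le_mul h1 (by linarith) (by linarith) (h2.trans h1)
        _ = _ := by ring)
  obtain ⟨Φ2, hr2', ⟨B2, hB2⟩, -, hP2⟩ := poisson (α := α) (s := 2 * α) (C := Bh) hα hα1 hr0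
    hr1 hK (by linarith) (by linarith) hd.reg (fun x hx => by
      rw [show α - 2 * α = -α by ring]; exact hBh x hx)
  have hfi : Integrable (fun x => h x * f x) leb :=
    hd.integrable.mul_bdd (c := C) hf.aestronglyMeasurable
      (by filter_upwards [ae_leb_mem] with x hx using hfb x hx)
  have hI : ∫ x, h x * (f x + 2 * C) ∂leb = 2 * C := by
    simp only [mul_add]
    rw [integral_add hfi (hd.integrable.mul_const _), hf0, integral_mul_const, hd.integral]
    ring
  let Φ : ℝ → ℝ := fun x => Φ1 x - 2 * C * Φ2 x
  refine ⟨(Ioc (0 : ℝ) 1).indicator Φ, B1 + 2 * C * B2, measurable_indicator_of_continuousOn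
    ((hr1'.continuousOn hr0).sub ((hr2'.continuousOn hr0).const_smul (2 * C))),
    fun x hx => ?_, fun x hx => ?_⟩
  · rw [indicator_of_mem hx]
    have a1 := hr1'.nonneg x hx
    have a2 := mul_nonneg (mul_nonneg zero_le_two hC) (hr2'.nonneg x hx)
    have b1 := hB1 x hx
    have b2 := mul_le_mul_of_nonneg_left (hB2 x hx) (mul_nonneg zero_le_two hC)
    rw [abs_le]
    constructor <;> simp only [Φ] <;> nlinarith
  · rw [Lop_indicator hα _ hx, indicator_of_mem hx]
    have e1 := hP1 x hx
    have e2 := hP2 x hx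
    rw [hd.integral] at e2
    rw [hI] at e1
    simp only [Φ]
    rw [Lop_sub, Lop_const_mul]
    linear_combination e1 - 2 * C * e2

set_option maxHeartbeats 1000000 in
/-- Gordin's decomposition `f = M + g ∘ T - g` with `M` a square integrable reverse martingale
difference, the last conclusion being the martingale property. Although `g` need not be square
integrable, `M` is: with `G = g + f`, on a fibre `M` only sees the difference of `G` at the two
preimages, weighted by their conditional probabilities. -/
theorem decomposition {r K C : ℝ} {h f : ℝ → ℝ} (hα : 0 < α) (hα2 : α < 1 / 2) (hr0 : 0 < r)
    (hr1 : r ≤ 1) (hK : 2 ≤ K * r) (hd : Density α r K h) (hhm : Measurable h)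
    {m : Measure ℝ} [IsProbabilityMeasure m]
    (hac : m ≪ leb) (hρ : (fun x => (m.rnDeriv leb x).toReal) =ᵐ[leb] h)
    (hT : MeasurePreserving (lsv α) m m) (hf : Measurable f)
    (hfb : ∀ x ∈ Ioc (0 : ℝ) 1, |f x| ≤ C)
    (hfh : ∀ x ∈ Ioc (0 : ℝ) 1, ∀ y ∈ Ioc (0 : ℝ) 1, |f x - f y| ≤ C * |x - y| ^ r)
    (hf0 : ∫ x, f x ∂m = 0) :
    ∃ g M : ℝ → ℝ, Measurable g ∧ Measurable M ∧ MemLp M 2 m ∧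
      (∀ x, f x = M x + g (lsv α x) - g x) ∧
      ∀ u : ℝ → ℂ, Measurable u → (∀ x, ‖u x‖ ≤ 1) → ∫ x, M x • u (lsv α x) ∂m = 0 := by
  have hf0' : ∫ x, h x * f x ∂leb = 0 := by rw [← hf0, integral_m hac hρ]; rfl
  obtain ⟨Φ, B, hΦm, hΦb, hΦ⟩ := poisson_holder hα hα2 hr0 hr1 hK hd hf hfb hfh hf0'
  obtain ⟨Bh, hBh⟩ := hd.le
  obtain ⟨c, hc, hcb⟩ := hd.ge
  have one_mem : (1 : ℝ) ∈ Ioc (0 : ℝ) 1 := by norm_num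
  have hB0 : 0 ≤ B := by simpa using (abs_nonneg _).trans (hΦb 1 one_mem)
  have hBh0 : 0 ≤ Bh := by simpa using (hd.reg.nonneg _ one_mem).trans (hBh 1 one_mem)
  have hpos : ∀ x ∈ Ioc (0 : ℝ) 1, 0 < h x := fun x hx =>
    lt_of_lt_of_le (mul_pos hc (Real.rpow_pos_of_pos hx.1 _)) (hcb x hx)
  have hΦi : Integrable Φ leb :=
    integrable_of_abs_le (s := -(2 * α)) (by linarith) hΦm.aestronglyMeasurable hΦb
  let G : ℝ → ℝ := fun x => Φ x / h x
  let g : ℝ → ℝ := fun x => G x - f x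
  let M : ℝ → ℝ := fun x => G x - g (lsv α x)
  have hGm : Measurable G := hΦm.div hhm
  have hgm : Measurable g := hGm.sub hf
  have hMm : Measurable M := hGm.sub (hgm.comp measurable_lsv)
  have hhG : ∀ x ∈ Ioc (0 : ℝ) 1, h x * G x = Φ x := fun x hx => by
    simp only [G]; field_simp [(hpos x hx).ne']
  have hhg : ∀ x ∈ Ioc (0 : ℝ) 1, h x * g x = Lop α Φ x := fun x hx => by
    simp only [g]
    rw [mul_sub, hhG x hx]
    linarith [hΦ x hx]
  have hGi : Integrable G m := by
    rw [integrable_m hac hρ]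
    exact hΦi.congr (by filter_upwards [ae_leb_mem] with x hx using (hhG x hx).symm)
  have hgi : Integrable g m := by
    rw [integrable_m hac hρ]
    exact (integrable_Lop hα hΦi).congr
      (by filter_upwards [ae_leb_mem] with x hx using (hhg x hx).symm)
  have hGb : ∀ x ∈ Ioc (0 : ℝ) 1, |G x| ≤ B / c * x ^ (-α) := by
    intro x hx
    have h1 := hΦb x hx
    rw [← hhG x hx, abs_mul, abs_of_pos (hpos x hx)] at h1
    have h2 : x ^ (-(2 * α)) = x ^ (-α) * x ^ (-α) := by
      rw [← Real.rpow_add hx.1]; congr 1; ring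
    have hx0 : 0 < x ^ (-α) := Real.rpow_pos_of_pos hx.1 _
    have h3 : c * x ^ (-α) * |G x| ≤ B * (x ^ (-α) * x ^ (-α)) := by
      rw [← h2]
      exact (mul_le_mul_of_nonneg_right (hcb x hx) (abs_nonneg _)).trans h1
    have h4 : c * |G x| ≤ B * x ^ (-α) := by
      refine le_of_mul_le_mul_left ?_ hx0
      linarith
    rw [div_mul_eq_mul_div, le_div_iff₀ hc]
    linarith
  -- Square integrability of `M` is read off after pushing `h M²` forward along each branch.
  set D := B / c * 2 ^ α with hD
  have hD0 : 0 ≤ D := by positivity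
  have hfib : ∀ x ∈ Ioc (0 : ℝ) 1,
      |L0 α (fun y => h y * M y ^ 2) x| ≤ (Bh * 2 ^ α * (2 * D) ^ 2) * x ^ (-(2 * α)) ∧
      |L1 (fun y => h y * M y ^ 2) x| ≤ (Bh * 2 ^ α * (2 * D) ^ 2) * x ^ (-(2 * α)) := by
    intro x hx
    have m0 := y0_mem hα hx
    have m0' := y0_mem_one hα hx
    have m1 := y1_mem hx
    have m1' := y1_mem_one hx
    have t0 : lsv α (y0 α x) = x := by rw [lsv_left m0.2, T0_y0 hα hx]
    have t1 : lsv α ((1 + x) / 2) = x := by rw [lsv_right m1.1]; ring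
    have hx2 : x / 2 ≤ y0 α x := by
      have e := T0_y0 hα hx
      have := lw_le_one hα (Ioc_subset_Icc_self m0)
      rw [T0] at e
      nlinarith [m0.1]
    have hDpos := D0_pos hα m0.1.le
    have hfix := hd.fixed x hx
    have hgx := hhg x hx
    simp only [Lop, L0, L1] at hfix hgx ⊢
    set x0 := y0 α x
    set x1 := (1 + x) / 2
    rw [← hhG x0 m0', ← hhG x1 m1'] at hgx
    set a := h x0 / D0 α x0 with ha
    set b := h x1 / 2 with hb
    have ha0 : 0 < a := div_pos (hpos _ m0') hDpos
    have hb0 : 0 < b := half_pos (hpos _ m1')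
    have hgx' : (a + b) * g x = a * G x0 + b * G x1 := by
      rw [hfix, hgx, ha, hb]; ring
    have M0 : M x0 = b / (a + b) * (G x0 - G x1) := by
      simp only [M, t0]
      have : g x = (a * G x0 + b * G x1) / (a + b) := by
        rw [← hgx']; field_simp
      rw [this]; field_simp; ring
    have M1 : M x1 = -(a / (a + b) * (G x0 - G x1)) := by
      simp only [M, t1]
      have : g x = (a * G x0 + b * G x1) / (a + b) := by
        rw [← hgx']; field_simp
      rw [this]; field_simp; ring
    have hx20 : 0 < x / 2 := half_pos hx.1
    have hpow : ∀ z, x / 2 ≤ z → z ≤ 1 → |G z| ≤ D * x ^ (-α) := by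
      intro z hz hz1
      refine (hGb z ⟨hx20.trans_le hz, hz1⟩).trans ?_
      have h1 : z ^ (-α) ≤ (x / 2) ^ (-α) :=
        Real.rpow_le_rpow_of_nonpos hx20 hz (by linarith)
      have h2 : (x / 2) ^ (-α) = 2 ^ α * x ^ (-α) := by
        rw [Real.div_rpow hx.1.le two_pos.le, Real.rpow_neg two_pos.le, div_inv_eq_mul, mul_comm]
      rw [hD, mul_assoc, ← h2]
      exact mul_le_mul_of_nonneg_left h1 (by positivity)
    have hG0 := abs_le.1 (hpow x0 hx2 m0'.2)
    have hG1 := abs_le.1 (hpow x1 (by linarith [m1.1, hx.2]) m1'.2)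
    have hbb : b ≤ Bh * 2 ^ α := by
      have h1 := hBh x1 m1'
      have h2 : x1 ^ (-α) ≤ 2 ^ α := by
        rw [Real.rpow_neg m1'.1.le, ← Real.inv_rpow m1'.1.le]
        apply Real.rpow_le_rpow (inv_nonneg.2 m1'.1.le) _ hα.le
        rw [inv_le_comm₀ m1'.1 two_pos]
        linarith [m1.1]
      have h3 : Bh * x1 ^ (-α) ≤ Bh * 2 ^ α := by gcongr
      have h4 := hpos x1 m1'
      rw [hb]
      linarith
    set P := x ^ (-α) with hP
    have hP2 : x ^ (-(2 * α)) = P ^ 2 := by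
      rw [hP, pow_two, ← Real.rpow_add hx.1]; congr 1; ring
    have hdiff : (G x0 - G x1) ^ 2 ≤ (2 * D * P) ^ 2 := by
      apply sq_le_sq'
      · linarith [hG0.1, hG1.2]
      · linarith [hG0.2, hG1.1]
    have hmain : b * (G x0 - G x1) ^ 2 ≤ (Bh * 2 ^ α * (2 * D) ^ 2) * x ^ (-(2 * α)) := by
      rw [hP2]
      calc b * (G x0 - G x1) ^ 2 ≤ (Bh * 2 ^ α) * (2 * D * P) ^ 2 :=
            mul_le_mul hbb hdiff (sq_nonneg _) (by positivity)
        _ = _ := by ring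
    have hab : a * b ≤ (a + b) ^ 2 := by nlinarith
    have haa : a * a ≤ (a + b) ^ 2 := by nlinarith
    have hsq := sq_nonneg (G x0 - G x1)
    constructor
    · have e : h x0 * M x0 ^ 2 / D0 α x0 = (a * b) / (a + b) ^ 2 * (b * (G x0 - G x1) ^ 2) := by
        rw [M0, mul_div_right_comm, ← ha]; field_simp
      rw [e, abs_of_nonneg (by positivity)]
      refine le_trans (mul_le_of_le_one_left (by positivity) ?_) hmain
      exact div_le_one_of_le₀ hab (by positivity)
    · have e : h x1 * M x1 ^ 2 / 2 = (a * a) / (a + b) ^ 2 * (b * (G x0 - G x1) ^ 2) := by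
        rw [M1, mul_div_right_comm, ← hb]; field_simp
      rw [e, abs_of_nonneg (by positivity)]
      refine le_trans (mul_le_of_le_one_left (by positivity) ?_) hmain
      exact div_le_one_of_le₀ haa (by positivity)
  have hhM : Measurable fun y => h y * M y ^ 2 := hhm.mul (hMm.pow_const 2)
  have hM2 : MemLp M 2 m := by
    rw [memLp_two_iff_integrable_sq hMm.aestronglyMeasurable, integrable_m hac hρ]
    refine integrable_of_L0_L1 hα
      (integrable_of_abs_le (s := -(2 * α)) (by linarith) ?_ fun x hx => (hfib x hx).1)
      (integrable_of_abs_le (s := -(2 * α)) (by linarith) ?_ fun x hx => (hfib x hx).2)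
    · have hD0m : Measurable (D0 α) := by unfold D0 lw; fun_prop
      exact ((hhM.comp (measurable_y0)).div (hD0m.comp (measurable_y0))).aestronglyMeasurable
    · have : Measurable fun x : ℝ => (1 + x) / 2 := by fun_prop
      exact ((hhM.comp this).div_const 2).aestronglyMeasurable
  refine ⟨g, M, hgm, hMm, hM2, fun x => by simp only [M, g]; ring, fun u hu hub => ?_⟩
  have huT : Measurable fun x => u (lsv α x) := hu.comp measurable_lsv
  have i1 : Integrable (fun x => G x • u (lsv α x)) m :=
    integrable_smul_of_bdd hGi huT (C := 1) fun x => hub _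
  have i2 : Integrable (fun x => g x • u x) m := integrable_smul_of_bdd hgi hu hub
  have i3 : Integrable (fun x => g (lsv α x) • u (lsv α x)) m := hT.integrable_comp_of_integrable i2
  have e1 : ∫ x, g (lsv α x) • u (lsv α x) ∂m = ∫ x, g x • u x ∂m := by
    have := integral_map (μ := m) hT.measurable.aemeasurable (f := fun x => g x • u x)
      (by rw [hT.map_eq]; exact i2.aestronglyMeasurable)
    rw [hT.map_eq] at this
    exact this.symm
  have e2 : ∫ x, G x • u (lsv α x) ∂m = ∫ x, g x • u x ∂m := by
    rw [integral_m hac hρ, integral_m hac hρ]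
    have a1 : ∫ x, h x • G x • u (lsv α x) ∂leb = ∫ x, Φ x • u (lsv α x) ∂leb :=
      integral_congr_ae (by
        filter_upwards [ae_leb_mem] with x hx
        rw [smul_smul, hhG x hx])
    have a2 : ∫ x, h x • g x • u x ∂leb = ∫ x, Lop α Φ x • u x ∂leb :=
      integral_congr_ae (by
        filter_upwards [ae_leb_mem] with x hx
        rw [smul_smul, hhg x hx])
    rw [a1, a2]
    exact integral_comp hα Φ u (integrable_smul_of_bdd hΦi huT (C := 1) fun x => hub _)
  simp only [M, sub_smul]
  rw [integral_sub i1 i3, e1, e2, sub_self]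

/-- Every integrable function of zero average is, modulo a small error, a coboundary when tested
against bounded functions. -/
theorem approx_coboundary_m {r K : ℝ} {h : ℝ → ℝ} (hα : 0 < α) (hα2 : α < 1 / 2) (hr0 : 0 < r)
    (hr1 : r ≤ 1) (hK : 2 ≤ K * r) (hd : Density α r K h)
    {m : Measure ℝ} [IsProbabilityMeasure m]
    (hac : m ≪ leb) (hρ : (fun x => (m.rnDeriv leb x).toReal) =ᵐ[leb] h)
    {F : ℝ → ℝ} (hF : Integrable F m) {ε : ℝ} (hε : 0 < ε) :
    ∃ G : ℝ → ℝ, Integrable G m ∧ ∀ u : ℝ → ℂ, Measurable u → (∀ x, ‖u x‖ ≤ 1) →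
      ‖∫ x, (F x - ∫ z, F z ∂m) • u x ∂m - ∫ x, G x • (u x - u (lsv α x)) ∂m‖ ≤ ε := by
  obtain ⟨c, hc, hcb⟩ := hd.ge
  have hpos : ∀ x ∈ Ioc (0 : ℝ) 1, 0 < h x := fun x hx =>
    lt_of_lt_of_le (mul_pos hc (Real.rpow_pos_of_pos hx.1 _)) (hcb x hx)
  have hi : Integrable (fun x => h x * F x) leb := (integrable_m hac hρ F).1 hF
  obtain ⟨Φ, hΦ, hΦu⟩ := approx_coboundary hα hα2 hr0 hr1 hK hd hi hε
  have e : ∀ x ∈ Ioc (0 : ℝ) 1, h x * (Φ x / h x) = Φ x := fun x hx => by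
    field_simp [(hpos x hx).ne']
  refine ⟨fun x => Φ x / h x, ?_, fun u hu hub => ?_⟩
  · rw [integrable_m hac hρ]
    exact hΦ.congr (by filter_upwards [ae_leb_mem] with x hx using (e x hx).symm)
  · convert hΦu u hu hub using 3
    · rw [integral_m hac hρ, integral_m hac hρ F]
      congr 1
      ext x
      rw [smul_smul]
      congr 1
      simp only [smul_eq_mul]
      ring
    · rw [integral_m hac hρ]
      refine integral_congr_ae ?_
      filter_upwards [ae_leb_mem] with x hx
      rw [smul_smul, e x hx]

end

/-! ### Central limit theorem for reverse martingale differences -/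

section

variable {α : ℝ}

/-- The character `x ↦ e^{ix}` of the real line. -/
noncomputable def ee (x : ℝ) : ℂ := Complex.exp (x * Complex.I)

lemma norm_ee (x : ℝ) : ‖ee x‖ = 1 := Complex.norm_exp_ofReal_mul_I x

lemma ee_zero : ee 0 = 1 := by simp [ee]

lemma ee_add (x y : ℝ) : ee (x + y) = ee x * ee y := by
  rw [ee, ee, ee, ← Complex.exp_add]; push_cast; ring_nf

lemma continuous_ee : Continuous ee := by unfold ee; fun_prop

lemma norm_ee_sub_one_le (x : ℝ) : ‖ee x - 1‖ ≤ |x| := by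
  have := Real.norm_exp_I_mul_ofReal_sub_one_le (x := x)
  rwa [mul_comm] at this

lemma norm_ee_sub_le (x y : ℝ) : ‖ee x - ee y‖ ≤ |x - y| := by
  have : ee x - ee y = ee y * (ee (x - y) - 1) := by
    rw [mul_sub, ← ee_add, mul_one]; congr 2; ring
  rw [this, norm_mul, norm_ee, one_mul]
  exact norm_ee_sub_one_le _

/-- The second order Taylor remainder of `x ↦ e^{ix}`. -/
noncomputable def rem (x : ℝ) : ℂ := ee x - 1 - x * Complex.I + (x : ℂ) ^ 2 / 2

lemma continuous_rem : Continuous rem := by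
  unfold rem
  exact ((continuous_ee.sub continuous_const).sub (by fun_prop)).add (by fun_prop)

lemma norm_rem_le_cube {x : ℝ} (hx : |x| ≤ 1) : ‖rem x‖ ≤ |x| ^ 3 := by
  have hn : ‖(x : ℂ) * Complex.I‖ = |x| := by simp
  have h := Complex.exp_bound (x := x * Complex.I) (by rw [hn]; exact hx) (n := 3) (by norm_num)
  rw [hn] at h
  have e : Complex.exp (x * Complex.I) -
      ∑ m ∈ Finset.range 3, ((x : ℂ) * Complex.I) ^ m / (m.factorial : ℂ) = rem x := by
    simp only [Finset.sum_range_succ, Finset.sum_range_zero, rem, ee, mul_pow, Complex.I_sq]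
    simp [Nat.factorial]
    ring
  rw [e] at h
  refine h.trans ?_
  have : 0 ≤ |x| ^ 3 := by positivity
  norm_num [Nat.factorial]
  nlinarith

lemma norm_rem_le_sq (x : ℝ) : ‖rem x‖ ≤ 4 * x ^ 2 := by
  rcases le_or_gt |x| 1 with hx | hx
  · refine (norm_rem_le_cube hx).trans ?_
    rw [← sq_abs x]
    have := abs_nonneg x
    nlinarith [sq_nonneg |x|]
  · have h1 : ‖rem x‖ ≤ 1 + 1 + |x| + x ^ 2 / 2 := by
      unfold rem
      refine (norm_add_le _ _).trans ?_
      have a : ‖ee x - 1 - x * Complex.I‖ ≤ 1 + 1 + |x| := by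
        refine (norm_sub_le _ _).trans (add_le_add ((norm_sub_le _ _).trans ?_) ?_)
        · simp [norm_ee]
        · simp
      have b : ‖(x : ℂ) ^ 2 / 2‖ = x ^ 2 / 2 := by simp
      rw [b]
      linarith
    rw [← sq_abs x] at h1 ⊢
    nlinarith

section CLT

variable {T : ℝ → ℝ} {m : Measure ℝ} [IsProbabilityMeasure m]

lemma integral_comp_mp (hT : MeasurePreserving T m m) {F : ℝ → ℂ}
    (hF : AEStronglyMeasurable F m) : ∫ x, F (T x) ∂m = ∫ x, F x ∂m := by
  have := integral_map (μ := m) hT.measurable.aemeasurable (f := F) (by rwa [hT.map_eq])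
  rw [hT.map_eq] at this
  exact this.symm

lemma integral_comp_mp_real (hT : MeasurePreserving T m m) {F : ℝ → ℝ}
    (hF : AEStronglyMeasurable F m) : ∫ x, F (T x) ∂m = ∫ x, F x ∂m := by
  have := integral_map (μ := m) hT.measurable.aemeasurable (f := F) (by rwa [hT.map_eq])
  rw [hT.map_eq] at this
  exact this.symm

lemma measurable_birkhoffSum (hT : Measurable T) {f : ℝ → ℝ} (hf : Measurable f) (n : ℕ) :
    Measurable (birkhoffSum T f n) := by
  unfold birkhoffSum
  exact Finset.measurable_fun_sum _ fun i _ => hf.comp (hT.iterate i)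

/-- The characteristic function at `t` of the `l`-th Birkhoff sum of `f`. -/
noncomputable def cf (T : ℝ → ℝ) (m : Measure ℝ) (f : ℝ → ℝ) (t : ℝ) (l : ℕ) : ℂ :=
  ∫ x, ee (t * birkhoffSum T f l x) ∂m

lemma measurable_ee_birkhoffSum (hT : Measurable T) {f : ℝ → ℝ} (hf : Measurable f) (t : ℝ)
    (l : ℕ) : Measurable fun x => ee (t * birkhoffSum T f l x) :=
  continuous_ee.measurable.comp ((measurable_birkhoffSum hT hf l).const_mul t)

/-- The Taylor remainder of the characters is `o(t²)` in mean for a square integrable function. -/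
lemma rem_small {M : ℝ → ℝ} (hM : Measurable M) (hM2 : MemLp M 2 m) {ε : ℝ} (hε : 0 < ε) :
    ∃ δ > 0, ∀ t : ℝ, |t| < δ → ∫ x, ‖rem (t * M x)‖ ∂m ≤ ε * t ^ 2 := by
  have hsq : Integrable (fun x => M x ^ 2) m := hM2.integrable_sq
  have hmeas : ∀ t : ℝ, Measurable fun x => rem (t * M x) := fun t =>
    continuous_rem.measurable.comp (hM.const_mul t)
  have hlim : Tendsto (fun t : ℝ => ∫ x, (t ^ 2)⁻¹ * ‖rem (t * M x)‖ ∂m) (𝓝 0)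
      (𝓝 (∫ x, (0 : ℝ) ∂m)) := by
    refine tendsto_integral_filter_of_dominated_convergence (fun x => 4 * M x ^ 2) ?_ ?_
      (hsq.const_mul 4) ?_
    · exact Eventually.of_forall fun t => ((hmeas t).norm.const_mul _).aestronglyMeasurable
    · refine Eventually.of_forall fun t => ae_of_all _ fun x => ?_
      rw [Real.norm_eq_abs, abs_of_nonneg (by positivity)]
      have h1 := norm_rem_le_sq (t * M x)
      rcases eq_or_ne t 0 with rfl | ht
      · simp; positivity
      · rw [inv_mul_le_iff₀ (by positivity)]
        nlinarith
    · refine ae_of_all _ fun x => ?_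
      have hsm : Tendsto (fun t : ℝ => |t| * |M x| ^ 3) (𝓝 0) (𝓝 0) := by
        have : Tendsto (fun t : ℝ => |t| * |M x| ^ 3) (𝓝 0) (𝓝 (|0| * |M x| ^ 3)) :=
          (continuous_abs.tendsto 0).mul_const _
        simpa using this
      have hev : ∀ᶠ t : ℝ in 𝓝 0, |t * M x| ≤ 1 := by
        have : Tendsto (fun t : ℝ => |t * M x|) (𝓝 0) (𝓝 |0 * M x|) :=
          ((continuous_id.mul continuous_const).abs).tendsto 0
        rw [zero_mul, abs_zero] at this
        filter_upwards [this.eventually (gt_mem_nhds one_pos)] with t ht using ht.le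
      refine squeeze_zero' (Eventually.of_forall fun t => by positivity) ?_ hsm
      filter_upwards [hev] with t ht
      rcases eq_or_ne t 0 with rfl | ht0
      · simp
      · have := norm_rem_le_cube ht
        rw [inv_mul_le_iff₀ (by positivity), ← sq_abs t]
        rw [abs_mul] at this
        linarith [show |t| ^ 2 * (|t| * |M x| ^ 3) = (|t| * |M x|) ^ 3 by ring]
  rw [integral_zero] at hlim
  obtain ⟨δ, hδ, hb⟩ := Metric.eventually_nhds_iff.1 (hlim.eventually (gt_mem_nhds hε))
  refine ⟨δ, hδ, fun t ht => ?_⟩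
  have h1 := hb (y := t) (by simpa using ht)
  rw [integral_const_mul] at h1
  rcases eq_or_ne t 0 with rfl | ht0
  · simp [rem, ee_zero]
  · rw [inv_mul_lt_iff₀ (by positivity)] at h1
    linarith

/-- Functions satisfying the approximate coboundary property decorrelate from the characters of
Birkhoff sums, because these characters are almost invariant for small `t`. -/
lemma decorrelation (hT : MeasurePreserving T m m)
    (hmix : ∀ F : ℝ → ℝ, Integrable F m → ∀ ε > 0, ∃ G : ℝ → ℝ, Integrable G m ∧
      ∀ u : ℝ → ℂ, Measurable u → (∀ x, ‖u x‖ ≤ 1) →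
        ‖∫ x, (F x - ∫ z, F z ∂m) • u x ∂m - ∫ x, G x • (u x - u (T x)) ∂m‖ ≤ ε)
    {M : ℝ → ℝ} (hM : Measurable M) (hMi : Integrable M m) {F : ℝ → ℝ} (hF : Integrable F m)
    {ε : ℝ} (hε : 0 < ε) :
    ∃ δ > 0, ∀ t : ℝ, |t| < δ → ∀ l : ℕ,
      ‖∫ x, (F x - ∫ z, F z ∂m) • ee (t * birkhoffSum T M l (T x)) ∂m‖ ≤ ε := by
  obtain ⟨G, hG, hGu⟩ := hmix F hF (ε / 4) (by positivity)
  obtain ⟨G', hG'c, hG'ε, hG'cont, hG'i⟩ :=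
    hG.exists_hasCompactSupport_integral_sub_le (ε := ε / 4) (by positivity)
  obtain ⟨B, hB⟩ := hG'c.exists_bound_of_continuous hG'cont
  have hB0 : 0 ≤ B := (norm_nonneg _).trans (hB 0)
  set I := ∫ x, |M x| ∂m with hI
  have hI0 : 0 ≤ I := integral_nonneg fun x => abs_nonneg _
  refine ⟨ε / (8 * (B * I + 1)), by positivity, fun t ht l => ?_⟩
  set u : ℝ → ℂ := fun x => ee (t * birkhoffSum T M l (T x)) with hu
  have hum : Measurable u := (measurable_ee_birkhoffSum hT.measurable hM t l).comp hT.measurable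
  have hub : ∀ x, ‖u x‖ ≤ 1 := fun x => (norm_ee _).le
  have hdm : Measurable fun x => u x - u (T x) := hum.sub (hum.comp hT.measurable)
  have hdb : ∀ x, ‖u x - u (T x)‖ ≤ 2 := fun x =>
    (norm_sub_le _ _).trans (by linarith [hub x, hub (T x)])
  have hd : ∀ x, ‖u x - u (T x)‖ ≤ |t| * (|M (T^[l] (T x))| + |M (T x)|) := by
    intro x
    have h1 := norm_ee_sub_le (t * birkhoffSum T M l (T x)) (t * birkhoffSum T M l (T (T x)))
    rw [← mul_sub, abs_mul, abs_sub_comm, birkhoffSum_apply_sub_birkhoffSum] at h1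
    exact h1.trans (mul_le_mul_of_nonneg_left (abs_sub _ _) (abs_nonneg _))
  have i1 : Integrable (fun x => |M (T x)|) m := hT.integrable_comp_of_integrable hMi.abs
  have i2 : Integrable (fun x => |M (T^[l] (T x))|) m :=
    hT.integrable_comp_of_integrable ((hT.iterate l).integrable_comp_of_integrable hMi.abs)
  have v1 : ∫ x, |M (T x)| ∂m = I := integral_comp_mp_real hT hMi.abs.aestronglyMeasurable
  have v2 : ∫ x, |M (T^[l] (T x))| ∂m = I := by
    rw [integral_comp_mp_real hT (F := fun x => |M (T^[l] x)|)
      ((hT.iterate l).integrable_comp_of_integrable hMi.abs).aestronglyMeasurable]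
    exact integral_comp_mp_real (hT.iterate l) hMi.abs.aestronglyMeasurable
  have b1 : ‖∫ x, (G x - G' x) • (u x - u (T x)) ∂m‖ ≤ 2 * (ε / 4) :=
    (norm_integral_smul_le (hG.sub hG'i) hdb).trans
      (mul_le_mul_of_nonneg_left hG'ε (by norm_num))
  have b2 : ‖∫ x, G' x • (u x - u (T x)) ∂m‖ ≤ B * |t| * (I + I) := by
    have : ∫ x, B * |t| * (|M (T^[l] (T x))| + |M (T x)|) ∂m = B * |t| * (I + I) := by
      rw [integral_const_mul, integral_add i2 i1, v1, v2]
    rw [← this]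
    refine norm_integral_le_of_norm_le ((i2.add i1).const_mul _) (ae_of_all _ fun x => ?_)
    rw [norm_smul, mul_assoc]
    exact mul_le_mul (hB x) (hd x) (norm_nonneg _) hB0
  have b3 : ∫ x, G x • (u x - u (T x)) ∂m =
      ∫ x, (G x - G' x) • (u x - u (T x)) ∂m + ∫ x, G' x • (u x - u (T x)) ∂m := by
    have hGG : Integrable (fun x => G x - G' x) m := hG.sub hG'i
    rw [← integral_add (integrable_smul_of_bdd hGG hdm hdb)
      (integrable_smul_of_bdd hG'i hdm hdb)]
    simp only [← add_smul]
    congr 1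
    ext x
    simp
  have b4 := hGu u hum hub
  have b5 : ‖∫ x, G x • (u x - u (T x)) ∂m‖ ≤ 2 * (ε / 4) + B * |t| * (I + I) := by
    rw [b3]
    exact (norm_add_le _ _).trans (add_le_add b1 b2)
  have b6 : B * |t| * (I + I) ≤ ε / 4 := by
    rw [lt_div_iff₀ (by positivity)] at ht
    nlinarith [abs_nonneg t]
  have b7 := norm_le_norm_add_norm_sub' (∫ x, (F x - ∫ z, F z ∂m) • u x ∂m)
    (∫ x, G x • (u x - u (T x)) ∂m)
  linarith

/-- The approximate recursion `ψ(l+1) ≈ (1 - t² σ²/2) ψ(l)` for the characteristic functions of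
Birkhoff sums of a martingale difference. -/
lemma cf_recursion (hT : MeasurePreserving T m m)
    (hmix : ∀ F : ℝ → ℝ, Integrable F m → ∀ ε > 0, ∃ G : ℝ → ℝ, Integrable G m ∧
      ∀ u : ℝ → ℂ, Measurable u → (∀ x, ‖u x‖ ≤ 1) →
        ‖∫ x, (F x - ∫ z, F z ∂m) • u x ∂m - ∫ x, G x • (u x - u (T x)) ∂m‖ ≤ ε)
    {M : ℝ → ℝ} (hM : Measurable M) (hM2 : MemLp M 2 m)
    (hmart : ∀ u : ℝ → ℂ, Measurable u → (∀ x, ‖u x‖ ≤ 1) → ∫ x, M x • u (T x) ∂m = 0)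
    {ε : ℝ} (hε : 0 < ε) :
    ∃ δ > 0, ∀ t : ℝ, |t| < δ → ∀ l : ℕ,
      ‖cf T m M t (l + 1) - ((1 - t ^ 2 * (∫ x, M x ^ 2 ∂m) / 2 : ℝ) : ℂ) * cf T m M t l‖
        ≤ ε * t ^ 2 := by
  have hMi : Integrable M m := hM2.integrable (by norm_num)
  have hsq : Integrable (fun x => M x ^ 2) m := hM2.integrable_sq
  obtain ⟨δ1, hδ1, h1⟩ := rem_small (m := m) hM hM2 (half_pos hε)
  obtain ⟨δ2, hδ2, h2⟩ := decorrelation hT hmix hM hMi hsq hε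
  refine ⟨min δ1 δ2, lt_min hδ1 hδ2, fun t ht l => ?_⟩
  have a1 := h1 t (ht.trans_le (min_le_left _ _))
  have a2 := h2 t (ht.trans_le (min_le_right _ _)) l
  set V := ∫ x, M x ^ 2 ∂m with hV
  set v : ℝ → ℂ := fun x => ee (t * birkhoffSum T M l x) with hv
  have hvm : Measurable v := measurable_ee_birkhoffSum hT.measurable hM t l
  have hvb : ∀ x, ‖v x‖ ≤ 1 := fun x => (norm_ee _).le
  set u : ℝ → ℂ := fun x => v (T x) with hu
  have hum : Measurable u := hvm.comp hT.measurable
  have hub : ∀ x, ‖u x‖ ≤ 1 := fun x => hvb _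
  have hui : Integrable u m := Integrable.of_bound hum.aestronglyMeasurable 1 (ae_of_all _ hub)
  have hcf : cf T m M t l = ∫ x, u x ∂m := (integral_comp_mp hT hvm.aestronglyMeasurable).symm
  have hrm : Measurable fun x => rem (t * M x) := continuous_rem.measurable.comp (hM.const_mul t)
  have ir : Integrable (fun x => rem (t * M x) * u x) m := by
    refine Integrable.mono' (hsq.const_mul (4 * t ^ 2)) (hrm.mul hum).aestronglyMeasurable
      (ae_of_all _ fun x => ?_)
    rw [norm_mul]
    calc ‖rem (t * M x)‖ * ‖u x‖ ≤ ‖rem (t * M x)‖ * 1 := by gcongr; exact hub x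
      _ ≤ 4 * (t * M x) ^ 2 := by rw [mul_one]; exact norm_rem_le_sq _
      _ = _ := by ring
  have irn : Integrable (fun x => ‖rem (t * M x)‖) m := by
    refine Integrable.mono' (hsq.const_mul (4 * t ^ 2)) hrm.norm.aestronglyMeasurable
      (ae_of_all _ fun x => ?_)
    rw [norm_norm]
    exact (norm_rem_le_sq _).trans_eq (by ring)
  have iM : Integrable (fun x => M x • u x) m := integrable_smul_of_bdd hMi hum hub
  have iV' : Integrable (fun x => M x ^ 2 - V) m := hsq.sub (integrable_const _)
  have iV : Integrable (fun x => (M x ^ 2 - V) • u x) m := integrable_smul_of_bdd iV' hum hub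
  have hexp : ∀ x, ee (t * birkhoffSum T M (l + 1) x) =
      rem (t * M x) * u x + ((t : ℂ) * Complex.I) * (M x • u x)
        + (-((t : ℂ) ^ 2 / 2)) * ((M x ^ 2 - V) • u x)
        + ((1 - t ^ 2 * V / 2 : ℝ) : ℂ) * u x := by
    intro x
    have : ee (t * birkhoffSum T M (l + 1) x) = ee (t * M x) * u x := by
      rw [birkhoffSum_succ', mul_add, ee_add]
    rw [this, rem]
    simp only [Complex.real_smul]
    push_cast
    ring
  have hsum : cf T m M t (l + 1) = ∫ x, rem (t * M x) * u x ∂m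
      + ((t : ℂ) * Complex.I) * ∫ x, M x • u x ∂m
      + (-((t : ℂ) ^ 2 / 2)) * ∫ x, (M x ^ 2 - V) • u x ∂m
      + ((1 - t ^ 2 * V / 2 : ℝ) : ℂ) * ∫ x, u x ∂m := by
    rw [cf]
    simp only [hexp]
    have j1 : Integrable (fun x => rem (t * M x) * u x
        + ((t : ℂ) * Complex.I) * (M x • u x)) m := ir.add (iM.const_mul _)
    have j2 : Integrable (fun x => rem (t * M x) * u x + ((t : ℂ) * Complex.I) * (M x • u x)
        + (-((t : ℂ) ^ 2 / 2)) * ((M x ^ 2 - V) • u x)) m := j1.add (iV.const_mul _)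
    rw [integral_add j2 (hui.const_mul _),
      integral_add j1 (iV.const_mul _), integral_add ir (iM.const_mul _),
      integral_const_mul, integral_const_mul, integral_const_mul]
  rw [hsum, hcf, hmart v hvm hvb, add_sub_cancel_right, mul_zero, add_zero]
  refine (norm_add_le _ _).trans ?_
  have c1 : ‖∫ x, rem (t * M x) * u x ∂m‖ ≤ ε / 2 * t ^ 2 := by
    refine (norm_integral_le_of_norm_le irn (ae_of_all _ fun x => ?_)).trans a1
    rw [norm_mul]
    exact mul_le_of_le_one_right (norm_nonneg _) (hub x)
  have c2 : ‖(-((t : ℂ) ^ 2 / 2)) * ∫ x, (M x ^ 2 - V) • u x ∂m‖ ≤ t ^ 2 / 2 * ε := by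
    rw [norm_mul]
    have : ‖(-((t : ℂ) ^ 2 / 2))‖ = t ^ 2 / 2 := by simp
    rw [this]
    exact mul_le_mul_of_nonneg_left a2 (by positivity)
  linarith

/-- Convergence of the characteristic functions for a reverse martingale difference. -/
theorem cf_tendsto (hT : MeasurePreserving T m m)
    (hmix : ∀ F : ℝ → ℝ, Integrable F m → ∀ ε > 0, ∃ G : ℝ → ℝ, Integrable G m ∧
      ∀ u : ℝ → ℂ, Measurable u → (∀ x, ‖u x‖ ≤ 1) →
        ‖∫ x, (F x - ∫ z, F z ∂m) • u x ∂m - ∫ x, G x • (u x - u (T x)) ∂m‖ ≤ ε)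
    {M : ℝ → ℝ} (hM : Measurable M) (hM2 : MemLp M 2 m)
    (hmart : ∀ u : ℝ → ℂ, Measurable u → (∀ x, ‖u x‖ ≤ 1) → ∫ x, M x • u (T x) ∂m = 0)
    (s : ℝ) :
    Tendsto (fun n : ℕ => cf T m M (s / Real.sqrt n) n) atTop
      (𝓝 (Real.exp (-(s ^ 2 * (∫ x, M x ^ 2 ∂m) / 2)) : ℝ)) := by
  set V := ∫ x, M x ^ 2 ∂m with hV
  have hV0 : 0 ≤ V := integral_nonneg fun x => sq_nonneg _
  let t : ℕ → ℝ := fun n => s / Real.sqrt n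
  have ht0 : Tendsto t atTop (𝓝 0) :=
    tendsto_const_nhds.div_atTop (Real.tendsto_sqrt_atTop.comp tendsto_natCast_atTop_atTop)
  have htsq : ∀ n : ℕ, n ≠ 0 → n * t n ^ 2 = s ^ 2 := by
    intro n hn
    have : (0 : ℝ) < n := by positivity
    simp only [t]
    rw [div_pow, Real.sq_sqrt this.le]
    field_simp
  let q : ℕ → ℝ := fun n => 1 - t n ^ 2 * V / 2
  have hq : Tendsto (fun n : ℕ => q n ^ n) atTop (𝓝 (Real.exp (-(s ^ 2 * V / 2)))) := by
    refine (Real.tendsto_one_add_div_pow_exp (-(s ^ 2 * V / 2))).congr' ?_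
    filter_upwards [eventually_ne_atTop 0] with n hn
    have hn0 : (n : ℝ) ≠ 0 := by exact_mod_cast hn
    congr 1
    simp only [q]
    rw [← htsq n hn]
    field_simp
    ring
  have hq' : Tendsto (fun n : ℕ => ((q n ^ n : ℝ) : ℂ)) atTop
      (𝓝 ((Real.exp (-(s ^ 2 * V / 2)) : ℝ) : ℂ)) :=
    (Complex.continuous_ofReal.tendsto _).comp hq
  have hdiff : Tendsto (fun n : ℕ => cf T m M (t n) n - ((q n ^ n : ℝ) : ℂ)) atTop (𝓝 0) := by
    rw [Metric.tendsto_atTop']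
    intro ε hε
    obtain ⟨δ, hδ, hrec⟩ := cf_recursion hT hmix hM hM2 hmart
      (ε := ε / (2 * (s ^ 2 + 1))) (by positivity)
    have hev : ∀ᶠ n : ℕ in atTop, n ≠ 0 ∧ |t n| < δ ∧ 0 ≤ q n := by
      have h1 : ∀ᶠ n : ℕ in atTop, |t n| < δ := by
        have := (Metric.tendsto_nhds.1 ht0) δ hδ
        simpa using this
      have h2 : Tendsto q atTop (𝓝 (1 - 0 ^ 2 * V / 2)) :=
        (((ht0.pow 2).mul_const V).div_const 2).const_sub 1
      have h3 : ∀ᶠ n : ℕ in atTop, 0 < q n :=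
        h2.eventually (lt_mem_nhds (by norm_num))
      filter_upwards [eventually_ne_atTop 0, h1, h3] with n a b c using ⟨a, b, c.le⟩
    obtain ⟨N, hN⟩ := eventually_atTop.1 hev
    refine ⟨N, fun n hn => ?_⟩
    obtain ⟨hn0, htn, hqn⟩ := hN n hn.le
    have hq1 : q n ≤ 1 := by
      have : 0 ≤ t n ^ 2 * V / 2 := by positivity
      simp only [q]; linarith
    have hind : ∀ l : ℕ, ‖cf T m M (t n) l - ((q n ^ l : ℝ) : ℂ)‖ ≤
        l * (ε / (2 * (s ^ 2 + 1)) * t n ^ 2) := by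
      intro l
      induction l with
      | zero => simp [cf, ee_zero]
      | succ l ih =>
        have h1 := hrec (t n) htn l
        have e : cf T m M (t n) (l + 1) - ((q n ^ (l + 1) : ℝ) : ℂ) =
            (cf T m M (t n) (l + 1) - ((q n : ℝ) : ℂ) * cf T m M (t n) l) +
            ((q n : ℝ) : ℂ) * (cf T m M (t n) l - ((q n ^ l : ℝ) : ℂ)) := by
          push_cast; ring
        rw [e]
        refine (norm_add_le _ _).trans ?_
        rw [norm_mul, Complex.norm_real, Real.norm_eq_abs, abs_of_nonneg hqn]
        have h2 : q n * ‖cf T m M (t n) l - ((q n ^ l : ℝ) : ℂ)‖ ≤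
            ‖cf T m M (t n) l - ((q n ^ l : ℝ) : ℂ)‖ := mul_le_of_le_one_left (norm_nonneg _) hq1
        push_cast at ih ⊢
        push_cast at h2
        have h1' : ‖cf T m M (t n) (l + 1) - ((q n : ℝ) : ℂ) * cf T m M (t n) l‖ ≤
          ε / (2 * (s ^ 2 + 1)) * t n ^ 2 := h1
        linarith
    have h3 := hind n
    rw [dist_zero_right]
    refine h3.trans_lt ?_
    calc (n : ℝ) * (ε / (2 * (s ^ 2 + 1)) * t n ^ 2) = ε / (2 * (s ^ 2 + 1)) * (n * t n ^ 2) := by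
          ring
      _ = ε * (s ^ 2 / (2 * (s ^ 2 + 1))) := by rw [htsq n hn0]; ring
      _ < ε * 1 := by
          gcongr
          rw [div_lt_one (by positivity)]
          nlinarith [sq_nonneg s]
      _ = ε := mul_one ε
  have := hdiff.add hq'
  simpa using this

/-- Adding a coboundary does not change the limit of the characteristic functions. -/
lemma cf_coboundary (hT : MeasurePreserving T m m) {f H g : ℝ → ℝ} (hf : Measurable f)
    (hH : Measurable H) (hg : Measurable g) (hfH : ∀ x, f x = H x + g (T x) - g x) {t : ℕ → ℝ}
    (ht : Tendsto t atTop (𝓝 0)) :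
    Tendsto (fun n : ℕ => cf T m f (t n) n - cf T m H (t n) n) atTop (𝓝 0) := by
  have hsum : ∀ n x, birkhoffSum T f n x = birkhoffSum T H n x + g (T^[n] x) - g x := by
    intro n
    induction n with
    | zero => intro x; simp
    | succ n ih =>
      intro x
      rw [birkhoffSum_succ', birkhoffSum_succ', ih, hfH x, Function.iterate_succ_apply]
      ring
  have hgm : ∀ t : ℝ, Measurable fun x => ee (t * g x) - 1 := fun t =>
    (continuous_ee.measurable.comp (hg.const_mul t)).sub_const 1
  have hb2 : ∀ y, ‖ee y - 1‖ ≤ 2 := fun y => (norm_sub_le _ _).trans (by simp [norm_ee]; norm_num)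
  have hgi : ∀ t : ℝ, Integrable (fun x => ‖ee (t * g x) - 1‖) m := fun t =>
    Integrable.of_bound (hgm t).norm.aestronglyMeasurable 2
      (ae_of_all _ fun x => by rw [norm_norm]; exact hb2 _)
  have hlim : Tendsto (fun n : ℕ => ∫ x, ‖ee (t n * g x) - 1‖ ∂m) atTop (𝓝 (∫ x, (0 : ℝ) ∂m)) := by
    refine tendsto_integral_of_dominated_convergence (fun _ => 2) ?_ (integrable_const _) ?_ ?_
    · exact fun n => (hgm _).norm.aestronglyMeasurable
    · exact fun n => ae_of_all _ fun x => by rw [norm_norm]; exact hb2 _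
    · refine ae_of_all _ fun x => ?_
      have h1 : Tendsto (fun n => ‖ee (t n * g x) - 1‖) atTop (𝓝 ‖ee (0 * g x) - 1‖) :=
        (((continuous_ee.tendsto _).comp (ht.mul_const (g x))).sub_const 1).norm
      simpa [ee_zero] using h1
  rw [integral_zero] at hlim
  have hlim2 : Tendsto (fun n : ℕ => 2 * ∫ x, ‖ee (t n * g x) - 1‖ ∂m) atTop (𝓝 0) := by
    simpa using hlim.const_mul 2
  refine squeeze_zero_norm (fun n => ?_) hlim2
  have m1 := measurable_ee_birkhoffSum hT.measurable hf (t n) n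
  have m2 := measurable_ee_birkhoffSum hT.measurable hH (t n) n
  have i1 : Integrable (fun x => ee (t n * birkhoffSum T f n x)) m :=
    Integrable.of_bound m1.aestronglyMeasurable 1 (ae_of_all _ fun x => (norm_ee _).le)
  have i2 : Integrable (fun x => ee (t n * birkhoffSum T H n x)) m :=
    Integrable.of_bound m2.aestronglyMeasurable 1 (ae_of_all _ fun x => (norm_ee _).le)
  have i3 : Integrable (fun x => ‖ee (t n * g (T^[n] x)) - 1‖) m :=
    (hT.iterate n).integrable_comp_of_integrable (hgi (t n))
  have e3 : ∫ x, ‖ee (t n * g (T^[n] x)) - 1‖ ∂m = ∫ x, ‖ee (t n * g x) - 1‖ ∂m :=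
    integral_comp_mp_real (hT.iterate n) (hgi (t n)).aestronglyMeasurable
  rw [cf, cf, ← integral_sub i1 i2]
  have e4 : 2 * ∫ x, ‖ee (t n * g x) - 1‖ ∂m =
      ∫ x, (‖ee (t n * g (T^[n] x)) - 1‖ + ‖ee (t n * g x) - 1‖) ∂m := by
    rw [integral_add i3 (hgi _), e3]; ring
  rw [e4]
  refine norm_integral_le_of_norm_le (i3.add (hgi _)) (ae_of_all _ fun x => ?_)
  set a := t n * g (T^[n] x)
  set b := t n * g x
  set c := t n * birkhoffSum T H n x
  have e5 : t n * birkhoffSum T f n x = c + (a - b) := by rw [hsum]; simp only [a, b, c]; ring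
  rw [e5, ee_add]
  have e6 : ee c * ee (a - b) - ee c = ee c * (ee (a - b) - 1) := by ring
  have e7 : ee (a - b) * ee b = ee a := by rw [← ee_add]; congr 1; ring
  have e8 : ‖ee (a - b) - 1‖ = ‖ee a - ee b‖ := by
    rw [← e7, ← sub_one_mul, norm_mul, norm_ee, mul_one]
  rw [e6, norm_mul, norm_ee, one_mul, e8]
  calc ‖ee a - ee b‖ = ‖(ee a - 1) - (ee b - 1)‖ := by congr 1; ring
    _ ≤ _ := norm_sub_le _ _

lemma birkhoffSum_ae_eq (hT : MeasurePreserving T m m) {f f' : ℝ → ℝ} (h : f =ᵐ[m] f') (n : ℕ) :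
    birkhoffSum T f n =ᵐ[m] birkhoffSum T f' n := by
  have : ∀ i, ∀ᵐ x ∂m, f (T^[i] x) = f' (T^[i] x) := fun i =>
    (hT.iterate i).quasiMeasurePreserving.ae h
  filter_upwards [ae_all_iff.2 this] with x hx
  simp only [birkhoffSum, hx]

end CLT

end

/-! ### Reduction to a global Hölder observable, and conclusion -/

section

variable {α : ℝ}

/-- A measure carried by `[0,1]` and absolutely continuous with respect to Lebesgue measure on the
line does not charge `0`, so it is absolutely continuous with respect to `leb`. -/
lemma absolutelyContinuous_leb {m : Measure ℝ} [IsProbabilityMeasure m]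
    (hsupp : m (Icc (0 : ℝ) 1) = 1) (hac : m ≪ volume) : m ≪ leb := by
  have h0 : m {(0 : ℝ)} = 0 := hac (by simp)
  have h1 : m (Icc (0 : ℝ) 1)ᶜ = 0 := (prob_compl_eq_zero_iff measurableSet_Icc).2 hsupp
  have h2 : m (Ioc (0 : ℝ) 1)ᶜ = 0 := by
    refine measure_mono_null (t := (Icc (0 : ℝ) 1)ᶜ ∪ {0}) (fun x hx => ?_)
      (measure_union_null h1 h0)
    by_contra hc
    simp only [mem_union, mem_compl_iff, mem_singleton_iff, not_or, not_not] at hc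
    exact hx ⟨lt_of_le_of_ne hc.1.1 (Ne.symm hc.2), hc.1.2⟩
  have h3 : m.restrict (Ioc (0 : ℝ) 1) = m :=
    Measure.restrict_eq_self_of_ae_mem (by rw [ae_iff]; exact h2)
  rw [← h3]
  exact hac.restrict _

/-- A function that is Hölder on `[0,1]` agrees there with a measurable function that is bounded
and Hölder, with an exponent at most `1`, on `(0,1]`. -/
lemma exists_extension {f : ℝ → ℝ} {C r₀ : ℝ} (hr₀ : 0 < r₀)
    (hf : ∀ x ∈ Icc (0 : ℝ) 1, ∀ y ∈ Icc (0 : ℝ) 1, |f x - f y| ≤ C * |x - y| ^ r₀) :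
    ∃ (F : ℝ → ℝ) (D r : ℝ), 0 < r ∧ r ≤ 1 ∧ Measurable F ∧ (∀ x ∈ Icc (0 : ℝ) 1, F x = f x) ∧
      (∀ x ∈ Ioc (0 : ℝ) 1, |F x| ≤ D) ∧
      ∀ x ∈ Ioc (0 : ℝ) 1, ∀ y ∈ Ioc (0 : ℝ) 1, |F x - F y| ≤ D * |x - y| ^ r := by
  have hC : 0 ≤ C := by
    have := (abs_nonneg _).trans (hf 0 (by simp) 1 (by simp))
    simpa using this
  have hcont : ContinuousOn f (Icc (0 : ℝ) 1) := by
    intro x hx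
    rw [ContinuousWithinAt, tendsto_iff_dist_tendsto_zero]
    have hz : Tendsto (fun y => C * |y - x| ^ r₀) (𝓝[Icc 0 1] x) (𝓝 0) := by
      have : Continuous fun y : ℝ => C * |y - x| ^ r₀ :=
        continuous_const.mul ((by fun_prop : Continuous fun y : ℝ => |y - x|).rpow_const
          fun _ => Or.inr hr₀.le)
      have h := this.tendsto x
      simp only [sub_self, abs_zero, Real.zero_rpow hr₀.ne', mul_zero] at h
      exact h.mono_left nhdsWithin_le_nhds
    refine squeeze_zero' (Eventually.of_forall fun _ => dist_nonneg) ?_ hz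
    filter_upwards [self_mem_nhdsWithin] with y hy
    exact hf y hy x hx
  have h01 : (0 : ℝ) ≤ 1 := zero_le_one
  have hF : ∀ x ∈ Icc (0 : ℝ) 1, IccExtend h01 ((Icc (0 : ℝ) 1).restrict f) x = f x :=
    fun x hx => by rw [IccExtend_of_mem h01 _ hx]; rfl
  have hsub : ∀ x ∈ Ioc (0 : ℝ) 1, x ∈ Icc (0 : ℝ) 1 := fun x hx => Ioc_subset_Icc_self hx
  refine ⟨IccExtend h01 ((Icc (0 : ℝ) 1).restrict f), C + |f 1|, min r₀ 1, lt_min hr₀ one_pos,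
    min_le_right _ _, (hcont.restrict.Icc_extend' ).measurable, hF, fun x hx => ?_,
    fun x hx y hy => ?_⟩
  · rw [hF x (hsub x hx)]
    have h1 := hf x (hsub x hx) 1 (by simp)
    have h2 : |x - 1| ^ r₀ ≤ 1 :=
      Real.rpow_le_one (abs_nonneg _) (by rw [abs_le]; constructor <;> linarith [hx.1, hx.2]) hr₀.le
    have h3 : C * |x - 1| ^ r₀ ≤ C := mul_le_of_le_one_right hC h2
    have h4 := abs_sub_abs_le_abs_sub (f x) (f 1)
    linarith
  · rw [hF x (hsub x hx), hF y (hsub y hy)]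
    refine (hf x (hsub x hx) y (hsub y hy)).trans ?_
    have hle : |x - y| ≤ 1 := by
      rw [abs_le]; constructor <;> linarith [hx.1, hx.2, hy.1, hy.2]
    refine mul_le_mul (by linarith [abs_nonneg (f 1)]) ?_ (by positivity) (by positivity)
    rcases eq_or_lt_of_le (abs_nonneg (x - y)) with h0 | h0
    · rw [← h0, Real.zero_rpow hr₀.ne', Real.zero_rpow (lt_min hr₀ one_pos).ne']
    · exact Real.rpow_le_rpow_of_exponent_ge h0 hle (min_le_left _ _)

/-- Lévy's continuity theorem in terms of `cf`. -/
lemma tendsto_integral_of_cf {T : ℝ → ℝ} {m : Measure ℝ} [IsProbabilityMeasure m]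
    (hT : Measurable T) {F : ℝ → ℝ} (hF : Measurable F) {v : NNReal}
    (hcf : ∀ s : ℝ, Tendsto (fun n : ℕ => cf T m F (s / Real.sqrt n) n) atTop
      (𝓝 (Real.exp (-(s ^ 2 * v / 2)) : ℝ)))
    (g : BoundedContinuousFunction ℝ ℝ) :
    Tendsto (fun n : ℕ => ∫ x, g (birkhoffSum T F n x / Real.sqrt n) ∂m) atTop
      (𝓝 (∫ y, g y ∂(ProbabilityTheory.gaussianReal 0 v))) := by
  have hmeas : ∀ n : ℕ, Measurable fun x => birkhoffSum T F n x / Real.sqrt n := fun n =>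
    (measurable_birkhoffSum hT hF n).div_const _
  let μ : ℕ → ProbabilityMeasure ℝ := fun n =>
    ⟨m.map fun x => birkhoffSum T F n x / Real.sqrt n,
      Measure.isProbabilityMeasure_map (hmeas n).aemeasurable⟩
  let μ₀ : ProbabilityMeasure ℝ := ⟨ProbabilityTheory.gaussianReal 0 v, inferInstance⟩
  have hlim : Tendsto μ atTop (𝓝 μ₀) := by
    refine ProbabilityMeasure.tendsto_iff_tendsto_charFun.2 fun s => ?_
    have e0 : charFun (μ₀ : Measure ℝ) s = ((Real.exp (-(s ^ 2 * v / 2)) : ℝ) : ℂ) := by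
      change charFun (ProbabilityTheory.gaussianReal 0 v) s = _
      rw [ProbabilityTheory.charFun_gaussianReal]
      push_cast
      congr 1
      ring
    have e1 : ∀ n, charFun (μ n : Measure ℝ) s = cf T m F (s / Real.sqrt n) n := fun n => by
      change charFun (m.map fun x => birkhoffSum T F n x / Real.sqrt n) s = _
      rw [charFun_apply_real, integral_map (hmeas n).aemeasurable
        (by fun_prop), cf]
      refine integral_congr_ae (ae_of_all _ fun x => ?_)
      simp only [ee]
      congr 1
      push_cast
      ring
    rw [e0]
    simpa only [e1] using hcf s
  have h := ProbabilityMeasure.tendsto_iff_forall_integral_tendsto.1 hlim g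
  refine h.congr fun n => ?_
  change ∫ y, g y ∂(m.map fun x => birkhoffSum T F n x / Real.sqrt n) = _
  rw [integral_map (hmeas n).aemeasurable g.continuous.aestronglyMeasurable]

end

end LSV

open LSV

/-- Central limit theorem for the LSV map with `0 < α < 1/2` and any Hölder observable
of zero average. -/
theorem lsv_clt_small_alpha (α : ℝ) (hα : 0 < α ∧ α < 1 / 2)
    (m : Measure ℝ) [IsProbabilityMeasure m]
    (hsupp : m (Set.Icc (0:ℝ) 1) = 1)
    (hT : MeasurePreserving (lsv α) m m)
    (h : ℝ → ℝ) (hh_cont : ContinuousOn h (Set.Ioc 0 1))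
    (hm : m = MeasureTheory.volume.withDensity fun x => ENNReal.ofReal (h x))
    (f : ℝ → ℝ)
    (hf_holder : ∃ C r : ℝ, 0 < r ∧ ∀ x ∈ Set.Icc (0:ℝ) 1, ∀ y ∈ Set.Icc (0:ℝ) 1,
      |f x - f y| ≤ C * |x - y| ^ r)
    (hf_int : ∫ x, f x ∂m = 0) :
    ∃ σ2 : NNReal,
      (∀ g : BoundedContinuousFunction ℝ ℝ,
        Tendsto (fun n => ∫ x, g (birkhoffSum (lsv α) f n x / Real.sqrt n) ∂m) atTop
          (𝓝 (∫ y, g y ∂(ProbabilityTheory.gaussianReal 0 σ2)))) ∧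
      (σ2 = 0 ↔ ∃ χ : ℝ → ℝ, Measurable χ ∧ ∀ᵐ x ∂m, f x = χ (lsv α x) - χ x) := by
  obtain ⟨hα0, hα2⟩ := hα
  have hac : m ≪ leb := absolutelyContinuous_leb hsupp
    (by rw [hm]; exact withDensity_absolutelyContinuous _ _)
  obtain ⟨C, r₀, hr₀, hf⟩ := hf_holder
  obtain ⟨F, D, r, hr0, hr1, hF, hFf, hFb, hFh⟩ := exists_extension hr₀ hf
  have hFae : F =ᵐ[m] f := by
    have : ∀ᵐ x ∂m, x ∈ Set.Icc (0 : ℝ) 1 := by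
      rw [ae_iff]; exact (prob_compl_eq_zero_iff measurableSet_Icc).2 hsupp
    filter_upwards [this] with x hx using hFf x hx
  have hF0 : ∫ x, F x ∂m = 0 := by rw [integral_congr_ae hFae, hf_int]
  have hK : 2 ≤ 2 / r * r := by rw [div_mul_cancel₀ _ hr0.ne']
  obtain ⟨ρ, hd, hρm⟩ := exists_measurable_density hα0 (by linarith : α < 1) hr0 hr1 hK
  have hρ := rnDeriv_eq hα0 hα2 hr0 hr1 hK hd hac hT
  obtain ⟨g, M, hg, hM, hM2, hdec, hmart⟩ :=
    decomposition hα0 hα2 hr0 hr1 hK hd hρm hac hρ hT hF hFb hFh hF0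
  have hmix : ∀ F : ℝ → ℝ, Integrable F m → ∀ ε > 0, ∃ G : ℝ → ℝ, Integrable G m ∧
      ∀ u : ℝ → ℂ, Measurable u → (∀ x, ‖u x‖ ≤ 1) →
        ‖∫ x, (F x - ∫ z, F z ∂m) • u x ∂m - ∫ x, G x • (u x - u (lsv α x)) ∂m‖ ≤ ε :=
    fun _ hF _ hε => approx_coboundary_m hα0 hα2 hr0 hr1 hK hd hac hρ hF hε
  have hV : 0 ≤ ∫ x, M x ^ 2 ∂m := integral_nonneg fun x => sq_nonneg _
  have hs : ∀ s : ℝ, Tendsto (fun n : ℕ => s / Real.sqrt n) atTop (𝓝 0) := fun s =>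
    tendsto_const_nhds.div_atTop (Real.tendsto_sqrt_atTop.comp tendsto_natCast_atTop_atTop)
  have hcf : ∀ s : ℝ, Tendsto (fun n : ℕ => cf (lsv α) m F (s / Real.sqrt n) n) atTop
      (𝓝 (Real.exp (-(s ^ 2 * (∫ x, M x ^ 2 ∂m) / 2)) : ℝ)) := fun s => by
    have := (cf_coboundary hT hF hM hg hdec (hs s)).add (cf_tendsto hT hmix hM hM2 hmart s)
    simpa using this
  refine ⟨⟨∫ x, M x ^ 2 ∂m, hV⟩, fun φ => ?_, fun h0 => ?_, ?_⟩
  · refine (tendsto_integral_of_cf hT.measurable hF hcf φ).congr fun n => integral_congr_ae ?_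
    filter_upwards [birkhoffSum_ae_eq hT hFae n] with x hx
    rw [hx]
  · refine ⟨g, hg, ?_⟩
    have h0' : ∫ x, M x ^ 2 ∂m = 0 := congrArg NNReal.toReal h0
    have hM0 := (integral_eq_zero_iff_of_nonneg (fun x => sq_nonneg (M x)) hM2.integrable_sq).1 h0'
    filter_upwards [hM0, hFae] with x hx hFx
    have : M x = 0 := by simpa using hx
    rw [← hFx, hdec x, this, zero_add]
  · rintro ⟨χ, hχ, hfχ⟩
    have hχT : Measurable fun x => χ (lsv α x) - χ x := (hχ.comp hT.measurable).sub hχ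
    have hFχ : F =ᵐ[m] fun x => χ (lsv α x) - χ x := hFae.trans hfχ
    -- Normalised Birkhoff sums of a coboundary tend to `0` in probability.
    have hone : Tendsto (fun n : ℕ => cf (lsv α) m F (1 / Real.sqrt n) n) atTop (𝓝 1) := by
      have h1 := cf_coboundary hT hχT (H := fun _ => 0) measurable_const hχ
        (fun x => by ring) (hs 1)
      have e1 : ∀ (t : ℝ) n, cf (lsv α) m (fun _ => 0) t n = 1 := fun t n => by
        simp [cf, birkhoffSum, ee_zero]
      have e2 : ∀ (t : ℝ) n, cf (lsv α) m (fun x => χ (lsv α x) - χ x) t n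
          = cf (lsv α) m F t n := fun t n => by
        refine integral_congr_ae ?_
        filter_upwards [birkhoffSum_ae_eq hT hFχ n] with x hx
        rw [hx]
      simp only [e1, e2] at h1
      simpa using h1.add_const 1
    have hlim := tendsto_nhds_unique hone (hcf 1)
    have hexp : Real.exp (-(1 ^ 2 * (∫ x, M x ^ 2 ∂m) / 2)) = 1 := by exact_mod_cast hlim.symm
    rw [Real.exp_eq_one_iff] at hexp
    exact NNReal.coe_injective (show ∫ x, M x ^ 2 ∂m = 0 by linarith)
end

section
/- Return-time tail asymptotics for the Liverani–Saussol–Vaienti map: let 0 < α < 1, let T be the corresponding Liverani–Saussol–Vaienti map with absolutely continuous invariant probability measure m of density h, let Y = (1/2, 1], and let φ(y) = inf{n ≥ 1 : Tⁿ(y) ∈ Y} be the first return time to Y. Then n^{1/α} · m{y ∈ Y : φ(y) > n} → h(1/2) · α^{−1/α}/4 as n → ∞. -/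
/-!
Let `x₀ = 1`, `x₁ = 1/2`, … be the backward orbit of `1` along the left branch of `T`. A point
`y ∈ Y = (1/2, 1]` has return time `> n` exactly when `T y = 2y - 1 ≤ xₙ`, so the level set is the
interval `(1/2, 1/2 + xₙ/2]` (`retTime_level_set`). As `h` is continuous at `1/2`, its `m`-measure
is `~ h(1/2) xₙ / 2` (`measure_Ioc_half_div`).

With `w = (2 xₙ₊₁)^α → 0` one has `(2 xₙ₊₁)^(-α) - (2 xₙ)^(-α) = (1 - (1 + w)^(-α)) / w → α`, so
Cesàro averaging gives `(2 xₙ)^(-α) ~ α n`, that is, `n^(1/α) xₙ → α^(-1/α) / 2`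
(`backward_orbit_asymptotic`).

The density only enters through `ENNReal.ofReal ∘ h`, so `h(1/2) ≥ 0` has to be proved
(`density_half_nonneg`). If `h(1/2) < 0`, then a neighbourhood of `1/2` is `m`-null. But `h > 0` on
some interval `(a, b)`, so `m` charges all its nonempty open subsets; by invariance the same holds
for the successive images of `(a, b)`, as long as they avoid `1/2`. Their lengths grow at least
geometrically, so some image contains `1/2`, a contradiction.
-/

open MeasureTheory Filter Topology

/-- First return time (`≥ 1`) of `x` to `Y` under `T` (junk value `0` if the orbit
never returns to `Y`, which happens only on a null set). -/
noncomputable def retTime {X : Type*} (T : X → X) (Y : Set X) (x : X) : ℕ :=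
  sInf {n : ℕ | 1 ≤ n ∧ T^[n] x ∈ Y}

/-! ### The map on the unit interval -/

/-- The left branch `x(1 + 2^α x^α)`, as a function on all of `ℝ`. -/
noncomputable def lsvLeft (α x : ℝ) : ℝ := x * (1 + 2 ^ α * x ^ α)

theorem lsv_of_le {α x : ℝ} (hx : x ≤ 1 / 2) : lsv α x = lsvLeft α x := by
  simp only [lsv, lsvLeft, if_pos hx]

theorem lsv_of_gt {α x : ℝ} (hx : 1 / 2 < x) : lsv α x = 2 * x - 1 := by
  simp only [lsv, if_neg (not_le.mpr hx)]

theorem lsvLeft_continuous {α : ℝ} (hα : 0 < α) : Continuous (lsvLeft α) := by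
  unfold lsvLeft
  have := Real.continuous_rpow_const hα.le
  fun_prop

theorem lsvLeft_half (α : ℝ) : lsvLeft α (1 / 2) = 1 := by
  unfold lsvLeft
  rw [← Real.mul_rpow (by norm_num) (by norm_num)]
  norm_num

/-- The left branch expands an interval `[a, b]` by a factor at least `1 + (2b)^α`. -/
theorem lsvLeft_expand {α a b : ℝ} (hα : 0 < α) (ha : 0 ≤ a) (hab : a ≤ b) :
    (b - a) * (1 + 2 ^ α * b ^ α) ≤ lsvLeft α b - lsvLeft α a := by
  unfold lsvLeft
  have h1 : a ^ α ≤ b ^ α := Real.rpow_le_rpow ha hab hα.le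
  have h2 : (0:ℝ) < 2 ^ α := by positivity
  nlinarith [mul_le_mul_of_nonneg_left h1 (mul_nonneg ha h2.le)]

theorem lsvLeft_strictMonoOn {α : ℝ} (hα : 0 < α) :
    StrictMonoOn (lsvLeft α) (Set.Ici 0) := by
  intro a ha b hb hab
  have h1 := lsvLeft_expand hα ha hab.le
  have h2 : 0 < (b - a) * (1 + 2 ^ α * b ^ α) := by
    have : 0 ≤ b := hb
    have : 0 < b - a := sub_pos.mpr hab
    positivity
  linarith

theorem lsvLeft_zero (α : ℝ) : lsvLeft α 0 = 0 := by simp [lsvLeft]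

theorem lsv_mem {α x : ℝ} (hα : 0 < α) (hx : x ∈ Set.Ioc (0 : ℝ) 1) :
    lsv α x ∈ Set.Ioc (0 : ℝ) 1 := by
  by_cases h : x ≤ 1 / 2
  · rw [lsv_of_le h]
    constructor
    · rw [← lsvLeft_zero α]
      exact lsvLeft_strictMonoOn hα (by simp) (by simpa using hx.1.le) hx.1
    · rw [← lsvLeft_half α]
      exact (lsvLeft_strictMonoOn hα).monotoneOn (by simpa using hx.1.le) (by simp) h
  · push Not at h
    rw [lsv_of_gt h]
    constructor <;> linarith [hx.2]

theorem lsv_iterate_mem {α x : ℝ} (hα : 0 < α) (hx : x ∈ Set.Ioc (0 : ℝ) 1) (n : ℕ) :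
    (lsv α)^[n] x ∈ Set.Ioc (0 : ℝ) 1 := by
  induction n generalizing x with
  | zero => simpa using hx
  | succ k ih => exact ih (lsv_mem hα hx)

/-! ### The backward orbit of `1` along the left branch -/

/-- A sequence `x₀ = 1`, `x₁ = 1/2`, … with `x (n+1) ∈ (0, 1/2]` the left preimage of `x n`. -/
theorem exists_backward_orbit {α : ℝ} (hα : 0 < α) :
    ∃ x : ℕ → ℝ, x 0 = 1 ∧ ∀ n, x n ∈ Set.Ioc (0 : ℝ) 1 ∧
      x (n + 1) ≤ 1 / 2 ∧ lsvLeft α (x (n + 1)) = x n := by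
  have key : ∀ t : ℝ, ∃ s : ℝ, t ∈ Set.Ioc (0 : ℝ) 1 → s ∈ Set.Ioc (0 : ℝ) 1 ∧
      s ≤ 1 / 2 ∧ lsvLeft α s = t := by
    intro t
    by_cases ht : t ∈ Set.Ioc (0 : ℝ) 1
    · have hivt := intermediate_value_Icc (f := lsvLeft α) (a := 0) (b := 1 / 2) (by norm_num)
        (lsvLeft_continuous hα).continuousOn
      rw [lsvLeft_zero, lsvLeft_half] at hivt
      obtain ⟨s, hs, hst⟩ := hivt ⟨ht.1.le, ht.2⟩
      refine ⟨s, fun _ => ⟨⟨?_, by linarith [hs.2]⟩, hs.2, hst⟩⟩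
      rcases hs.1.eq_or_lt with h0 | h0
      · rw [← h0, lsvLeft_zero] at hst
        exact absurd ht.1 (by rw [← hst]; exact lt_irrefl _)
      · exact h0
    · exact ⟨0, fun h => absurd h ht⟩
  choose g hg using key
  have hmem : ∀ n, g^[n] 1 ∈ Set.Ioc (0 : ℝ) 1 := by
    intro n
    induction n with
    | zero => simp
    | succ k ih => rw [Function.iterate_succ_apply']; exact (hg _ ih).1
  refine ⟨fun n => g^[n] 1, rfl, fun n => ⟨hmem n, ?_⟩⟩
  simp only [Function.iterate_succ_apply']
  exact (hg _ (hmem n)).2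

theorem backward_orbit_tendsto_zero {α : ℝ} (hα : 0 < α) {x : ℕ → ℝ}
    (hx : ∀ n, x n ∈ Set.Ioc (0 : ℝ) 1 ∧ x (n + 1) ≤ 1 / 2 ∧ lsvLeft α (x (n + 1)) = x n) :
    Tendsto x atTop (𝓝 0) := by
  have hanti : Antitone x := by
    refine antitone_nat_of_succ_le fun n => ?_
    have h0 := (hx (n + 1)).1.1
    have : x (n + 1) ≤ lsvLeft α (x (n + 1)) := by
      have : 0 ≤ x (n + 1) * (2 ^ α * x (n + 1) ^ α) := by positivity
      unfold lsvLeft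
      linarith
    rwa [(hx n).2.2] at this
  have hlim := tendsto_atTop_ciInf hanti ⟨0, by rintro _ ⟨n, rfl⟩; exact (hx n).1.1.le⟩
  set L := ⨅ n, x n
  have hL0 : 0 ≤ L := ge_of_tendsto' hlim fun n => (hx n).1.1.le
  have h1 : Tendsto (fun n => lsvLeft α (x (n + 1))) atTop (𝓝 (lsvLeft α L)) :=
    ((lsvLeft_continuous hα).tendsto L).comp ((tendsto_add_atTop_iff_nat 1).mpr hlim)
  simp only [(hx _).2.2] at h1
  have hfix : L = lsvLeft α L := tendsto_nhds_unique hlim h1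
  rcases hL0.eq_or_lt with h0 | h0
  · rwa [h0]
  · exfalso
    have : 0 < L * (2 ^ α * L ^ α) := by positivity
    unfold lsvLeft at hfix
    linarith

/-- `(2 xₙ)^(-α)` grows by `α + o(1)` at each step, so by Cesàro it is `~ α n`. -/
theorem backward_orbit_asymptotic {α : ℝ} (hα : 0 < α) {x : ℕ → ℝ}
    (hx : ∀ n, x n ∈ Set.Ioc (0 : ℝ) 1 ∧ x (n + 1) ≤ 1 / 2 ∧ lsvLeft α (x (n + 1)) = x n) :
    Tendsto (fun n : ℕ => (n : ℝ) ^ (1 / α) * x n) atTop (𝓝 (α ^ (-(1 / α)) / 2)) := by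
  have hx0 := backward_orbit_tendsto_zero hα hx
  set w : ℕ → ℝ := fun n => (2 * x n) ^ α with hw
  have hxpos : ∀ n, 0 < x n := fun n => (hx n).1.1
  have hwpos : ∀ n, 0 < w n := fun n => Real.rpow_pos_of_pos (by linarith [hxpos n]) _
  have hw0 : Tendsto w atTop (𝓝 0) := by
    have h1 : Tendsto (fun n => 2 * x n) atTop (𝓝 0) := by simpa using hx0.const_mul 2
    have h2 := ((Real.continuous_rpow_const hα.le).tendsto 0).comp h1
    rwa [Real.zero_rpow hα.ne'] at h2
  have hrec : ∀ n, w n = w (n + 1) * (1 + w (n + 1)) ^ α := by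
    intro n
    have h1 : 2 * x n = (2 * x (n + 1)) * (1 + w (n + 1)) := by
      rw [← (hx n).2.2, hw, lsvLeft]
      simp only
      rw [Real.mul_rpow (by norm_num) (hxpos _).le]
      ring
    have h2 := hwpos (n + 1)
    have h3 := hxpos (n + 1)
    change (2 * x n) ^ α = _
    rw [h1, Real.mul_rpow (by positivity) (by positivity)]
  have hderiv : HasDerivAt (fun t : ℝ => -(1 + t) ^ (-α)) α 0 := by
    have h1 : HasDerivAt (fun t : ℝ => 1 + t) 1 0 := (hasDerivAt_id (0 : ℝ)).const_add 1
    have h2 := (h1.rpow_const (p := -α) (Or.inl (by norm_num))).neg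
    refine (h2.congr_deriv ?_)
    simp
  have hslope := hasDerivAt_iff_tendsto_slope.mp hderiv
  have hinc : Tendsto (fun n => (w (n + 1))⁻¹ - (w n)⁻¹) atTop (𝓝 α) := by
    have hw0' : Tendsto (fun n => w (n + 1)) atTop (𝓝[≠] 0) :=
      tendsto_nhdsWithin_iff.mpr ⟨(tendsto_add_atTop_iff_nat 1).mpr hw0,
        Eventually.of_forall fun n => (hwpos (n + 1)).ne'⟩
    refine (hslope.comp hw0').congr fun n => ?_
    have h2 := hwpos (n + 1)
    simp only [Function.comp, slope_def_field]
    rw [hrec n, Real.rpow_neg (by positivity)]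
    have h4 : 0 < (1 + w (n + 1)) ^ α := by positivity
    simp only [add_zero, Real.one_rpow, sub_zero]
    field_simp
    ring
  have hces := hinc.cesaro
  simp only [Finset.sum_range_sub (fun n => (w n)⁻¹)] at hces
  have hlin : Tendsto (fun n : ℕ => (n : ℝ)⁻¹ * (w n)⁻¹) atTop (𝓝 α) := by
    have h1 : Tendsto (fun n : ℕ => (n : ℝ)⁻¹ * (w 0)⁻¹) atTop (𝓝 0) := by
      simpa using (tendsto_inv_atTop_nhds_zero_nat (𝕜 := ℝ)).mul_const (w 0)⁻¹
    have h2 := hces.add h1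
    rw [add_zero] at h2
    refine h2.congr fun n => ?_
    ring
  have hpow : Tendsto (fun n : ℕ => ((n : ℝ)⁻¹ * (w n)⁻¹) ^ (-(1 / α)) / 2) atTop
      (𝓝 (α ^ (-(1 / α)) / 2)) :=
    ((Real.continuousAt_rpow_const α _ (Or.inl hα.ne')).tendsto.comp hlin).div_const 2
  refine hpow.congr fun n => ?_
  have h1 : ((n : ℝ)⁻¹ * (w n)⁻¹) ^ (-(1 / α)) = (n : ℝ) ^ (1 / α) * (2 * x n) := by
    have h2 := hwpos n
    rw [← mul_inv, Real.rpow_neg (by positivity), Real.inv_rpow (by positivity), inv_inv,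
      Real.mul_rpow (by positivity) h2.le]
    congr 1
    rw [hw]
    simp only
    rw [← Real.rpow_mul (by linarith [hxpos n]), mul_one_div_cancel hα.ne', Real.rpow_one]
  rw [h1]
  ring

/-! ### Return-time level sets -/

theorem stay_left_iff {α : ℝ} (hα : 0 < α) {x : ℕ → ℝ} (hx0 : x 0 = 1)
    (hx : ∀ n, x n ∈ Set.Ioc (0 : ℝ) 1 ∧ x (n + 1) ≤ 1 / 2 ∧ lsvLeft α (x (n + 1)) = x n)
    (n : ℕ) {t : ℝ} (ht : t ∈ Set.Ioc (0 : ℝ) 1) :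
    (∀ k < n, (lsv α)^[k] t ≤ 1 / 2) ↔ t ≤ x n := by
  induction n generalizing t with
  | zero => simpa [hx0] using ht.2
  | succ n ih =>
    have hmono := (lsvLeft_strictMonoOn hα).le_iff_le (a := t) (b := x (n + 1))
      (by simpa using ht.1.le) (by simpa using (hx (n + 1)).1.1.le)
    rw [(hx n).2.2] at hmono
    have hih := ih (lsv_mem hα ht)
    constructor
    · intro h
      have h0 : t ≤ 1 / 2 := h 0 (by omega)
      have h1 := hih.mp fun k hk => h (k + 1) (by omega)
      rw [lsv_of_le h0] at h1
      exact hmono.mp h1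
    · intro h k hk
      have h0 : t ≤ 1 / 2 := h.trans (hx n).2.1
      cases k with
      | zero => exact h0
      | succ k =>
        refine hih.mpr ?_ k (by omega)
        rw [lsv_of_le h0]
        exact hmono.mpr h

/-- On `Y = (1/2, 1]`, the return time exceeds `n` exactly when `T y = 2y - 1 ≤ xₙ`. -/
theorem retTime_level_set {α : ℝ} (hα : 0 < α) {x : ℕ → ℝ} (hx0 : x 0 = 1)
    (hx : ∀ n, x n ∈ Set.Ioc (0 : ℝ) 1 ∧ x (n + 1) ≤ 1 / 2 ∧ lsvLeft α (x (n + 1)) = x n)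
    (n : ℕ) :
    {y ∈ Set.Ioc (1/2 : ℝ) 1 | n < retTime (lsv α) (Set.Ioc (1/2 : ℝ) 1) y} =
      Set.Ioc (1 / 2) (1 / 2 + x n / 2) := by
  ext y
  simp only [Set.mem_ofPred_eq]
  have main : y ∈ Set.Ioc (1/2 : ℝ) 1 →
      (n < retTime (lsv α) (Set.Ioc (1/2 : ℝ) 1) y ↔ y ≤ 1 / 2 + x n / 2) := by
    intro hy
    have hTy : lsv α y = 2 * y - 1 := lsv_of_gt hy.1
    have hTmem : lsv α y ∈ Set.Ioc (0 : ℝ) 1 := lsv_mem hα ⟨by linarith [hy.1], hy.2⟩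
    set S := {k : ℕ | 1 ≤ k ∧ (lsv α)^[k] y ∈ Set.Ioc (1/2 : ℝ) 1} with hS
    have hSmem : ∀ k, k + 1 ∈ S ↔ ¬ (lsv α)^[k] (lsv α y) ≤ 1 / 2 := by
      intro k
      have := (lsv_iterate_mem hα hTmem k).2
      simp [hS, this]
    have hne : S.Nonempty := by
      obtain ⟨N, hN⟩ :=
        ((backward_orbit_tendsto_zero hα hx).eventually_lt_const hTmem.1).exists
      have h1 := (stay_left_iff hα hx0 hx N hTmem).not.mpr (not_le.mpr hN)
      push Not at h1
      obtain ⟨k, -, hk⟩ := h1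
      exact ⟨k + 1, (hSmem k).mpr (not_le.mpr hk)⟩
    have h2 : (n < sInf S) ↔ ∀ k < n, (lsv α)^[k] (lsv α y) ≤ 1 / 2 := by
      constructor
      · intro h k hk
        by_contra hcon
        have := Nat.sInf_le ((hSmem k).mpr hcon)
        omega
      · intro h
        by_contra hcon
        have hin := Nat.sInf_mem hne
        obtain ⟨k, hk⟩ : ∃ k, sInf S = k + 1 := ⟨sInf S - 1, by have := hin.1; omega⟩
        rw [hk] at hin
        exact (hSmem k).mp hin (h k (by omega))
    change n < sInf S ↔ _
    rw [h2, stay_left_iff hα hx0 hx n hTmem, hTy]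
    constructor <;> intro h <;> linarith
  constructor
  · rintro ⟨hy, h⟩
    exact ⟨hy.1, (main hy).mp h⟩
  · rintro ⟨h1, h2⟩
    have hy : y ∈ Set.Ioc (1/2 : ℝ) 1 := ⟨h1, by linarith [(hx n).1.2]⟩
    exact ⟨hy, (main hy).mpr h2⟩

/-! ### The density at `1/2` is nonnegative -/

/-- If `m` charges every nonempty open subset of `(a, b)` and `1/2 ∉ (a, b)`, the same holds for
the image of `(a, b)`, which is longer by a factor at least `1 + (2(b - a))^α`. -/
theorem charged_interval_step {α : ℝ} (hα : 0 < α) {m : Measure ℝ}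
    (hT : MeasurePreserving (lsv α) m m) {a b : ℝ} (ha : 0 ≤ a) (hab : a < b) (hb : b ≤ 1)
    (hhalf : b ≤ 1 / 2 ∨ 1 / 2 ≤ a)
    (hpos : ∀ U : Set ℝ, IsOpen U → U.Nonempty → U ⊆ Set.Ioo a b → 0 < m U) :
    ∃ a' b' : ℝ, 0 ≤ a' ∧ a' < b' ∧ b' ≤ 1 ∧ (b - a) * (1 + (2 * (b - a)) ^ α) ≤ b' - a' ∧
      ∀ U : Set ℝ, IsOpen U → U.Nonempty → U ⊆ Set.Ioo a' b' → 0 < m U := by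
  -- a continuous `f` on `ℝ` extending the branch of the map that is used on `(a, b)`
  obtain ⟨f, hf, heq, h0, h1, hexp⟩ : ∃ f : ℝ → ℝ, Continuous f ∧
      (∀ x ∈ Set.Ioo a b, lsv α x = f x) ∧ 0 ≤ f a ∧ f b ≤ 1 ∧
      (b - a) * (1 + (2 * (b - a)) ^ α) ≤ f b - f a := by
    rcases hhalf with h | h
    · refine ⟨lsvLeft α, lsvLeft_continuous hα, fun x hx => lsv_of_le (hx.2.le.trans h), ?_, ?_, ?_⟩
      · unfold lsvLeft; positivity
      · rw [← lsvLeft_half α]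
        exact (lsvLeft_strictMonoOn hα).monotoneOn (by simpa using ha.trans hab.le) (by simp) h
      · refine le_trans ?_ (lsvLeft_expand hα ha hab.le)
        have h3 : 0 < b - a := sub_pos.mpr hab
        rw [← Real.mul_rpow (by norm_num) (by linarith)]
        gcongr
        linarith
    · refine ⟨fun x => 2 * x - 1, by fun_prop, fun x hx => lsv_of_gt (h.trans_lt hx.1),
        by linarith, by linarith, ?_⟩
      have h3 : 0 < b - a := sub_pos.mpr hab
      have h4 : (2 * (b - a)) ^ α ≤ 1 := Real.rpow_le_one (by linarith) (by linarith) hα.le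
      nlinarith
  have hlen : f a < f b := by
    have h3 : 0 < b - a := sub_pos.mpr hab
    have : 0 < (b - a) * (1 + (2 * (b - a)) ^ α) := by positivity
    linarith
  refine ⟨f a, f b, h0, hlen, h1, hexp, fun U hU hUne hUsub => ?_⟩
  rw [← hT.measure_preimage hU.measurableSet.nullMeasurableSet]
  refine lt_of_lt_of_le (hpos (f ⁻¹' U ∩ Set.Ioo a b) ((hU.preimage hf).inter isOpen_Ioo) ?_
    Set.inter_subset_right) (measure_mono ?_)
  · obtain ⟨u, hu⟩ := hUne
    obtain ⟨t, ht, rfl⟩ := intermediate_value_Ioo hab.le hf.continuousOn (hUsub hu)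
    exact ⟨t, hu, ht⟩
  · rintro t ⟨ht, htI⟩
    rw [Set.mem_preimage, heq t htI]
    exact ht

/-- Iterating the expansion, some charged interval contains `1/2`; hence `m` charges every
neighbourhood of `1/2` as soon as it charges all open subsets of one interval. -/
theorem charged_near_half {α : ℝ} (hα : 0 < α) {m : Measure ℝ}
    (hT : MeasurePreserving (lsv α) m m) {a b : ℝ} (ha : 0 ≤ a) (hab : a < b) (hb : b ≤ 1)
    (hpos : ∀ U : Set ℝ, IsOpen U → U.Nonempty → U ⊆ Set.Ioo a b → 0 < m U)
    {V : Set ℝ} (hV : IsOpen V) (hVmem : 1 / 2 ∈ V) : 0 < m V := by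
  by_contra hcon
  have hl : 0 < b - a := sub_pos.mpr hab
  set q := (2 * (b - a)) ^ α with hq
  have hqpos : 0 < q := Real.rpow_pos_of_pos (by linarith) _
  have key : ∀ n : ℕ, ∃ a' b' : ℝ, 0 ≤ a' ∧ a' < b' ∧ b' ≤ 1 ∧ (b - a) * (1 + q) ^ n ≤ b' - a' ∧
      ∀ U : Set ℝ, IsOpen U → U.Nonempty → U ⊆ Set.Ioo a' b' → 0 < m U := by
    intro n
    induction n with
    | zero => exact ⟨a, b, ha, hab, hb, by simp, hpos⟩
    | succ n ih =>
      obtain ⟨c, d, hc, hcd, hd, hlen, hcd_pos⟩ := ih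
      have hhalf : d ≤ 1 / 2 ∨ 1 / 2 ≤ c := by
        by_contra hno
        push Not at hno
        refine hcon (lt_of_lt_of_le (hcd_pos (V ∩ Set.Ioo c d) (hV.inter isOpen_Ioo)
          ⟨1 / 2, hVmem, hno.2, hno.1⟩ Set.inter_subset_right) (measure_mono Set.inter_subset_left))
      obtain ⟨a', b', h1, h2, h3, h4, h5⟩ := charged_interval_step hα hT hc hcd hd hhalf hcd_pos
      refine ⟨a', b', h1, h2, h3, le_trans ?_ h4, h5⟩
      have hge : b - a ≤ d - c := by
        have : (1 : ℝ) ≤ (1 + q) ^ n := one_le_pow₀ (by linarith)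
        nlinarith
      have hq' : q ≤ (2 * (d - c)) ^ α := by
        rw [hq]; gcongr
      rw [pow_succ, ← mul_assoc]
      gcongr
  have hinf := (tendsto_pow_atTop_atTop_of_one_lt (show 1 < 1 + q by linarith)).const_mul_atTop hl
  obtain ⟨n, hn⟩ := (hinf.eventually_gt_atTop 1).exists
  obtain ⟨a', b', h1, -, h3, h4, -⟩ := key n
  linarith

/-- The invariant density cannot be negative at `1/2`: where it is negative, `m` has no mass. -/
theorem density_half_nonneg {α : ℝ} (hα : 0 < α) {m : Measure ℝ} [IsProbabilityMeasure m]
    (hsupp : m (Set.Icc (0:ℝ) 1) = 1) (hT : MeasurePreserving (lsv α) m m)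
    {h : ℝ → ℝ} (hh_cont : ContinuousOn h (Set.Ioc 0 1))
    (hm : m = MeasureTheory.volume.withDensity fun x => ENNReal.ofReal (h x)) :
    0 ≤ h (1 / 2) := by
  by_contra hneg
  push Not at hneg
  have hzero : ∀ V : Set ℝ, IsOpen V → (∀ x ∈ V, h x ≤ 0) → m V = 0 := by
    intro V hV hle
    rw [hm, withDensity_apply _ hV.measurableSet,
      setLIntegral_congr_fun hV.measurableSet (g := fun _ => 0)
        (fun x hx => ENNReal.ofReal_of_nonpos (hle x hx))]
    simp
  have hcAt : ∀ x ∈ Set.Ioo (0 : ℝ) 1, ContinuousAt h x := fun x hx =>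
    hh_cont.continuousAt (mem_of_superset (isOpen_Ioo.mem_nhds hx) Set.Ioo_subset_Ioc_self)
  obtain ⟨p, hp, hhp⟩ : ∃ p ∈ Set.Ioo (0 : ℝ) 1, 0 < h p := by
    by_contra hno
    push Not at hno
    have h1 := hzero _ isOpen_Ioo hno
    have hac : m ≪ volume := hm ▸ withDensity_absolutelyContinuous _ _
    have h2 : m (Set.Icc (0 : ℝ) 1) = m (Set.Ioo (0 : ℝ) 1) :=
      measure_congr (hac.ae_eq Ioo_ae_eq_Icc.symm)
    rw [hsupp, h1] at h2
    exact one_ne_zero h2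
  have hev : ∀ᶠ x in 𝓝 p, h p / 2 < h x ∧ x ∈ Set.Ioo (0 : ℝ) 1 :=
    ((hcAt p hp).eventually (lt_mem_nhds (by linarith))).and (isOpen_Ioo.mem_nhds hp)
  obtain ⟨a, b, ⟨hap, hpb⟩, hab⟩ := mem_nhds_iff_exists_Ioo_subset.mp hev
  have hsub : Set.Ioo a b ⊆ Set.Ioo 0 1 := fun x hx => (hab hx).2
  have hbd := (Set.Ioo_subset_Ioo_iff (hap.trans hpb)).mp hsub
  have hev2 : ∀ᶠ x in 𝓝 (1 / 2 : ℝ), h x < 0 :=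
    (hcAt (1 / 2) (by norm_num)).eventually (gt_mem_nhds hneg)
  obtain ⟨V, hVsub, hVo, hVmem⟩ := mem_nhds_iff.mp hev2
  refine (charged_near_half hα hT hbd.1 (hap.trans hpb) hbd.2 ?_ hVo hVmem).ne'
    (hzero V hVo fun x hx => (hVsub hx).le)
  intro U hU hUne hUsub
  have hvol : 0 < ENNReal.ofReal (h p / 2) * volume U :=
    ENNReal.mul_pos (by simpa using hhp) (hU.measure_pos volume hUne).ne'
  refine hvol.trans_le ?_
  rw [hm, withDensity_apply _ hU.measurableSet, ← setLIntegral_const]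
  exact setLIntegral_mono' hU.measurableSet fun x hx =>
    ENNReal.ofReal_le_ofReal (hab (hUsub hx)).1.le

/-- One-sided differentiation of `m` at `1/2`. -/
theorem measure_Ioc_half_div {m : Measure ℝ} {h : ℝ → ℝ}
    (hh_cont : ContinuousOn h (Set.Ioc 0 1))
    (hm : m = MeasureTheory.volume.withDensity fun x => ENNReal.ofReal (h x))
    (hnn : 0 ≤ h (1 / 2)) :
    Tendsto (fun t : ℝ => (m (Set.Ioc (1 / 2) (1 / 2 + t))).toReal / t) (𝓝[>] 0)
      (𝓝 (h (1 / 2))) := by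
  have hcAt : ContinuousAt h (1 / 2) :=
    hh_cont.continuousAt (mem_of_superset (isOpen_Ioo.mem_nhds (by norm_num))
      Set.Ioo_subset_Ioc_self)
  rw [Metric.tendsto_nhds]
  intro ε hε
  obtain ⟨δ, hδ, hclose⟩ := Metric.continuousAt_iff.mp hcAt (ε / 2) (by positivity)
  filter_upwards [Ioo_mem_nhdsGT hδ] with t ht
  have hbd : ∀ x ∈ Set.Ioc (1 / 2 : ℝ) (1 / 2 + t), |h x - h (1 / 2)| < ε / 2 := by
    intro x hx
    have := hclose (x := x) (by
      rw [Real.dist_eq, abs_of_pos (by linarith [hx.1])]; linarith [hx.2, ht.2])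
    rwa [Real.dist_eq] at this
  have hvol : volume (Set.Ioc (1 / 2 : ℝ) (1 / 2 + t)) = ENNReal.ofReal t := by
    rw [Real.volume_Ioc]; congr 1; ring
  have hup : m (Set.Ioc (1 / 2) (1 / 2 + t)) ≤ ENNReal.ofReal ((h (1 / 2) + ε / 2) * t) := by
    rw [ENNReal.ofReal_mul (by linarith), ← hvol, ← setLIntegral_const, hm,
      withDensity_apply _ measurableSet_Ioc]
    exact setLIntegral_mono' measurableSet_Ioc fun x hx =>
      ENNReal.ofReal_le_ofReal (by linarith [(abs_lt.mp (hbd x hx)).2])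
  have hlow : ENNReal.ofReal ((h (1 / 2) - ε / 2) * t) ≤ m (Set.Ioc (1 / 2) (1 / 2 + t)) := by
    rw [ENNReal.ofReal_mul' ht.1.le, ← hvol, ← setLIntegral_const, hm,
      withDensity_apply _ measurableSet_Ioc]
    exact setLIntegral_mono' measurableSet_Ioc fun x hx =>
      ENNReal.ofReal_le_ofReal (by linarith [(abs_lt.mp (hbd x hx)).1])
  have hfin : m (Set.Ioc (1 / 2) (1 / 2 + t)) ≠ ⊤ := ne_top_of_le_ne_top ENNReal.ofReal_ne_top hup
  have hup' := ENNReal.toReal_le_of_le_ofReal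
    (mul_nonneg (by linarith) ht.1.le) hup
  have hlow' := (ENNReal.ofReal_le_iff_le_toReal hfin).mp hlow
  rw [Real.dist_eq, abs_lt]
  have h1 := (div_le_iff₀ ht.1).mpr hup'
  have h2 := (le_div_iff₀ ht.1).mpr hlow'
  constructor <;> linarith

/-- Tail asymptotics of the first return time to `Y = (1/2, 1]` for the LSV map:
`n^{1/α} m{y ∈ Y : φ(y) > n} → h(1/2) α^{-1/α} / 4`. -/
theorem lsv_return_time_tail (α : ℝ) (hα : 0 < α ∧ α < 1)
    (m : Measure ℝ) [IsProbabilityMeasure m]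
    (hsupp : m (Set.Icc (0:ℝ) 1) = 1)
    (hT : MeasurePreserving (lsv α) m m)
    (h : ℝ → ℝ) (hh_cont : ContinuousOn h (Set.Ioc 0 1))
    (hm : m = MeasureTheory.volume.withDensity fun x => ENNReal.ofReal (h x)) :
    Tendsto
      (fun n : ℕ => (n : ℝ) ^ (1/α) *
        (m {y ∈ Set.Ioc (1/2 : ℝ) 1 | n < retTime (lsv α) (Set.Ioc (1/2 : ℝ) 1) y}).toReal)
      atTop (𝓝 (h (1/2) * α ^ (-(1/α)) / 4)) := by
  obtain ⟨x, hx0, hx⟩ := exists_backward_orbit hα.1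
  have hnn := density_half_nonneg hα.1 hsupp hT hh_cont hm
  have hlim : Tendsto (fun n => x n / 2) atTop (𝓝[>] 0) := by
    refine tendsto_nhdsWithin_iff.mpr ⟨?_, Eventually.of_forall fun n => half_pos (hx n).1.1⟩
    simpa using (backward_orbit_tendsto_zero hα.1 hx).div_const 2
  have h1 := (measure_Ioc_half_div hh_cont hm hnn).comp hlim
  have h2 := h1.mul ((backward_orbit_asymptotic hα.1 hx).div_const 2)
  have hval : h (1 / 2) * (α ^ (-(1 / α)) / 2 / 2) = h (1/2) * α ^ (-(1/α)) / 4 := by ring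
  rw [hval] at h2
  refine h2.congr fun n => ?_
  rw [retTime_level_set hα.1 hx0 hx n]
  have := (hx n).1.1
  simp only [Function.comp]
  field_simp
end

section
/- Kakutani tower projection is measure-preserving (exhaustion identity): let (X, 𝓑, m) be a probability space, T : X → X a measure-preserving ergodic map, and Y ∈ 𝓑 with m(Y) > 0. For a measurable set K ⊆ X, define inductively A₀ = K ∖ Y, B₀ = K ∩ Y, and for k ≥ 1, A_k = T⁻¹(A_{k−1}) ∖ Y and B_k = T⁻¹(A_{k−1}) ∩ Y. Then m(K) = Σ_{k=0}^{∞} m(B_k). -/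
/-!
Splitting `T⁻¹(A k)` along `Y` and using invariance of `m` gives
`m K = ∑_{k ≤ n} m (B k) + m (A n)` for every `n`, so it suffices that `m (A n) → 0`.
Every point of `A n` has an orbit avoiding `Y` at times `0, …, n`. These avoidance sets
decrease to the set of points whose orbit never meets `Y`, which is contained in its own
preimage, hence almost invariant, hence of measure `0` or `1` by ergodicity; being disjoint
from `Y`, which has positive measure, it is null (`measure_never_visit_eq_zero`).
-/

open MeasureTheory Filter Topology

/-- Almost every orbit visits a set of positive measure. -/
lemma measure_never_visit_eq_zero {X : Type*} [MeasurableSpace X]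
    (m : Measure X) [IsProbabilityMeasure m] (T : X → X)
    (hT : MeasurePreserving T m m)
    (hErg : ∀ A : Set X, MeasurableSet A → A =ᵐ[m] T ⁻¹' A → m A = 0 ∨ m A = 1)
    (Y : Set X) (hYmeas : MeasurableSet Y) (hYpos : 0 < m Y) :
    m (⋂ i, (T^[i] ⁻¹' Y)ᶜ) = 0 := by
  set Z : Set X := ⋂ i, (T^[i] ⁻¹' Y)ᶜ with hZ
  have hZm : MeasurableSet Z :=
    MeasurableSet.iInter fun i => ((hT.measurable.iterate i) hYmeas).compl
  have hsub : Z ⊆ T ⁻¹' Z := by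
    intro x hx
    simp only [hZ, Set.mem_preimage, Set.mem_iInter, Set.mem_compl_iff] at hx ⊢
    intro i
    simpa [Function.iterate_succ_apply] using hx (i + 1)
  have hae : Z =ᵐ[m] T ⁻¹' Z :=
    ae_eq_of_subset_of_measure_ge hsub (hT.measure_preimage hZm.nullMeasurableSet).le
      hZm.nullMeasurableSet (measure_ne_top _ _)
  refine (hErg Z hZm hae).resolve_right fun h1 => ?_
  have hYZ : Y ⊆ Zᶜ := fun x hxY hxZ => (Set.mem_iInter.1 hxZ 0) hxY
  have h0 : m Zᶜ = 0 := (prob_compl_eq_zero_iff hZm).2 h1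
  exact hYpos.ne' (measure_mono_null hYZ h0)

/-- Kakutani tower projection is measure-preserving (exhaustion identity):
if `T` is a measure-preserving ergodic map of a probability space, `Y` has positive
measure, and the sets `A k`, `B k` are defined inductively by
`A 0 = K \ Y`, `B 0 = K ∩ Y`, `A (k+1) = T⁻¹(A k) \ Y`, `B (k+1) = T⁻¹(A k) ∩ Y`,
then `m K = Σ_k m (B k)`. -/
theorem kakutani_exhaustion {X : Type*} [MeasurableSpace X]
    (m : Measure X) [IsProbabilityMeasure m] (T : X → X)
    (hT : MeasurePreserving T m m)
    (hErg : ∀ A : Set X, MeasurableSet A → A =ᵐ[m] T ⁻¹' A → m A = 0 ∨ m A = 1)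
    (Y : Set X) (hYmeas : MeasurableSet Y) (hYpos : 0 < m Y)
    (K : Set X) (hKmeas : MeasurableSet K)
    (A B : ℕ → Set X)
    (hA0 : A 0 = K \ Y) (hB0 : B 0 = K ∩ Y)
    (hA : ∀ k, A (k + 1) = T ⁻¹' (A k) \ Y)
    (hB : ∀ k, B (k + 1) = T ⁻¹' (A k) ∩ Y) :
    m K = ∑' k, m (B k) := by
  have hAm : ∀ n, MeasurableSet (A n) := by
    intro n
    induction n with
    | zero => rw [hA0]; exact hKmeas.diff hYmeas
    | succ n ih => rw [hA]; exact (hT.measurable ih).diff hYmeas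
  have hsum : ∀ n, m K = ∑ k ∈ Finset.range (n + 1), m (B k) + m (A n) := by
    intro n
    induction n with
    | zero => simp [hA0, hB0, measure_inter_add_diff K hYmeas]
    | succ n ih =>
      rw [Finset.sum_range_succ, hB, hA, add_assoc, measure_inter_add_diff _ hYmeas,
        hT.measure_preimage (hAm n).nullMeasurableSet]
      exact ih
  have hsub : ∀ n, A n ⊆ ⋂ i, ⋂ (_ : i ≤ n), (T^[i] ⁻¹' Y)ᶜ := by
    intro n
    induction n with
    | zero =>
      intro x hx
      rw [hA0] at hx
      simpa using hx.2
    | succ n ih =>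
      intro x hx
      rw [hA] at hx
      have hTx := ih hx.1
      simp only [Set.mem_iInter] at hTx ⊢
      intro i hi
      cases i with
      | zero => exact hx.2
      | succ i => exact hTx i (by omega)
  have hlim : Tendsto (fun n => m (A n)) atTop (𝓝 0) := by
    have h := tendsto_measure_iInter_le (μ := m) (f := fun i : ℕ => (T^[i] ⁻¹' Y)ᶜ)
      (fun i => ((hT.measurable.iterate i) hYmeas).compl.nullMeasurableSet)
      ⟨0, measure_ne_top _ _⟩
    rw [measure_never_visit_eq_zero m T hT hErg Y hYmeas hYpos] at h
    exact tendsto_of_tendsto_of_tendsto_of_le_of_le tendsto_const_nhds h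
      (fun _ => zero_le) (fun n => measure_mono (hsub n))
  have hB' : Tendsto (fun n => ∑ k ∈ Finset.range (n + 1), m (B k)) atTop
      (𝓝 (∑' k, m (B k))) :=
    (tendsto_add_atTop_iff_nat 1).2 ENNReal.summable.hasSum.tendsto_sum_nat
  have hfin := hB'.add hlim
  rw [add_zero] at hfin
  exact tendsto_nhds_unique (tendsto_const_nhds.congr hsum) hfin
end
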